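/- Let n ≥ 2, k ∈ {2,…,n}, and let Ω_ℓ ⊆ ℝ^{n+1} be a compactly supported, asymptotically (k−1)-mean convex sequence of bounded open sets with C² boundary having finite total curvature, converging in volume and perimeter to a set Ω with L^{n+1}(Ω) > 0, and suppose there is M > 0 with H^n({x ∈ ∂Ω_ℓ : H_{Ω_ℓ,1}(x) ≥ M}) → 0. Then the varifold V_Ω associated with ∂*Ω has bounded mean curvature; more precisely, |δV_Ω(g)| ≤ M ∫_{∂*Ω} |g| dH^n for every g ∈ C_c^∞(ℝ^{n+1}, ℝ^{n+1}), so |h(V_Ω,x)| ≤ M for H^n-a.e. x ∈ ∂*Ω. -/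

import Mathlib

open MeasureTheory Metric Set Filter
open scoped ENNReal RealInnerProductSpace Topology

noncomputable section

/-- Ambient Euclidean space `ℝ^{n+1}`. -/
abbrev Euc (n : ℕ) : Type := EuclideanSpace ℝ (Fin (n + 1))

/-- A bounded open set in `ℝ^{n+1}` with `C²` boundary, bundled with its exterior unit
normal `nu`, an orthonormal frame `tau` of principal directions and the principal
curvatures `kappa` (in increasing order), linked to the local `C²` defining functions
through the Weingarten map (the derivative of the normalized gradient). -/
structure C2Domain (n : ℕ) where
  carrier : Set (Euc n)
  isOpen : IsOpen carrier
  bounded : Bornology.IsBounded carrier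
  nu : Euc n → Euc n
  tau : Fin n → Euc n → Euc n
  kappa : Fin n → Euc n → ℝ
  boundaryC2 : ∀ x ∈ frontier carrier, ∃ (U : Set (Euc n)) (f : Euc n → ℝ),
      IsOpen U ∧ x ∈ U ∧ ContDiff ℝ 2 f ∧ (∀ y ∈ U, gradient f y ≠ 0) ∧
      carrier ∩ U = {y ∈ U | f y < 0} ∧ frontier carrier ∩ U = {y ∈ U | f y = 0}
  frame_orthonormal : ∀ x ∈ frontier carrier,
      Orthonormal ℝ (Fin.snoc (fun j : Fin n => tau j x) (nu x) : Fin (n + 1) → Euc n)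
  frame_oriented : ∀ x ∈ frontier carrier,
      0 < (Matrix.of fun i j : Fin (n + 1) =>
        (Fin.snoc (fun l : Fin n => tau l x) (nu x) : Fin (n + 1) → Euc n) i j).det
  kappa_mono : ∀ x ∈ frontier carrier, ∀ i j : Fin n, i ≤ j → kappa i x ≤ kappa j x
  weingarten : ∀ x ∈ frontier carrier, ∀ (U : Set (Euc n)) (f : Euc n → ℝ),
      IsOpen U → x ∈ U → ContDiff ℝ 2 f → (∀ y ∈ U, gradient f y ≠ 0) →
      carrier ∩ U = {y ∈ U | f y < 0} → frontier carrier ∩ U = {y ∈ U | f y = 0} →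
      gradient f x = ‖gradient f x‖ • nu x ∧
      ∀ i : Fin n, fderiv ℝ (fun y => ‖gradient f y‖⁻¹ • gradient f y) x (tau i x)
        = kappa i x • tau i x

/-- The `k`-th mean curvature function `H_{Ω,k}`: the `k`-th elementary symmetric
polynomial of the principal curvatures (sum over increasing multi-indices, i.e. over
`k`-element subsets of `{1,…,n}`). -/
def C2Domain.H {n : ℕ} (Ω : C2Domain n) (k : ℕ) (x : Euc n) : ℝ :=
  ∑ S ∈ (Finset.univ : Finset (Fin n)).powersetCard k, ∏ i ∈ S, Ω.kappa i x

/-- The norm `A_Ω` of the second fundamental form. -/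
def C2Domain.A {n : ℕ} (Ω : C2Domain n) (x : Euc n) : ℝ :=
  Real.sqrt (∑ i : Fin n, (Ω.kappa i x) ^ 2)

/-- The negative part `f⁻ = -min{f,0}` of a real number. -/
def negp (t : ℝ) : ℝ := -(min t 0)

/-- A compactly supported sequence of domains: all contained in a fixed ball. -/
def CompactlySupportedSeq {n : ℕ} (Ω : ℕ → C2Domain n) : Prop :=
  ∃ R : ℝ, ∀ ℓ : ℕ, (Ω ℓ).carrier ⊆ ball (0 : Euc n) R

/-- A sequence of finite total curvature: `sup_ℓ ∫_{∂Ω_ℓ} A_{Ω_ℓ}^n dH^n < ∞`. -/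
def FiniteTotalCurvature {n : ℕ} (Ω : ℕ → C2Domain n) : Prop :=
  ∃ c : ℝ≥0∞, c < ⊤ ∧ ∀ ℓ : ℕ,
    (∫⁻ x in frontier (Ω ℓ).carrier, ENNReal.ofReal ((Ω ℓ).A x ^ n) ∂μH[(n : ℝ)]) ≤ c

/-- An asymptotically `k`-mean convex sequence:
`∫_{∂Ω_ℓ} (H_{Ω_ℓ,i})⁻ dH^n → 0` for `i = 1, …, k`. -/
def AsympMeanConvex {n : ℕ} (Ω : ℕ → C2Domain n) (k : ℕ) : Prop :=
  ∀ i ∈ Finset.Icc 1 k,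
    Tendsto (fun ℓ : ℕ =>
        ∫⁻ x in frontier (Ω ℓ).carrier, ENNReal.ofReal (negp ((Ω ℓ).H i x)) ∂μH[(n : ℝ)])
      atTop (nhds 0)

/-- The De Giorgi blow-up condition: the rescalings of `A` at `x` converge in measure to
the half space with exterior normal `v`. -/
def HalfSpaceBlowup {n : ℕ} (A : Set (Euc n)) (x v : Euc n) : Prop :=
  Tendsto (fun r : ℝ =>
      volume {y ∈ ball (0 : Euc n) 1 | ¬ ((x + r • y ∈ A) ↔ ⟪y, v⟫ < 0)})
    (nhdsWithin 0 (Ioi 0)) (nhds 0)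

/-- The reduced boundary `∂*A` of a set (the points admitting a measure-theoretic
exterior unit normal in the sense of De Giorgi). -/
def redBdry {n : ℕ} (A : Set (Euc n)) : Set (Euc n) :=
  {x | ∃ v : Euc n, ‖v‖ = 1 ∧ HalfSpaceBlowup A x v}

open scoped Classical in
/-- The measure-theoretic exterior unit normal `ν_A` on the reduced boundary. -/
def nuStar {n : ℕ} (A : Set (Euc n)) (x : Euc n) : Euc n :=
  if h : ∃ v : Euc n, ‖v‖ = 1 ∧ HalfSpaceBlowup A x v then h.choose else 0

/-- Convergence in volume: `1_{Ω_ℓ} → 1_A` in `L¹`. -/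
def ConvInVolume {n : ℕ} (Ω : ℕ → C2Domain n) (A : Set (Euc n)) : Prop :=
  Tendsto (fun ℓ : ℕ => volume (symmDiff (Ω ℓ).carrier A)) atTop (nhds 0)

/-- Convergence in perimeter: `H^n(∂Ω_ℓ) → H^n(∂*A)`. -/
def ConvInPerimeter {n : ℕ} (Ω : ℕ → C2Domain n) (A : Set (Euc n)) : Prop :=
  Tendsto (fun ℓ : ℕ => μH[(n : ℝ)] (frontier (Ω ℓ).carrier)) atTop
    (nhds (μH[(n : ℝ)] (redBdry A)))

/-- The divergence of a vector field on `ℝ^{n+1}`. -/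
def divg {n : ℕ} (X : Euc n → Euc n) (x : Euc n) : ℝ :=
  ∑ i : Fin (n + 1),
    ⟪fderiv ℝ X x (EuclideanSpace.single i (1 : ℝ)), EuclideanSpace.single i (1 : ℝ)⟫

/-- A set of finite perimeter in `ℝ^{n+1}` (via the Federer–De Giorgi characterization:
the measure-theoretic reduced boundary has finite `H^n`-measure and the Gauss–Green
formula holds on it). -/
def HasFinitePerimeter {n : ℕ} (A : Set (Euc n)) : Prop :=
  MeasurableSet A ∧ μH[(n : ℝ)] (redBdry A) < ⊤ ∧
  ∀ X : Euc n → Euc n, ContDiff ℝ (⊤ : ℕ∞) X → HasCompactSupport X →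
    (∫ x in A, divg X x) = ∫ x in redBdry A, ⟪X x, nuStar A x⟫ ∂μH[(n : ℝ)]

/-- The first variation `δV_A` of the integral `n`-varifold `V_A` associated with the
reduced boundary of `A`:
`δV_A(X) = ∫_{∂*A} (div_{ℝ^{n+1}} X − ⟨DX(ν_A), ν_A⟩) dH^n`. -/
def firstVar {n : ℕ} (A : Set (Euc n)) (X : Euc n → Euc n) : ℝ :=
  ∫ x in redBdry A,
    (divg X x - ⟪fderiv ℝ X x (nuStar A x), nuStar A x⟫) ∂μH[(n : ℝ)]

/-- `h` is a (bounded) generalized mean curvature vector for the varifold `V_A`: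
`h ∈ L^∞` and `δV_A(X) = ∫_{∂*A} h • X dH^n` for every smooth compactly supported
vector field `X`; i.e. `V_A` is a varifold of bounded mean curvature with
`h = h(V_A, ·)`. -/
def IsBoundedMeanCurvature {n : ℕ} (A : Set (Euc n)) (h : Euc n → Euc n) : Prop :=
  (∃ M : ℝ, ∀ᵐ x ∂(μH[(n : ℝ)].restrict (redBdry A)), ‖h x‖ ≤ M) ∧
  ∀ X : Euc n → Euc n, ContDiff ℝ (⊤ : ℕ∞) X → HasCompactSupport X →
    firstVar A X = ∫ x in redBdry A, ⟪h x, X x⟫ ∂μH[(n : ℝ)]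

/-! The divergence theorem on each `Ω ℓ` and convergence in volume show that a weak limit `τ` of the
boundary measures `μH[n]|∂Ω ℓ` satisfies a Gauss–Green formula for the limit set, with a density of
norm at most one. Blowing up at a point of the reduced boundary bounds the `n`-density of `τ` from
below, so `μH[n]|∂*Ω ≤ τ`; the comparison of `μH[n]` with Lebesgue measure that this needs is the
isodiametric inequality, a consequence of Prékopa–Leindler. Convergence of the perimeters forces
equality, and the density is then the unit normal `ν*`. Thus the boundaries converge strictly,
Reshetnyak's continuity theorem applies to the integrand `⟪DX ν, ν⟫`, and the first variations
`∫ H ⟪X, ν⟫` converge to `δV(X)`. By finite total curvature the integrals of `|H|` over `{M ≤ H}`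
vanish in the limit, by mean convexity so do those of `H⁻`, and what remains of `∫ |H| |X|` is at
most `M ∫ |X|`. Riesz representation in `L²` yields the mean curvature vector. -/

section PrekopaLeindler

lemma volume_add_volume_le_of_isCompact_of_midpoint_mem {K L C : Set ℝ} (hK : IsCompact K)
    (hL : IsCompact L) (hK₀ : K.Nonempty) (hL₀ : L.Nonempty)
    (hC : ∀ x ∈ K, ∀ y ∈ L, midpoint ℝ x y ∈ C) :
    volume K + volume L ≤ 2 * volume C := by
  obtain ⟨a, haK, ha⟩ := hK.exists_isGreatest hK₀
  obtain ⟨b, hbL, hb⟩ := hL.exists_isLeast hL₀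
  -- The translates `b + K` and `a + L` meet only in `a + b` and lie in `2 C`.
  set K' : Set ℝ := (b + ·) '' K
  set L' : Set ℝ := (a + ·) '' L
  have hK'v : volume K' = volume K := by simp [K', image_add_left, measure_preimage_add]
  have hL'v : volume L' = volume L := by simp [L', image_add_left, measure_preimage_add]
  have hL'm : MeasurableSet L' := (hL.image (by fun_prop)).measurableSet
  have hnull : volume (K' ∩ L') = 0 := by
    refine measure_mono_null (t := {a + b}) ?_ (by simp)
    rintro z ⟨⟨x, hx, rfl⟩, ⟨y, hy, hxy⟩⟩
    have hxa := ha hx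
    have hby := hb hy
    simp only at hxy
    simp only [mem_singleton_iff]
    linarith
  have hsub : K' ∪ L' ⊆ (fun x : ℝ => (1 / 2 : ℝ) * x) ⁻¹' C := by
    have hmid (x y : ℝ) : midpoint ℝ x y = 1 / 2 * (x + y) := by
      rw [midpoint_eq_smul_add, smul_eq_mul, invOf_eq_inv, one_div]
    rintro z (⟨x, hx, rfl⟩ | ⟨y, hy, rfl⟩)
    · simpa [hmid, add_comm b] using hC x hx b hbL
    · simpa [hmid] using hC a haK y hy
  calc volume K + volume L = volume (K' ∪ L') := by
        rw [← add_zero (volume (K' ∪ L')), ← hnull, measure_union_add_inter K' hL'm, hK'v, hL'v]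
    _ ≤ volume ((fun x : ℝ => (1 / 2 : ℝ) * x) ⁻¹' C) := measure_mono hsub
    _ = 2 * volume C := by
        rw [Real.volume_preimage_mul_left (by norm_num)]
        norm_num

lemma volume_add_volume_le_of_midpoint_mem {A B C : Set ℝ} (hA : MeasurableSet A)
    (hB : MeasurableSet B) (hA₀ : A.Nonempty) (hB₀ : B.Nonempty)
    (hC : ∀ x ∈ A, ∀ y ∈ B, midpoint ℝ x y ∈ C) :
    volume A + volume B ≤ 2 * volume C := by
  obtain ⟨a, ha⟩ := hA₀
  obtain ⟨b, hb⟩ := hB₀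
  rw [hA.measure_eq_iSup_isCompact, hB.measure_eq_iSup_isCompact]
  simp only [iSup_and']
  refine ENNReal.biSup_add_biSup_le' ⟨∅, empty_subset _, isCompact_empty⟩
    ⟨∅, empty_subset _, isCompact_empty⟩ fun K ⟨hKA, hK⟩ L ⟨hLB, hL⟩ => ?_
  refine (add_le_add (measure_mono (subset_insert a K)) (measure_mono (subset_insert b L))).trans ?_
  exact volume_add_volume_le_of_isCompact_of_midpoint_mem (hK.insert a) (hL.insert b)
    (insert_nonempty _ _) (insert_nonempty _ _)
    fun x hx y hy => hC x (insert_subset ha hKA hx) y (insert_subset hb hLB hy)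

lemma lintegral_eq_setLIntegral_meas_lt_of_le_one {α : Type*} [MeasurableSpace α] (μ : Measure α)
    {f : α → ℝ≥0∞} (hf : Measurable f) (hf₁ : ∀ x, f x ≤ 1) :
    ∫⁻ x, f x ∂μ = ∫⁻ t in Ioo (0 : ℝ) 1, μ {x | ENNReal.ofReal t < f x} := by
  have hfin : ∀ x, f x ≠ ⊤ := fun x => ((hf₁ x).trans_lt ENNReal.one_lt_top).ne
  calc ∫⁻ x, f x ∂μ = ∫⁻ x, ENNReal.ofReal (f x).toReal ∂μ := by
        simp_rw [fun x => ENNReal.ofReal_toReal (hfin x)]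
    _ = ∫⁻ t in Ioi (0 : ℝ), μ {x | t < (f x).toReal} :=
        lintegral_eq_lintegral_meas_lt _ (Eventually.of_forall fun x => ENNReal.toReal_nonneg)
          hf.ennreal_toReal.aemeasurable
    _ = ∫⁻ t in Ioi (0 : ℝ), (Ioo (0 : ℝ) 1).indicator
          (fun t => μ {x | ENNReal.ofReal t < f x}) t := by
        refine setLIntegral_congr_fun measurableSet_Ioi fun t (ht : 0 < t) => ?_
        have hlevel : {x | t < (f x).toReal} = {x | ENNReal.ofReal t < f x} := by
          ext x
          exact (ENNReal.ofReal_lt_iff_lt_toReal ht.le (hfin x)).symm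
        by_cases ht₁ : t < 1
        · rw [indicator_of_mem (mem_Ioo.2 ⟨ht, ht₁⟩), hlevel]
        · rw [indicator_of_notMem fun h => ht₁ h.2, hlevel]
          convert measure_empty (μ := μ)
          ext x
          simpa using (hf₁ x).trans (ENNReal.one_le_ofReal.2 (not_lt.1 ht₁))
    _ = ∫⁻ t in Ioo (0 : ℝ) 1, μ {x | ENNReal.ofReal t < f x} := by
        rw [lintegral_indicator measurableSet_Ioo, Measure.restrict_restrict measurableSet_Ioo,
          inter_eq_left.2 Ioo_subset_Ioi_self]

lemma ennreal_mul_le_sq_of_add_le_two_mul {F G K : ℝ≥0∞} (h : F + G ≤ 2 * K) :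
    F * G ≤ K ^ 2 := by
  rcases eq_or_ne K ⊤ with rfl | hK
  · simp
  have hsum : F + G ≠ ⊤ := (h.trans_lt (ENNReal.mul_lt_top (by norm_num) hK.lt_top)).ne
  lift F to NNReal using (ENNReal.add_ne_top.1 hsum).1
  lift G to NNReal using (ENNReal.add_ne_top.1 hsum).2
  lift K to NNReal using hK
  norm_cast at h ⊢
  have h' : (F : ℝ) + G ≤ 2 * K := by exact_mod_cast h
  have : (F : ℝ) * G ≤ K ^ 2 := by
    nlinarith [four_mul_le_sq_add (F : ℝ) G, pow_le_pow_left₀ (add_nonneg F.2 G.2) h' 2]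
  exact_mod_cast this

/-- The Prékopa–Leindler inequality for the measure `μ`, with both weights equal to `1 / 2`. -/
def PrekopaLeindler {E : Type*} [AddCommGroup E] [Module ℝ E] [MeasurableSpace E]
    (μ : Measure E) : Prop :=
  ∀ ⦃f g h : E → ℝ≥0∞⦄, Measurable f → Measurable g → Measurable h →
    (∀ x y, f x * g y ≤ h (midpoint ℝ x y) ^ 2) →
    (∫⁻ x, f x ∂μ) * (∫⁻ x, g x ∂μ) ≤ (∫⁻ x, h x ∂μ) ^ 2

lemma lintegral_mul_lintegral_le_of_iSup_eq_one {f g h : ℝ → ℝ≥0∞} (hf : Measurable f)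
    (hg : Measurable g) (hh : Measurable h) (hf₁ : ⨆ x, f x = 1) (hg₁ : ⨆ x, g x = 1)
    (H : ∀ x y, f x * g y ≤ h (midpoint ℝ x y) ^ 2) :
    (∫⁻ x, f x) * (∫⁻ x, g x) ≤ (∫⁻ x, h x) ^ 2 := by
  have hf_le : ∀ x, f x ≤ 1 := fun x => hf₁ ▸ le_iSup f x
  have hg_le : ∀ x, g x ≤ 1 := fun x => hg₁ ▸ le_iSup g x
  have hlevel : ∀ t ∈ Ioo (0 : ℝ) 1,
      volume {x | ENNReal.ofReal t < f x} + volume {x | ENNReal.ofReal t < g x} ≤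
        2 * volume {x | ENNReal.ofReal t < min (h x) 1} := by
    intro t ht
    have ht₁ : ENNReal.ofReal t < 1 := by simpa using ht.2
    refine volume_add_volume_le_of_midpoint_mem (measurableSet_lt measurable_const hf)
      (measurableSet_lt measurable_const hg) ?_ ?_ fun x hx y hy => lt_min ?_ ht₁
    · exact lt_iSup_iff.1 (ht₁.trans_eq hf₁.symm)
    · exact lt_iSup_iff.1 (ht₁.trans_eq hg₁.symm)
    · by_contra! hle
      refine (ENNReal.mul_lt_mul hx hy).not_ge ((H x y).trans ?_)
      rw [← sq]
      gcongr
  apply ennreal_mul_le_sq_of_add_le_two_mul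
  calc (∫⁻ x, f x) + (∫⁻ x, g x)
      = ∫⁻ t in Ioo (0 : ℝ) 1, (volume {x | ENNReal.ofReal t < f x}
          + volume {x | ENNReal.ofReal t < g x}) := by
        rw [lintegral_eq_setLIntegral_meas_lt_of_le_one _ hf hf_le,
          lintegral_eq_setLIntegral_meas_lt_of_le_one _ hg hg_le, lintegral_add_left]
        exact Antitone.measurable fun s t hst =>
          measure_mono fun x hx => (ENNReal.ofReal_le_ofReal hst).trans_lt hx
    _ ≤ ∫⁻ t in Ioo (0 : ℝ) 1, 2 * volume {x | ENNReal.ofReal t < min (h x) 1} :=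
        setLIntegral_mono' measurableSet_Ioo hlevel
    _ = 2 * ∫⁻ x, min (h x) 1 := by
        rw [lintegral_const_mul' _ _ (by norm_num), lintegral_eq_setLIntegral_meas_lt_of_le_one _
          (hh.min measurable_const) fun x => min_le_right _ _]
    _ ≤ 2 * ∫⁻ x, h x := by
        gcongr
        exact min_le_left _ _

lemma lintegral_mul_lintegral_le_of_iSup_ne_top {f g h : ℝ → ℝ≥0∞} (hf : Measurable f)
    (hg : Measurable g) (hh : Measurable h) (hfb : ⨆ x, f x ≠ ⊤) (hgb : ⨆ x, g x ≠ ⊤)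
    (H : ∀ x y, f x * g y ≤ h (midpoint ℝ x y) ^ 2) :
    (∫⁻ x, f x) * (∫⁻ x, g x) ≤ (∫⁻ x, h x) ^ 2 := by
  set a := ⨆ x, f x with ha
  set b := ⨆ x, g x with hb
  rcases eq_or_ne a 0 with ha₀ | ha₀
  · simp [ENNReal.iSup_eq_zero.1 (ha ▸ ha₀)]
  rcases eq_or_ne b 0 with hb₀ | hb₀
  · simp [ENNReal.iSup_eq_zero.1 (hb ▸ hb₀)]
  obtain ⟨c, hc⟩ : ∃ c : ℝ≥0∞, c ^ 2 = a * b := by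
    refine ⟨(a * b) ^ (1 / 2 : ℝ), ?_⟩
    rw [← ENNReal.rpow_natCast, ← ENNReal.rpow_mul]
    norm_num
  have hab₀ : a * b ≠ 0 := mul_ne_zero ha₀ hb₀
  have habt : a * b ≠ ⊤ := ENNReal.mul_ne_top hfb hgb
  have hinv : ∀ s t : ℝ≥0∞, a⁻¹ * s * (b⁻¹ * t) = (a * b)⁻¹ * (s * t) := fun s t => by
    rw [ENNReal.mul_inv (.inl ha₀) (.inl hfb)]
    ring
  have hscaled := lintegral_mul_lintegral_le_of_iSup_eq_one (hf.const_mul a⁻¹) (hg.const_mul b⁻¹)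
    (hh.const_mul c⁻¹) (by rw [← ENNReal.mul_iSup, ← ha, ENNReal.inv_mul_cancel ha₀ hfb])
    (by rw [← ENNReal.mul_iSup, ← hb, ENNReal.inv_mul_cancel hb₀ hgb]) fun x y => by
      rw [hinv, mul_pow, ← ENNReal.inv_pow, hc]
      gcongr
      exact H x y
  rw [lintegral_const_mul _ hf, lintegral_const_mul _ hg, lintegral_const_mul _ hh, hinv, mul_pow,
    ← ENNReal.inv_pow, hc] at hscaled
  exact (ENNReal.mul_le_mul_iff_right (ENNReal.inv_ne_zero.2 habt)
    (ENNReal.inv_ne_top.2 hab₀)).1 hscaled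

lemma prekopaLeindler_real : PrekopaLeindler (volume : Measure ℝ) := by
  intro f g h hf hg hh H
  have htrunc : ∀ u : ℝ → ℝ≥0∞, Measurable u →
      ∫⁻ x, u x = ⨆ k : ℕ, ∫⁻ x, min (u x) k := by
    intro u hu
    rw [← lintegral_iSup (fun k => hu.min measurable_const)
      fun i j hij x => min_le_min le_rfl (by exact_mod_cast hij)]
    simp_rw [← inf_iSup_eq, ENNReal.iSup_natCast, inf_top_eq]
  have hbdd : ∀ (u : ℝ → ℝ≥0∞) (k : ℕ), ⨆ x, min (u x) k ≠ ⊤ := fun u k =>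
    ((iSup_le fun x => min_le_right _ _).trans_lt (ENNReal.natCast_lt_top _)).ne
  rw [htrunc f hf, htrunc g hg, ENNReal.iSup_mul]
  refine iSup_le fun j => ?_
  rw [ENNReal.mul_iSup]
  exact iSup_le fun k => lintegral_mul_lintegral_le_of_iSup_ne_top (hf.min measurable_const)
    (hg.min measurable_const) hh (hbdd f j) (hbdd g k)
    fun x y => (mul_le_mul' (min_le_left _ _) (min_le_left _ _)).trans (H x y)

variable {E F : Type*} [AddCommGroup E] [Module ℝ E] [MeasurableSpace E] [AddCommGroup F]
  [Module ℝ F] [MeasurableSpace F] {μ : Measure E} {ν : Measure F}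

lemma PrekopaLeindler.prod [SFinite ν] (hμ : PrekopaLeindler μ) (hν : PrekopaLeindler ν) :
    PrekopaLeindler (μ.prod ν) := by
  intro f g h hf hg hh H
  rw [lintegral_prod _ hf.aemeasurable, lintegral_prod _ hg.aemeasurable,
    lintegral_prod _ hh.aemeasurable]
  exact hμ hf.lintegral_prod_right' hg.lintegral_prod_right' hh.lintegral_prod_right' fun s t =>
    hν (hf.comp measurable_prodMk_left) (hg.comp measurable_prodMk_left)
      (hh.comp measurable_prodMk_left) fun x y => H (s, x) (t, y)

lemma PrekopaLeindler.of_measurePreserving (hμ : PrekopaLeindler μ) (L : E →ₗ[ℝ] F)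
    (hL : MeasurePreserving L μ ν) : PrekopaLeindler ν := by
  intro f g h hf hg hh H
  rw [← hL.lintegral_comp hf, ← hL.lintegral_comp hg, ← hL.lintegral_comp hh]
  refine hμ (hf.comp hL.measurable) (hg.comp hL.measurable) (hh.comp hL.measurable) fun x y => ?_
  convert H (L x) (L y) using 3
  exact L.toAffineMap.map_midpoint x y

lemma measurePreserving_finCons (n : ℕ) :
    MeasurePreserving (fun p : ℝ × (Fin n → ℝ) => (Fin.cons p.1 p.2 : Fin (n + 1) → ℝ)) := by
  convert (volume_preserving_piFinSuccAbove (fun _ : Fin (n + 1) => ℝ) 0).symm using 1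
  ext p : 1
  simp [MeasurableEquiv.piFinSuccAbove, Fin.insertNthEquiv]

lemma prekopaLeindler_pi : ∀ n : ℕ, PrekopaLeindler (volume : Measure (Fin n → ℝ))
  | 0 => by
    intro f g h _ _ _ H
    rw [volume_pi, Measure.pi_of_empty]
    simp only [lintegral_dirac]
    convert H _ _ using 3
  | n + 1 => (prekopaLeindler_real.prod (prekopaLeindler_pi n)).of_measurePreserving
      (Fin.consLinearEquiv ℝ fun _ => ℝ).toLinearMap (measurePreserving_finCons n)

lemma prekopaLeindler_euclideanSpace (n : ℕ) :
    PrekopaLeindler (volume : Measure (EuclideanSpace ℝ (Fin n))) :=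
  (prekopaLeindler_pi n).of_measurePreserving (WithLp.linearEquiv 2 ℝ (Fin n → ℝ)).symm.toLinearMap
    (EuclideanSpace.volume_preserving_symm_measurableEquiv_toLp (Fin n)).symm

end PrekopaLeindler

section Isodiametric

lemma PrekopaLeindler.measure_le_measure_closedBall {E : Type*} [NormedAddCommGroup E]
    [NormedSpace ℝ E] [MeasurableSpace E] [BorelSpace E] {μ : Measure E} [μ.IsNegInvariant]
    (hμ : PrekopaLeindler μ) {A : Set E} {d : ℝ} (hA : ∀ x ∈ A, ∀ y ∈ A, dist x y ≤ d) :
    μ A ≤ μ (closedBall 0 (d / 2)) := by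
  wlog hAc : IsClosed A generalizing A
  · refine (measure_mono subset_closure).trans (this (fun x hx y hy => ?_) isClosed_closure)
    simpa using map_mem_closure₂ (u := Iic d) continuous_dist hx hy hA
  have hAm := hAc.measurableSet
  -- The midpoint of `x ∈ A` and `-y`, `y ∈ A`, is `(x - y) / 2`.
  have key := hμ (f := A.indicator 1) (g := fun x => A.indicator 1 (-x))
    (h := (closedBall 0 (d / 2)).indicator 1) (measurable_one.indicator hAm)
    ((measurable_one.indicator hAm).comp measurable_neg)
    (measurable_one.indicator measurableSet_closedBall) fun x y => by
      by_cases hx : x ∈ A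
      swap; · simp [hx]
      by_cases hy : -y ∈ A
      swap; · simp [hy]
      have hz : midpoint ℝ x y ∈ closedBall (0 : E) (d / 2) := by
        have hxy := hA x hx (-y) hy
        rw [dist_eq_norm, sub_neg_eq_add] at hxy
        rw [mem_closedBall_zero_iff, midpoint_eq_smul_add, norm_smul]
        norm_num
        linarith
      simp [hx, hy, indicator_of_mem hz]
  rw [lintegral_neg_eq_self, lintegral_indicator_one hAm,
    lintegral_indicator_one measurableSet_closedBall, ← sq] at key
  exact (ENNReal.pow_le_pow_left_iff two_ne_zero).1 key

end Isodiametric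

section HausdorffScale

/-- The ratio between the Hausdorff measure `μH[n]` of Mathlib, which is not normalised, and the
Lebesgue measure of `ℝⁿ`. -/
def hausdorffScale (n : ℕ) : NNReal :=
  Measure.addHaarScalarFactor (μH[(n : ℝ)] : Measure (EuclideanSpace ℝ (Fin n))) volume

lemma hausdorffMeasure_eq_hausdorffScale_smul (n : ℕ) :
    (μH[(n : ℝ)] : Measure (EuclideanSpace ℝ (Fin n))) = hausdorffScale n • volume :=
  Measure.isAddLeftInvariant_eq_smul _ _

lemma mul_volume_le_ediam_pow {n : ℕ} {s : Set (EuclideanSpace ℝ (Fin n))} (hs : ediam s ≠ ⊤) :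
    2 ^ n * (volume (closedBall (0 : EuclideanSpace ℝ (Fin n)) 1))⁻¹ * volume s ≤
      ediam s ^ n := by
  set ω := volume (closedBall (0 : EuclideanSpace ℝ (Fin n)) 1)
  set d := (ediam s).toReal
  have hiso : volume s ≤ ENNReal.ofReal ((d / 2) ^ n) * ω := by
    refine ((prekopaLeindler_euclideanSpace n).measure_le_measure_closedBall (d := d)
      fun x hx y hy => ?_).trans_eq ?_
    · rw [dist_edist]
      exact ENNReal.toReal_mono hs (edist_le_ediam_of_mem hx hy)
    · simpa using Measure.addHaar_closedBall' (volume : Measure (EuclideanSpace ℝ (Fin n))) 0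
        (r := d / 2) (by positivity)
  calc 2 ^ n * ω⁻¹ * volume s ≤ 2 ^ n * ω⁻¹ * (ENNReal.ofReal ((d / 2) ^ n) * ω) := by gcongr
    _ = 2 ^ n * ENNReal.ofReal ((d / 2) ^ n) * (ω⁻¹ * ω) := by ring
    _ = (2 * ENNReal.ofReal (d / 2)) ^ n := by
      rw [ENNReal.inv_mul_cancel (measure_closedBall_pos volume _ one_pos).ne'
        measure_closedBall_lt_top.ne, mul_one, ENNReal.ofReal_pow (by positivity), mul_pow]
    _ = ediam s ^ n := by
      rw [ENNReal.ofReal_div_of_pos two_pos, ENNReal.ofReal_toReal hs, ENNReal.ofReal_ofNat,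
        ENNReal.mul_div_cancel two_ne_zero ENNReal.ofNat_ne_top]

lemma two_pow_le_hausdorffScale_mul_volume (n : ℕ) :
    2 ^ n ≤ (hausdorffScale n : ℝ≥0∞) * volume (closedBall (0 : EuclideanSpace ℝ (Fin n)) 1) := by
  set ω := volume (closedBall (0 : EuclideanSpace ℝ (Fin n)) 1)
  have hle : (2 ^ n * ω⁻¹) • (volume : Measure (EuclideanSpace ℝ (Fin n))) ≤ μH[(n : ℝ)] :=
    Measure.le_hausdorffMeasure _ _ 1 one_pos fun s hs => by
      rw [ENNReal.rpow_natCast]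
      exact mul_volume_le_ediam_pow (hs.trans_lt ENNReal.one_lt_top).ne
  have hball := hle (closedBall 0 1)
  rwa [hausdorffMeasure_eq_hausdorffScale_smul, Measure.smul_apply, smul_eq_mul, mul_assoc,
    ENNReal.inv_mul_cancel (measure_closedBall_pos volume _ one_pos).ne'
    measure_closedBall_lt_top.ne, mul_one] at hball

end HausdorffScale

section DensityComparison

lemma ediam_closedBall_le {E : Type*} [PseudoMetricSpace E] (x : E) (r : ℝ) :
    ediam (closedBall x r) ≤ ENNReal.ofReal (2 * r) :=
  Metric.ediam_le_of_forall_dist_le fun y hy z hz => by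
    have := dist_triangle_right y z x
    rw [mem_closedBall] at hy hz
    linarith

variable {E : Type*} [NormedAddCommGroup E] [NormedSpace ℝ E] [FiniteDimensional ℝ E]
  [MeasurableSpace E] [BorelSpace E] {τ : Measure E} [IsFiniteMeasure τ] {T : Set E} {c : ℝ≥0∞}
  {n : ℕ}

lemma exists_countable_closedBall_cover_tsum_ediam_le
    (h : ∀ x ∈ T, ∀ δ > 0, ∃ r ∈ Ioo (0 : ℝ) δ,
      c * ENNReal.ofReal (2 * r) ^ n ≤ τ (closedBall x r)) {ε : ℝ} (hε : 0 < ε) :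
    ∃ (t : Set E) (r : E → ℝ), t.Countable ∧ T ⊆ ⋃ x : t, closedBall (x : E) (r x) ∧
      (∀ x : t, ediam (closedBall (x : E) (r x)) ≤ ENNReal.ofReal (2 * ε)) ∧
      c * ∑' x : t, ediam (closedBall (x : E) (r x)) ^ n ≤ τ T + ENNReal.ofReal ε := by
  obtain ⟨t, r, htc, -, hr, hcov, hsum⟩ := Besicovitch.exists_closedBall_covering_tsum_measure_le τ
    (ENNReal.ofReal_pos.2 hε).ne'
    (fun x => {r | 0 < r ∧ r < ε ∧ c * ENNReal.ofReal (2 * r) ^ n ≤ τ (closedBall x r)}) T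
    fun x hx δ hδ => by
      obtain ⟨r, hr, hrτ⟩ := h x hx (min δ ε) (lt_min hδ hε)
      exact ⟨r, ⟨hr.1, hr.2.trans_le (min_le_right _ _), hrτ⟩,
        hr.1, hr.2.trans_le (min_le_left _ _)⟩
  refine ⟨t, r, htc, by rwa [biUnion_eq_iUnion] at hcov, fun x => ?_, ?_⟩
  · refine (ediam_closedBall_le _ _).trans (ENNReal.ofReal_le_ofReal ?_)
    linarith [(hr x x.2).2.1]
  · rw [← ENNReal.tsum_mul_left]
    refine (ENNReal.tsum_le_tsum fun x => ?_).trans hsum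
    refine le_trans ?_ (hr x x.2).2.2
    gcongr
    exact ediam_closedBall_le _ _

lemma mul_hausdorffMeasure_le_of_density (hc : c ≠ ⊤)
    (h : ∀ x ∈ T, ∀ δ > 0, ∃ r ∈ Ioo (0 : ℝ) δ,
      c * ENNReal.ofReal (2 * r) ^ n ≤ τ (closedBall x r)) :
    c * μH[(n : ℝ)] T ≤ τ T := by
  have hε : Tendsto (fun k : ℕ => 1 / (k + 1 : ℝ)) atTop (𝓝 0) :=
    tendsto_one_div_add_atTop_nhds_zero_nat
  choose t r htc hcov hdiam hsum using fun k : ℕ =>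
    exists_countable_closedBall_cover_tsum_ediam_le h (ε := 1 / (k + 1)) (by positivity)
  have hcount : ∀ k, Countable (t k) := fun k => (htc k).to_subtype
  have hH : μH[(n : ℝ)] T ≤
      liminf (fun k => ∑' x : t k, ediam (closedBall (x : E) (r k x)) ^ n) atTop := by
    simp_rw [← ENNReal.rpow_natCast]
    exact Measure.hausdorffMeasure_le_liminf_tsum (n : ℝ) T _
      (by simpa using ENNReal.tendsto_ofReal (hε.const_mul 2)) _
      (Eventually.of_forall hdiam) (Eventually.of_forall hcov)
  calc c * μH[(n : ℝ)] T
      ≤ c * liminf (fun k => ∑' x : t k, ediam (closedBall (x : E) (r k x)) ^ n) atTop := by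
        gcongr
    _ = liminf (fun k => c * ∑' x : t k, ediam (closedBall (x : E) (r k x)) ^ n) atTop :=
        (ENNReal.liminf_const_mul_of_ne_top hc).symm
    _ ≤ liminf (fun k : ℕ => τ T + ENNReal.ofReal (1 / (k + 1 : ℝ))) atTop :=
        liminf_le_liminf (Eventually.of_forall hsum)
    _ = τ T := by
        simpa using (tendsto_const_nhds.add (ENNReal.tendsto_ofReal hε)).liminf_eq

end DensityComparison

section HyperplaneCoords

variable {n : ℕ} {e : Euc n}

/-- Orthogonal coordinates `(t, y) ∈ ℝ × ℝⁿ` on `ℝⁿ⁺¹` whose first axis is directed by `e`. -/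
structure HyperplaneCoords (e : Euc n) where
  equiv : WithLp 2 (ℝ × EuclideanSpace ℝ (Fin n)) ≃ₗᵢ[ℝ] Euc n
  equiv_one_zero : equiv (.toLp 2 (1, 0)) = e

namespace HyperplaneCoords

lemma nonempty_of_norm_eq_one (he : ‖e‖ = 1) : Nonempty (HyperplaneCoords e) := by
  have : Fact (Module.finrank ℝ (Euc n) = n + 1) := ⟨by simp⟩
  have he₀ : e ≠ 0 := by
    rintro rfl
    simp at he
  refine ⟨⟨(LinearIsometryEquiv.withLpProdCongr 2 (LinearIsometryEquiv.toSpanUnitSingleton e he)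
    (OrthonormalBasis.fromOrthogonalSpanSingleton n he₀).repr.symm).trans
      (ℝ ∙ e).orthogonalDecomposition.symm, ?_⟩⟩
  simp

/-- The isometric embedding of `ℝⁿ` onto the hyperplane orthogonal to `e`. -/
def embed (C : HyperplaneCoords e) : EuclideanSpace ℝ (Fin n) →ₗᵢ[ℝ] Euc n where
  toLinearMap := C.equiv.toLinearMap ∘ₗ (WithLp.linearEquiv 2 ℝ _).symm.toLinearMap ∘ₗ
    LinearMap.inr ℝ ℝ (EuclideanSpace ℝ (Fin n))
  norm_map' y := by simp

/-- The coordinates in `ℝⁿ` of the orthogonal projection to the hyperplane orthogonal to `e`. -/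
def proj (C : HyperplaneCoords e) : Euc n →L[ℝ] EuclideanSpace ℝ (Fin n) :=
  WithLp.sndL 2 ℝ ℝ _ ∘L (C.equiv.symm : Euc n →L[ℝ] WithLp 2 (ℝ × EuclideanSpace ℝ (Fin n)))

lemma norm_eq_one (C : HyperplaneCoords e) : ‖e‖ = 1 :=
  (congrArg norm C.equiv_one_zero).symm.trans ((C.equiv.norm_map _).trans (by simp))

lemma inner_self (C : HyperplaneCoords e) : ⟪e, e⟫ = 1 := by
  rw [real_inner_self_eq_norm_sq, C.norm_eq_one, one_pow]

variable (C : HyperplaneCoords e)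

lemma equiv_toLp (t : ℝ) (y : EuclideanSpace ℝ (Fin n)) :
    C.equiv (.toLp 2 (t, y)) = t • e + C.embed y := by
  have hsplit : (.toLp 2 (t, y) : WithLp 2 (ℝ × EuclideanSpace ℝ (Fin n))) =
      t • .toLp 2 (1, 0) + .toLp 2 (0, y) := by
    simp [← WithLp.toLp_smul, ← WithLp.toLp_add]
  calc C.equiv (.toLp 2 (t, y)) = t • C.equiv (.toLp 2 (1, 0)) + C.equiv (.toLp 2 (0, y)) := by
        rw [hsplit, map_add, map_smul]
    _ = t • e + C.embed y := by
        rw [C.equiv_one_zero]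
        rfl

lemma inner_embed (y : EuclideanSpace ℝ (Fin n)) : ⟪C.embed y, e⟫ = 0 := by
  calc ⟪C.embed y, e⟫ = ⟪C.equiv (.toLp 2 (0, y)), C.equiv (.toLp 2 (1, 0))⟫ :=
        congrArg (inner ℝ _) C.equiv_one_zero.symm
    _ = 0 := (C.equiv.inner_map_map _ _).trans (by simp)

lemma inner_smul_add_embed (t : ℝ) (y : EuclideanSpace ℝ (Fin n)) :
    ⟪t • e + C.embed y, e⟫ = t := by
  rw [inner_add_left, real_inner_smul_left, C.inner_embed, C.inner_self, mul_one, add_zero]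

lemma proj_smul_add_embed (t : ℝ) (y : EuclideanSpace ℝ (Fin n)) :
    C.proj (t • e + C.embed y) = y := by
  rw [← C.equiv_toLp]
  simp [proj]

lemma inner_smul_add_embed_proj (x : Euc n) : ⟪x, e⟫ • e + C.embed (C.proj x) = x := by
  obtain ⟨⟨t, y⟩, rfl⟩ := C.equiv.surjective x
  rw [C.equiv_toLp, C.inner_smul_add_embed, C.proj_smul_add_embed]

lemma lipschitzWith_proj : LipschitzWith 1 C.proj := by
  refine AddMonoidHomClass.lipschitz_of_bound_nnnorm C.proj 1 fun x => ?_
  rw [one_mul, ← NNReal.coe_le_coe, coe_nnnorm, coe_nnnorm, ← C.equiv.symm.norm_map x,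
    WithLp.prod_norm_eq_of_L2]
  exact Real.le_sqrt_of_sq_le (le_add_of_nonneg_left (sq_nonneg _))

lemma measurePreserving :
    MeasurePreserving fun p : ℝ × EuclideanSpace ℝ (Fin n) => p.1 • e + C.embed p.2 := by
  convert C.equiv.measurePreserving.comp (WithLp.volume_preserving_toLp ℝ _) using 1
  ext1 p
  exact (C.equiv_toLp p.1 p.2).symm

end HyperplaneCoords

end HyperplaneCoords

section Divergence

variable {n : ℕ} {X Y : Euc n → Euc n} {w : Euc n → ℝ} {x : Euc n}

lemma integral_fderiv_apply_eq_zero {E : Type*} [NormedAddCommGroup E] [NormedSpace ℝ E]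
    [FiniteDimensional ℝ E] [MeasurableSpace E] [BorelSpace E] (μ : Measure E) [μ.IsAddHaarMeasure]
    {u : E → ℝ} (hu : ContDiff ℝ 1 u) (huc : HasCompactSupport u) (e : E) :
    ∫ x, fderiv ℝ u x e ∂μ = 0 := by
  have hint : Integrable (fun x => fderiv ℝ u x e) μ :=
    ((hu.continuous_fderiv one_ne_zero).clm_apply continuous_const).integrable_of_hasCompactSupport
      (huc.fderiv_apply ℝ e)
  simpa using integral_mul_fderiv_eq_neg_fderiv_mul_of_integrable (μ := μ) (f := fun _ => (1 : ℝ))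
    (g := u) (v := e) (by simp) (by simpa using hint)
    (by simpa using hu.continuous.integrable_of_hasCompactSupport huc)
    (fun _ _ => differentiableAt_const _) fun x _ => hu.differentiable one_ne_zero x

lemma divg_eq_sum_fderiv (hX : DifferentiableAt ℝ X x) :
    divg X x = ∑ i, fderiv ℝ (fun y => X y i) x (EuclideanSpace.single i 1) := by
  refine Finset.sum_congr rfl fun i _ => ?_
  rw [show (fun y => X y i) = (EuclideanSpace.proj i : Euc n →L[ℝ] ℝ) ∘ X from rfl,
    fderiv_comp x (by fun_prop) hX, ContinuousLinearMap.fderiv]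
  simp [EuclideanSpace.inner_single_right]

lemma divg_smul (hw : DifferentiableAt ℝ w x) (hX : DifferentiableAt ℝ X x) :
    divg (fun y => w y • X y) x = w x * divg X x + fderiv ℝ w x (X x) := by
  have hcoord : fderiv ℝ w x (X x) =
      ∑ i, X x i * fderiv ℝ w x (EuclideanSpace.single i 1) := by
    conv_lhs => rw [← (EuclideanSpace.basisFun _ ℝ).sum_repr (X x), map_sum]
    simp
  rw [hcoord, divg, divg, Finset.mul_sum, ← Finset.sum_add_distrib]
  refine Finset.sum_congr rfl fun i _ => ?_
  rw [fderiv_fun_smul hw hX]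
  simp [inner_add_left, inner_smul_left, EuclideanSpace.inner_single_right, mul_comm]

lemma divg_smul_const (e : Euc n) (hw : DifferentiableAt ℝ w x) :
    divg (fun y => w y • e) x = fderiv ℝ w x e := by
  rw [divg_smul hw (differentiableAt_const e)]
  simp [divg]

lemma divg_add (hX : DifferentiableAt ℝ X x) (hY : DifferentiableAt ℝ Y x) :
    divg (fun y => X y + Y y) x = divg X x + divg Y x := by
  unfold divg
  rw [fderiv_fun_add hX hY, ← Finset.sum_add_distrib]
  simp [inner_add_left]

lemma divg_const_smul (hX : DifferentiableAt ℝ X x) (a : ℝ) :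
    divg (a • X) x = a * divg X x := by
  simpa [Pi.smul_def] using divg_smul (differentiableAt_const a) hX

lemma continuous_divg (hX : ContDiff ℝ 1 X) : Continuous (divg X) := by
  have := hX.continuous_fderiv one_ne_zero
  unfold divg
  fun_prop

lemma divg_of_notMem_tsupport (hx : x ∉ tsupport X) : divg X x = 0 := by
  have : fderiv ℝ X x = 0 := Function.notMem_support.1 fun h => hx (support_fderiv_subset ℝ h)
  simp [divg, this]

lemma hasCompactSupport_divg (hX : HasCompactSupport X) : HasCompactSupport (divg X) :=
  HasCompactSupport.intro hX fun _ hx => divg_of_notMem_tsupport hx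

lemma integrable_divg {μ : Measure (Euc n)} [IsFiniteMeasureOnCompacts μ] (hX : ContDiff ℝ 1 X)
    (hXc : HasCompactSupport X) : Integrable (divg X) μ :=
  (continuous_divg hX).integrable_of_hasCompactSupport (hasCompactSupport_divg hXc)

lemma integral_divg_eq_zero (hX : ContDiff ℝ 1 X) (hXc : HasCompactSupport X) :
    ∫ x, divg X x = 0 := by
  have hXi : ∀ i, ContDiff ℝ 1 fun y => X y i := fun i =>
    (EuclideanSpace.proj i : Euc n →L[ℝ] ℝ).contDiff.comp hX
  have hXic : ∀ i, HasCompactSupport fun y => X y i := fun i =>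
    hXc.comp_left (g := fun v : Euc n => v i) rfl
  simp_rw [fun x => divg_eq_sum_fderiv (hX.differentiable one_ne_zero x)]
  rw [integral_finsetSum _ fun i _ => ?_]
  · exact Finset.sum_eq_zero fun i _ => integral_fderiv_apply_eq_zero _ (hXi i) (hXic i) _
  · exact Continuous.integrable_of_hasCompactSupport
      (((hXi i).continuous_fderiv one_ne_zero).clm_apply continuous_const)
      ((hXic i).fderiv_apply ℝ _)

end Divergence

section GraphIntegral

lemma setIntegral_Iio_fderiv_line {E : Type*} [NormedAddCommGroup E] [NormedSpace ℝ E] {u : E → ℝ}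
    (hu : ContDiff ℝ 1 u) (huc : HasCompactSupport u) (p : E) {e : E} (he : e ≠ 0) (b : ℝ) :
    ∫ t in Iio b, fderiv ℝ u (p + t • e) e = u (p + b • e) := by
  have hline : Topology.IsClosedEmbedding fun t : ℝ => p + t • e :=
    (Homeomorph.addLeft p).isClosedEmbedding.comp (isClosedEmbedding_smul_left he)
  have hderiv : ∀ t, deriv (fun t : ℝ => u (p + t • e)) t = fderiv ℝ u (p + t • e) e := fun t =>
    ((hu.differentiable one_ne_zero _).hasFDerivAt.comp_hasDerivAt t
      (by simpa using ((hasDerivAt_id t).smul_const e).const_add p)).deriv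
  simp_rw [← hderiv]
  rw [← integral_Iic_eq_integral_Iio]
  exact (huc.comp_isClosedEmbedding hline).integral_Iic_deriv_eq (hu.comp (by fun_prop)) b

variable {n : ℕ} {e : Euc n}

lemma HyperplaneCoords.integral_eq_integral_integral (C : HyperplaneCoords e) (x₀ : Euc n)
    {F : Euc n → ℝ} (hF : Integrable F) :
    ∫ x, F x = ∫ y : EuclideanSpace ℝ (Fin n), ∫ t : ℝ, F (x₀ + (t • e + C.embed y)) := by
  have hmp : MeasurePreserving fun p : ℝ × EuclideanSpace ℝ (Fin n) =>
      x₀ + (p.1 • e + C.embed p.2) :=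
    (measurePreserving_add_left volume x₀).comp C.measurePreserving
  rw [← hmp.map_eq, integral_map hmp.measurable.aemeasurable
    (hmp.map_eq ▸ hF.aestronglyMeasurable), Measure.volume_eq_prod]
  exact integral_prod_symm _ (hmp.integrable_comp_of_integrable hF)

lemma HyperplaneCoords.setIntegral_fderiv_subgraph (C : HyperplaneCoords e) (x₀ : Euc n)
    {u : Euc n → ℝ} (hu : ContDiff ℝ 1 u) (huc : HasCompactSupport u) {S : Set (Euc n)}
    (hS : MeasurableSet S) {D : Set (EuclideanSpace ℝ (Fin n))} (hD : MeasurableSet D)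
    (φ : EuclideanSpace ℝ (Fin n) → ℝ)
    (hSφ : ∀ y ∈ D, ∀ t : ℝ, fderiv ℝ u (x₀ + (t • e + C.embed y)) e ≠ 0 →
      (x₀ + (t • e + C.embed y) ∈ S ↔ t < φ y))
    (huD : ∀ y ∉ D, ∀ t : ℝ, fderiv ℝ u (x₀ + (t • e + C.embed y)) e = 0) :
    ∫ x in S, fderiv ℝ u x e = ∫ y in D, u (x₀ + (φ y • e + C.embed y)) := by
  have he : e ≠ 0 := norm_ne_zero_iff.1 (C.norm_eq_one ▸ one_ne_zero)
  have hint : Integrable fun x => fderiv ℝ u x e :=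
    ((hu.continuous_fderiv one_ne_zero).clm_apply continuous_const).integrable_of_hasCompactSupport
      (huc.fderiv_apply ℝ e)
  have hfiber : ∀ y ∈ D, ∀ t : ℝ,
      S.indicator (fun x => fderiv ℝ u x e) (x₀ + (t • e + C.embed y)) =
        (Iio (φ y)).indicator (fun t => fderiv ℝ u (x₀ + (t • e + C.embed y)) e) t := by
    intro y hy t
    by_cases h₀ : fderiv ℝ u (x₀ + (t • e + C.embed y)) e = 0
    · simp [indicator_apply, h₀]
    · classical simp only [indicator_apply, hSφ y hy t h₀, mem_Iio]
  rw [← integral_indicator hS, C.integral_eq_integral_integral x₀ (hint.indicator hS),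
    ← setIntegral_eq_integral_of_forall_compl_eq_zero (s := D) fun y hy => ?_]
  · refine setIntegral_congr_fun hD fun y hy => ?_
    refine (integral_congr_ae (.of_forall (hfiber y hy))).trans ?_
    rw [integral_indicator measurableSet_Iio]
    simpa only [add_comm (_ • e), ← add_assoc] using
      setIntegral_Iio_fderiv_line hu huc (x₀ + C.embed y) he (φ y)
  · classical simp [indicator_apply, huD y hy]

end GraphIntegral

lemma abs_setIntegral_sub_setIntegral_le {α : Type*} [MeasurableSpace α] {μ : Measure α}
    {g : α → ℝ} (hg : Integrable g μ) {A B : Set α} (hA : MeasurableSet A) (hB : MeasurableSet B)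
    {C : ℝ} (hC : ∀ x, |g x| ≤ C) {D : Set α}
    (hD : ∀ x, g x ≠ 0 → ¬(x ∈ A ↔ x ∈ B) → x ∈ D) (hDt : μ D ≠ ⊤) :
    |∫ x in A, g x ∂μ - ∫ x in B, g x ∂μ| ≤ C * (μ D).toReal := by
  classical
  rw [← integral_indicator hA, ← integral_indicator hB,
    ← integral_sub (hg.indicator hA) (hg.indicator hB), ← measureReal_def,
    ← setIntegral_eq_integral_of_forall_compl_eq_zero (s := D), ← Real.norm_eq_abs]
  · refine norm_setIntegral_le_of_norm_le_const hDt.lt_top fun x _ => ?_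
    have hC₀ := (abs_nonneg _).trans (hC x)
    by_cases hxA : x ∈ A <;> by_cases hxB : x ∈ B <;> simp [hxA, hxB, hC x, hC₀]
  · intro x hx
    have := hD x
    by_cases hxA : x ∈ A <;> by_cases hxB : x ∈ B <;> simp_all

open scoped Pointwise in
lemma setIntegral_comp_inv_smul_sub {E : Type*} [NormedAddCommGroup E] [NormedSpace ℝ E]
    [FiniteDimensional ℝ E] [MeasurableSpace E] [BorelSpace E] (μ : Measure E) [μ.IsAddHaarMeasure]
    (A : Set E) (x : E) {r : ℝ} (hr : 0 < r) (g : E → ℝ) :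
    ∫ y in A, g (r⁻¹ • (y - x)) ∂μ =
      r ^ Module.finrank ℝ E * ∫ z in {z | x + r • z ∈ A}, g z ∂μ := by
  have htrans := (measurePreserving_add_left μ x).setIntegral_preimage_emb
    (MeasurableEquiv.addLeft x).measurableEmbedding (fun y => g (r⁻¹ • (y - x))) A
  have hscale := Measure.setIntegral_comp_smul_of_pos μ (fun y => g (r⁻¹ • y))
    {z | x + r • z ∈ A} hr
  have hset : r • {z | x + r • z ∈ A} = (x + ·) ⁻¹' A := by
    ext y
    simp [mem_smul_set_iff_inv_smul_mem₀ hr.ne', smul_inv_smul₀ hr.ne']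
  simp only [inv_smul_smul₀ hr.ne', hset, smul_eq_mul] at hscale
  simp only [add_sub_cancel_left] at htrans
  rw [← htrans, hscale, mul_inv_cancel_left₀ (pow_pos hr _).ne']

section Density

variable {n : ℕ}

lemma setIntegral_halfSpace_fderiv {v : Euc n} (C : HyperplaneCoords v) {ψ : Euc n → ℝ}
    (hψ : ContDiff ℝ 1 ψ) (hψc : HasCompactSupport ψ) :
    ∫ z in {z | ⟪z, v⟫ < 0}, fderiv ℝ ψ z v = ∫ y, ψ (C.embed y) := by
  have := C.setIntegral_fderiv_subgraph 0 hψ hψc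
    (isOpen_lt (continuous_id.inner continuous_const) continuous_const).measurableSet
    MeasurableSet.univ (fun _ => 0)
    (fun y _ t _ => by
      rw [zero_add, mem_ofPred_eq, id, C.inner_smul_add_embed]) (by simp)
  simpa using this

lemma two_pow_mul_pow_le_setIntegral_halfSpace_fderiv {v : Euc n} (hv : ‖v‖ = 1) {ψ : Euc n → ℝ}
    (hψ : ContDiff ℝ 1 ψ) (hψc : HasCompactSupport ψ) (hψ₀ : ∀ z, 0 ≤ ψ z) {s : ℝ} (hs : 0 ≤ s)
    (hψs : ∀ z ∈ closedBall 0 s, ψ z = 1) :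
    2 ^ n * s ^ n ≤ hausdorffScale n * ∫ z in {z | ⟪z, v⟫ < 0}, fderiv ℝ ψ z v := by
  obtain ⟨C⟩ := HyperplaneCoords.nonempty_of_norm_eq_one hv
  let B (t : ℝ) : Set (EuclideanSpace ℝ (Fin n)) := closedBall 0 t
  have hscale : (2 : ℝ) ^ n ≤ hausdorffScale n * volume.real (B 1) := by
    simpa [measureReal_def, B] using ENNReal.toReal_mono
      (ENNReal.mul_ne_top ENNReal.coe_ne_top measure_closedBall_lt_top.ne)
      (two_pow_le_hausdorffScale_mul_volume n)
  have hvol : volume.real (B s) = s ^ n * volume.real (B 1) := by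
    have := Measure.addHaar_closedBall_mul (volume : Measure (EuclideanSpace ℝ (Fin n))) 0 hs
      zero_le_one
    simp only [mul_one, finrank_euclideanSpace_fin] at this
    rw [measureReal_def, this, ENNReal.toReal_mul, ENNReal.toReal_ofReal (pow_nonneg hs n)]
    rfl
  have hball : volume.real (B s) ≤ ∫ y, ψ (C.embed y) := by
    rw [← integral_indicator_one measurableSet_closedBall]
    refine integral_mono ((integrable_indicator_iff measurableSet_closedBall).2
      (integrableOn_const measure_closedBall_lt_top.ne))
      ((hψ.continuous.comp C.embed.continuous).integrable_of_hasCompactSupport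
        (hψc.comp_isClosedEmbedding C.embed.isometry.isClosedEmbedding)) fun y => ?_
    refine indicator_le' (fun y hy => ?_) (fun y _ => hψ₀ _) y
    exact (hψs _ (by simpa [B] using hy)).ge
  calc 2 ^ n * s ^ n ≤ hausdorffScale n * volume.real (B 1) * s ^ n := by gcongr
    _ = hausdorffScale n * volume.real (B s) := by rw [hvol]; ring
    _ ≤ _ := by
      rw [setIntegral_halfSpace_fderiv C hψ hψc]
      gcongr

lemma HalfSpaceBlowup.tendsto_setIntegral {A : Set (Euc n)} (hA : MeasurableSet A) {x v : Euc n}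
    (h : HalfSpaceBlowup A x v) {g : Euc n → ℝ} (hg : Continuous g) (hgc : HasCompactSupport g)
    (hg₁ : ∀ z ∉ ball 0 1, g z = 0) :
    Tendsto (fun r : ℝ => ∫ z in {z | x + r • z ∈ A}, g z) (𝓝[>] 0)
      (𝓝 (∫ z in {z | ⟪z, v⟫ < 0}, g z)) := by
  obtain ⟨K, hK⟩ := hgc.exists_bound_of_continuous hg
  have hD := ((ENNReal.tendsto_toReal ENNReal.zero_ne_top).comp h).const_mul K
  rw [ENNReal.toReal_zero, mul_zero] at hD
  refine tendsto_iff_dist_tendsto_zero.2 (squeeze_zero (fun _ => dist_nonneg) (fun r => ?_) hD)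
  exact abs_setIntegral_sub_setIntegral_le (hg.integrable_of_hasCompactSupport hgc)
    ((show Measurable fun z : Euc n => x + r • z by fun_prop) hA)
    (isOpen_lt (continuous_id.inner continuous_const) continuous_const).measurableSet hK
    (D := {y ∈ ball 0 1 | ¬(x + r • y ∈ A ↔ ⟪y, v⟫ < 0)})
    (fun z hz hzA => ⟨not_imp_comm.1 (hg₁ z) hz, hzA⟩)
    ((measure_mono fun z hz => hz.1).trans_lt measure_ball_lt_top).ne

lemma inv_smul_sub_notMem_closedBall {x y : Euc n} {r : ℝ} (hr : 0 < r)
    (hy : y ∉ closedBall x r) :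
    r⁻¹ • (y - x) ∉ closedBall (0 : Euc n) 1 := by
  rw [mem_closedBall, dist_eq_norm, not_le] at hy
  rwa [mem_closedBall_zero_iff, norm_smul, norm_inv, Real.norm_of_nonneg hr.le, not_le,
    lt_inv_mul_iff₀ hr, mul_one]

lemma integral_rescaled_le_setIntegral {τ : Measure (Euc n)} {x : Euc n} {g f : Euc n → ℝ}
    (hgf : ∀ y, g y ≤ f y) (hf₀ : ∀ y, 0 ≤ f y) {r : ℝ} (hf : IntegrableOn f (closedBall x r) τ)
    (hr : 0 < r) {ψ : Euc n → ℝ} (hψ₀ : ∀ z, 0 ≤ ψ z) (hψ : ∀ z, ψ z ≤ 1)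
    (hψ₁ : ∀ z ∉ closedBall 0 1, ψ z = 0) :
    ∫ y, ψ (r⁻¹ • (y - x)) * g y ∂τ ≤ ∫ y in closedBall x r, f y ∂τ := by
  by_cases hi : Integrable (fun y => ψ (r⁻¹ • (y - x)) * g y) τ
  · rw [← integral_indicator measurableSet_closedBall]
    refine integral_mono hi ((integrable_indicator_iff measurableSet_closedBall).2 hf) fun y => ?_
    by_cases hy : y ∈ closedBall x r
    · rw [indicator_of_mem hy]
      exact (mul_le_mul_of_nonneg_left (hgf y) (hψ₀ _)).trans
        (mul_le_of_le_one_left (hf₀ y) (hψ _))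
    · simp [hy, hψ₁ _ (inv_smul_sub_notMem_closedBall hr hy)]
  · rw [integral_undef hi]
    exact integral_nonneg hf₀

/-- The Gauss–Green formula for `A`, tested against vector fields supported in `U`, with boundary
measure `τ` and normal `N`. Boundary measures are compared with Mathlib's unnormalized `μH[n]`,
whence the factor `hausdorffScale n`. -/
def GaussGreenOn (A U : Set (Euc n)) (τ : Measure (Euc n)) (N : Euc n → Euc n) : Prop :=
  ∀ X : Euc n → Euc n, ContDiff ℝ (⊤ : ℕ∞) X → HasCompactSupport X → tsupport X ⊆ U →
    hausdorffScale n * ∫ x in A, divg X x = ∫ x, ⟪X x, N x⟫ ∂τ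

namespace GaussGreenOn

variable {A U : Set (Euc n)} {τ : Measure (Euc n)} {N : Euc n → Euc n} {x v : Euc n}

lemma integral_rescaled (h : GaussGreenOn A U τ N) {r : ℝ} (hr : 0 < r) (hU : closedBall x r ⊆ U)
    {ψ : Euc n → ℝ} (hψ : ContDiff ℝ (⊤ : ℕ∞) ψ) (hψ₁ : ∀ z ∉ closedBall 0 1, ψ z = 0) :
    ∫ y, ψ (r⁻¹ • (y - x)) * ⟪v, N y⟫ ∂τ =
      r ^ n * (hausdorffScale n * ∫ z in {z | x + r • z ∈ A}, fderiv ℝ ψ z v) := by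
  let X : Euc n → Euc n := fun y => ψ (r⁻¹ • (y - x)) • v
  have hw : ContDiff ℝ (⊤ : ℕ∞) fun y => ψ (r⁻¹ • (y - x)) := hψ.comp (by fun_prop)
  have hsupp : tsupport X ⊆ closedBall x r :=
    closure_minimal (fun y hy => by_contra fun hyn => hy <| by
      simp [X, hψ₁ _ (inv_smul_sub_notMem_closedBall hr hyn)]) isClosed_closedBall
  have hdiv : ∀ y, divg X y = r⁻¹ * fderiv ℝ ψ (r⁻¹ • (y - x)) v := by
    intro y
    have hin : HasFDerivAt (fun y : Euc n => r⁻¹ • (y - x))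
        (r⁻¹ • ContinuousLinearMap.id ℝ (Euc n)) y :=
      ((hasFDerivAt_id y).sub_const x).const_smul r⁻¹
    have hw' : HasFDerivAt (fun y => ψ (r⁻¹ • (y - x))) _ y :=
      (hψ.differentiable (by simp) _).hasFDerivAt.comp y hin
    rw [divg_smul_const v hw'.differentiableAt, hw'.fderiv]
    simp
  have hGG := h X (hw.smul contDiff_const)
    ((isCompact_closedBall x r).of_isClosed_subset (isClosed_tsupport X) hsupp) (hsupp.trans hU)
  simp only [hdiv, X, real_inner_smul_left] at hGG
  rw [← hGG, integral_const_mul,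
    setIntegral_comp_inv_smul_sub volume A x hr fun z => fderiv ℝ ψ z v,
    finrank_euclideanSpace_fin, pow_succ]
  field_simp

lemma eventually_forall_mul_pow_le_setIntegral_closedBall (h : GaussGreenOn A U τ N)
    (hA : MeasurableSet A) (hU : IsOpen U) (hx : x ∈ U) (hv : ‖v‖ = 1)
    (hb : HalfSpaceBlowup A x v) {c : ℝ} (hc : c < 2 ^ n) :
    ∀ᶠ r in 𝓝[>] (0 : ℝ), ∀ f : Euc n → ℝ, IntegrableOn f (closedBall x r) τ → (∀ y, 0 ≤ f y) →
      (∀ y, ⟪v, N y⟫ ≤ f y) → c * r ^ n ≤ ∫ y in closedBall x r, f y ∂τ := by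
  obtain ⟨s, hcs, hs₀, hs₁⟩ : ∃ s : ℝ, c < 2 ^ n * s ^ n ∧ s ∈ Ioo 0 1 := by
    have hlim : Tendsto (fun s : ℝ => 2 ^ n * s ^ n) (𝓝[<] 1) (𝓝 (2 ^ n)) := by
      have : Continuous fun s : ℝ => (2 : ℝ) ^ n * s ^ n := by fun_prop
      simpa using (this.tendsto 1).mono_left nhdsWithin_le_nhds
    exact ((hlim.eventually (lt_mem_nhds hc)).and (Ioo_mem_nhdsLT zero_lt_one)).exists
  let ψ : ContDiffBump (0 : Euc n) := ⟨s, (1 + s) / 2, hs₀, by linarith⟩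
  have hψ₁ : tsupport ψ ⊆ ball 0 1 :=
    ψ.tsupport_eq.trans_subset (closedBall_subset_ball (show (1 + s) / 2 < 1 by linarith))
  have hψz : ∀ z ∉ closedBall (0 : Euc n) 1, ψ z = 0 := fun z hz =>
    image_eq_zero_of_notMem_tsupport fun hz' => hz (ball_subset_closedBall (hψ₁ hz'))
  have hlim := (hb.tendsto_setIntegral hA
    ((ψ.contDiff.continuous_fderiv one_ne_zero).clm_apply continuous_const)
    (ψ.hasCompactSupport.fderiv_apply ℝ v) fun z hz => by
      rw [image_eq_zero_of_notMem_tsupport fun hz' => hz (hψ₁ (tsupport_fderiv_subset ℝ hz')),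
        zero_apply]).const_mul (hausdorffScale n : ℝ)
  have hlt := hcs.trans_le (two_pow_mul_pow_le_setIntegral_halfSpace_fderiv hv ψ.contDiff
    ψ.hasCompactSupport (fun _ => ψ.nonneg) hs₀.le fun _ => ψ.one_of_mem_closedBall)
  obtain ⟨ρ, hρ, hρU⟩ := Metric.isOpen_iff.1 hU x hx
  filter_upwards [hlim.eventually (lt_mem_nhds hlt), Ioo_mem_nhdsGT hρ]
    with r hr ⟨hr₀, hrρ⟩ f hf hf₀ hNf
  calc c * r ^ n ≤ r ^ n * (hausdorffScale n * ∫ z in {z | x + r • z ∈ A}, fderiv ℝ ψ z v) := by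
        rw [mul_comm]
        gcongr
    _ = ∫ y, ψ (r⁻¹ • (y - x)) * ⟪v, N y⟫ ∂τ :=
        (h.integral_rescaled hr₀ ((closedBall_subset_ball hrρ).trans hρU) ψ.contDiff hψz).symm
    _ ≤ ∫ y in closedBall x r, f y ∂τ :=
        integral_rescaled_le_setIntegral hNf hf₀ hf hr₀ (fun _ => ψ.nonneg) (fun _ => ψ.le_one) hψz

lemma eventually_mul_pow_le_measureReal_closedBall [IsFiniteMeasure τ] (h : GaussGreenOn A U τ N)
    (hA : MeasurableSet A) (hU : IsOpen U) (hN : ∀ y, ‖N y‖ ≤ 1) (hx : x ∈ U) (hv : ‖v‖ = 1)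
    (hb : HalfSpaceBlowup A x v) {c : ℝ} (hc : c < 2 ^ n) :
    ∀ᶠ r in 𝓝[>] (0 : ℝ), c * r ^ n ≤ τ.real (closedBall x r) := by
  filter_upwards [h.eventually_forall_mul_pow_le_setIntegral_closedBall hA hU hx hv hb hc]
    with r hr
  simpa using hr 1 (integrableOn_const (measure_ne_top _ _)) (fun _ => zero_le_one) fun y =>
    (real_inner_le_norm _ _).trans (by simpa [hv] using hN y)

lemma hausdorffMeasure_le [IsFiniteMeasure τ] (h : GaussGreenOn A U τ N) (hA : MeasurableSet A)
    (hU : IsOpen U) (hN : ∀ y, ‖N y‖ ≤ 1) {T : Set (Euc n)} (hT : T ⊆ redBdry A ∩ U) :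
    μH[(n : ℝ)] T ≤ τ T := by
  refine ENNReal.le_of_forall_lt_one_mul_le fun c hc => ?_
  lift c to NNReal using hc.ne_top
  refine mul_hausdorffMeasure_le_of_density ENNReal.coe_ne_top fun x hx δ hδ => ?_
  obtain ⟨⟨v, hv, hb⟩, hxU⟩ := hT hx
  have hc₁ : (c : ℝ) < 1 := by exact_mod_cast hc
  have hev := h.eventually_mul_pow_le_measureReal_closedBall hA hU hN hxU hv hb
    (mul_lt_of_lt_one_left (pow_pos two_pos n) hc₁)
  obtain ⟨r, hr, hrδ⟩ := (hev.and (Ioo_mem_nhdsGT hδ)).exists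
  refine ⟨r, hrδ, ?_⟩
  calc (c : ℝ≥0∞) * ENNReal.ofReal (2 * r) ^ n = ENNReal.ofReal (c * 2 ^ n * r ^ n) := by
        have := hrδ.1
        rw [mul_assoc, ENNReal.ofReal_mul c.coe_nonneg, ← mul_pow,
          ENNReal.ofReal_pow (by positivity), ENNReal.ofReal_coe_nnreal]
    _ ≤ τ (closedBall x r) := ENNReal.ofReal_le_of_le_toReal hr

end GaussGreenOn

end Density

section DefiningFunction

variable {n : ℕ} {Ω U : Set (Euc n)} {f : Euc n → ℝ} {x : Euc n}

lemma contDiff_gradient (hf : ContDiff ℝ 2 f) : ContDiff ℝ 1 (gradient f) :=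
  (InnerProductSpace.toDual ℝ (Euc n)).symm.contDiff.comp (hf.fderiv_right (by norm_num))

/-- The normalized gradient of `f`, which is the exterior unit normal of `{f < 0}` along the
regular part of `{f = 0}`; its value is `0` at critical points. -/
def unitGradient (f : Euc n → ℝ) (x : Euc n) : Euc n := ‖gradient f x‖⁻¹ • gradient f x

lemma norm_unitGradient (hx : gradient f x ≠ 0) : ‖unitGradient f x‖ = 1 := by
  rw [unitGradient, norm_smul, norm_inv, norm_norm, inv_mul_cancel₀ (norm_ne_zero_iff.2 hx)]

lemma norm_unitGradient_le_one (f : Euc n → ℝ) (x : Euc n) : ‖unitGradient f x‖ ≤ 1 := by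
  rw [unitGradient, norm_smul, norm_inv, norm_norm]
  exact inv_mul_le_one

lemma inner_unitGradient (f : Euc n → ℝ) (x y : Euc n) :
    ⟪y, unitGradient f x⟫ = ‖gradient f x‖⁻¹ * fderiv ℝ f x y := by
  rw [unitGradient, inner_smul_right, real_inner_comm, inner_gradient_left]

/-- `f` is a `C²` function describing `Ω` and its boundary inside the open set `U`. -/
structure IsDefiningFunction (Ω U : Set (Euc n)) (f : Euc n → ℝ) : Prop where
  isOpen : IsOpen U
  contDiff : ContDiff ℝ 2 f
  gradient_ne_zero : ∀ y ∈ U, gradient f y ≠ 0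
  inter_eq : Ω ∩ U = {y ∈ U | f y < 0}
  frontier_inter_eq : frontier Ω ∩ U = {y ∈ U | f y = 0}

namespace IsDefiningFunction

lemma mem_iff (h : IsDefiningFunction Ω U f) (hx : x ∈ U) : x ∈ Ω ↔ f x < 0 := by
  simpa [hx] using Set.ext_iff.1 h.inter_eq x

lemma mem_frontier_iff (h : IsDefiningFunction Ω U f) (hx : x ∈ U) : x ∈ frontier Ω ↔ f x = 0 := by
  simpa [hx] using Set.ext_iff.1 h.frontier_inter_eq x

lemma differentiable (h : IsDefiningFunction Ω U f) : Differentiable ℝ f :=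
  h.contDiff.differentiable two_ne_zero

end IsDefiningFunction

lemma ae_apply_ne_zero {E : Type*} [NormedAddCommGroup E] [NormedSpace ℝ E]
    [FiniteDimensional ℝ E] [MeasurableSpace E] [BorelSpace E] (μ : Measure E) [μ.IsAddHaarMeasure]
    {L : E →L[ℝ] ℝ} (hL : L ≠ 0) : ∀ᵐ y ∂μ, L y ≠ 0 := by
  have hker : L.ker ≠ ⊤ := fun h => hL (by ext y; exact (h ▸ trivial : y ∈ L.ker))
  exact measure_eq_zero_iff_ae_notMem.1 (Measure.addHaar_submodule μ _ hker)

lemma eventually_lt_zero_iff_fderiv_lt_zero {E : Type*} [NormedAddCommGroup E] [NormedSpace ℝ E]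
    {f : E → ℝ} {x y : E} (hf : DifferentiableAt ℝ f x) (h₀ : f x = 0)
    (hy : fderiv ℝ f x y ≠ 0) :
    ∀ᶠ r : ℝ in 𝓝[>] 0, f (x + r • y) < 0 ↔ fderiv ℝ f x y < 0 := by
  have hline : HasDerivAt (fun r : ℝ => x + r • y) y 0 := by
    simpa using ((hasDerivAt_id (0 : ℝ)).smul_const y).const_add x
  have hslope := ((show HasFDerivAt f (fderiv ℝ f x) (x + (0 : ℝ) • y) by
    simpa using hf.hasFDerivAt).comp_hasDerivAt 0 hline).tendsto_slope_zero_right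
  simp only [Function.comp_apply, zero_add, zero_smul, add_zero, h₀, sub_zero, smul_eq_mul]
    at hslope
  rcases hy.lt_or_gt with h | h
  · filter_upwards [hslope.eventually (gt_mem_nhds h), self_mem_nhdsWithin] with r hr hr₀
    exact iff_of_true ((pos_iff_neg_of_mul_neg hr).1 (inv_pos.2 hr₀)) h
  · filter_upwards [hslope.eventually (lt_mem_nhds h), self_mem_nhdsWithin] with r hr hr₀
    exact iff_of_false ((pos_iff_pos_of_mul_pos hr).1 (inv_pos.2 hr₀)).not_gt h.not_gt

lemma IsDefiningFunction.halfSpaceBlowup (h : IsDefiningFunction Ω U f) (hΩ : MeasurableSet Ω)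
    (hx : x ∈ U) (h₀ : f x = 0) : HalfSpaceBlowup Ω x (unitGradient f x) := by
  have hgrad := h.gradient_ne_zero x hx
  have hL : fderiv ℝ f x ≠ 0 := fun hL => hgrad (by simp [gradient, hL])
  have hlim := tendsto_measure_of_ae_tendsto_indicator (μ := (volume : Measure (Euc n)))
    (𝓝[>] (0 : ℝ)) (A := ∅)
    (As := fun r => {y ∈ ball 0 1 | ¬(x + r • y ∈ Ω ↔ ⟪y, unitGradient f x⟫ < 0)})
    MeasurableSet.empty (fun r => measurableSet_ball.inter
      (((show Measurable fun y : Euc n => x + r • y by fun_prop) hΩ).iff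
        (measurableSet_lt (by fun_prop) measurable_const)).compl)
    (B := ball 0 1) measurableSet_ball measure_ball_lt_top.ne (.of_forall fun r y hy => hy.1) ?_
  · simpa [HalfSpaceBlowup] using hlim
  filter_upwards [ae_apply_ne_zero volume hL] with y hy
  have hmem : ∀ᶠ r : ℝ in 𝓝[>] 0, x + r • y ∈ U := by
    have hcont : Continuous fun r : ℝ => x + r • y := by fun_prop
    exact (hcont.continuousAt.eventually_mem
      (h.isOpen.mem_nhds (by simpa using hx))).filter_mono nhdsWithin_le_nhds
  filter_upwards [hmem, eventually_lt_zero_iff_fderiv_lt_zero (h.differentiable x) h₀ hy]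
    with r hrU hr
  refine iff_of_false (fun hr' => hr'.2 ?_) (notMem_empty y)
  rw [h.mem_iff hrU, hr, inner_unitGradient, ← smul_eq_mul, smul_neg_iff_of_pos_left
    (inv_pos.2 (norm_pos_iff.2 hgrad))]

lemma IsDefiningFunction.mem_redBdry (h : IsDefiningFunction Ω U f) (hΩ : MeasurableSet Ω)
    (hx : x ∈ U) (hxΩ : x ∈ frontier Ω) : x ∈ redBdry Ω :=
  ⟨_, norm_unitGradient (h.gradient_ne_zero x hx),
    h.halfSpaceBlowup hΩ hx ((h.mem_frontier_iff hx).1 hxΩ)⟩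

end DefiningFunction

section Tangential

variable {n : ℕ} {Ω U : Set (Euc n)} {f : Euc n → ℝ} {T : Euc n → Euc n}

lemma integral_comp_mul_divg_eq_zero (hf : ContDiff ℝ 1 f) (hT : ContDiff ℝ 1 T)
    (hTc : HasCompactSupport T) (htan : ∀ x, fderiv ℝ f x (T x) = 0) {φ : ℝ → ℝ}
    (hφ : ContDiff ℝ 1 φ) : ∫ x, φ (f x) * divg T x = 0 := by
  have hφf : ContDiff ℝ 1 fun x => φ (f x) := hφ.comp hf
  rw [← integral_divg_eq_zero (hφf.smul hT) hTc.smul_left]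
  refine integral_congr_ae (.of_forall fun x => ?_)
  have hcomp : HasFDerivAt (fun x => φ (f x)) _ x :=
    (hφ.differentiable one_ne_zero _).hasDerivAt.comp_hasFDerivAt x
      (hf.differentiable one_ne_zero x).hasFDerivAt
  refine Eq.trans ?_ (divg_smul hcomp.differentiableAt (hT.differentiable one_ne_zero x)).symm
  rw [hcomp.fderiv, smul_apply, htan, smul_zero, add_zero]

lemma tendsto_smoothTransition_neg_natCast_mul (t : ℝ) :
    Tendsto (fun k : ℕ => Real.smoothTransition (-(k * t))) atTop
      (𝓝 ((Iio 0).indicator 1 t)) := by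
  by_cases ht : t < 0
  · rw [indicator_of_mem (mem_Iio.2 ht)]
    refine tendsto_const_nhds.congr' ?_
    filter_upwards [(tendsto_natCast_atTop_atTop.atTop_mul_const
      (neg_pos.2 ht)).eventually_ge_atTop 1] with k hk
    exact (Real.smoothTransition.one_of_one_le (by linarith)).symm
  · rw [indicator_of_notMem (mt mem_Iio.1 ht)]
    refine tendsto_const_nhds.congr fun k => (Real.smoothTransition.zero_of_nonpos ?_).symm
    exact neg_nonpos.2 (mul_nonneg k.cast_nonneg (not_lt.1 ht))

lemma IsDefiningFunction.setIntegral_divg_eq_zero (h : IsDefiningFunction Ω U f)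
    (hΩ : MeasurableSet Ω) (hT : ContDiff ℝ 1 T) (hTc : HasCompactSupport T)
    (hTU : tsupport T ⊆ U) (htan : ∀ x, ⟪gradient f x, T x⟫ = 0) : ∫ x in Ω, divg T x = 0 := by
  have hf : ContDiff ℝ 1 f := h.contDiff.of_le one_le_two
  have hzero : ∀ k : ℕ, ∫ x, Real.smoothTransition (-(k * f x)) * divg T x = 0 := fun k =>
    integral_comp_mul_divg_eq_zero hf hT hTc
      (fun x => (inner_gradient_left ..).symm.trans (htan x))
      (φ := fun t => Real.smoothTransition (-(k * t)))
      (Real.smoothTransition.contDiff.comp (by fun_prop))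
  have hcont := continuous_divg hT
  have hlim : Tendsto (fun k : ℕ => ∫ x, Real.smoothTransition (-(k * f x)) * divg T x) atTop
      (𝓝 (∫ x, Ω.indicator (divg T) x)) := by
    refine tendsto_integral_of_dominated_convergence (fun x => ‖divg T x‖)
      (fun k => ?_) (hcont.integrable_of_hasCompactSupport (hasCompactSupport_divg hTc)).norm
      (fun k => .of_forall fun x => ?_) (.of_forall fun x => ?_)
    · exact ((Real.smoothTransition.continuous.comp
        (continuous_const.mul hf.continuous).neg).mul hcont).aestronglyMeasurable
    · rw [norm_mul, Real.norm_of_nonneg (Real.smoothTransition.nonneg _)]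
      exact mul_le_of_le_one_left (norm_nonneg _) (Real.smoothTransition.le_one _)
    · by_cases hx : x ∈ tsupport T
      · have hind : Ω.indicator (divg T) x = (Iio 0).indicator 1 (f x) * divg T x := by
          classical simp [indicator_apply, h.mem_iff (hTU hx)]
        exact hind ▸ (tendsto_smoothTransition_neg_natCast_mul _).mul_const _
      · have hind : Ω.indicator (divg T) x = 0 := by
          classical simp [indicator_apply, divg_of_notMem_tsupport hx]
        simp [hind, divg_of_notMem_tsupport hx]
  simp only [hzero] at hlim
  rw [← integral_indicator hΩ]
  exact tendsto_nhds_unique hlim tendsto_const_nhds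

end Tangential

section GraphCylinder

variable {n : ℕ} {e x₀ : Euc n} {f : Euc n → ℝ} {C : HyperplaneCoords e}

lemma exists_measurable_implicit {Y : Type*} [MeasurableSpace Y] {F : Y → ℝ → ℝ} {B : Set Y}
    {a b : ℝ} (hF : ∀ t, Measurable fun y => F y t) (hB : MeasurableSet B) (hab : a ≤ b)
    (hcont : ∀ y ∈ B, ContinuousOn (F y) (Icc a b)) (hmono : ∀ y ∈ B, StrictMonoOn (F y) (Icc a b))
    (hneg : ∀ y ∈ B, F y a < 0) (hpos : ∀ y ∈ B, 0 < F y b) :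
    ∃ φ : Y → ℝ, Measurable φ ∧ ∀ y ∈ B, φ y ∈ Ioo a b ∧ F y (φ y) = 0 := by
  classical
  have hex : ∀ y, ∃ t, (y ∈ B → t ∈ Ioo a b ∧ F y t = 0) ∧ (y ∉ B → t = a) := fun y => by
    by_cases hy : y ∈ B
    · obtain ⟨t, ht, htF⟩ := intermediate_value_Ioo hab (hcont y hy) ⟨hneg y hy, hpos y hy⟩
      exact ⟨t, fun _ => ⟨ht, htF⟩, fun h => absurd hy h⟩
    · exact ⟨a, fun h => absurd h hy, fun _ => rfl⟩
  choose φ hφB hφa using hex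
  refine ⟨φ, measurable_of_Ioi fun t => ?_, hφB⟩
  rcases lt_or_ge t a with hta | hat
  · convert MeasurableSet.univ
    refine eq_univ_of_forall fun y => ?_
    by_cases hy : y ∈ B
    · exact hta.trans (hφB y hy).1.1
    · exact hta.trans_eq (hφa y hy).symm
  · convert hB.inter (measurableSet_lt (hF (min t b)) (measurable_const (a := (0 : ℝ)))) using 1
    ext y
    by_cases hy : y ∈ B
    · obtain ⟨hφ, hφ₀⟩ := hφB y hy
      have hlt := (hmono y hy).lt_iff_lt ⟨le_min hat hab, min_le_right _ _⟩ (Ioo_subset_Icc_self hφ)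
      rw [hφ₀, min_lt_iff, or_iff_left hφ.2.not_gt] at hlt
      simp [hy, hlt]
    · simp [hy, hφa y hy, hat]

lemma exists_measurable_implicit_ball {Y : Type*} [PseudoMetricSpace Y] [MeasurableSpace Y]
    [BorelSpace Y] {F : Y → ℝ → ℝ} {y₀ : Y} {r a : ℝ}
    (hF : Continuous (Function.uncurry F)) (hr : 0 < r) (ha : 0 < a) (h₀ : F y₀ 0 = 0)
    (hmono : ∀ y ∈ ball y₀ r, StrictMonoOn (F y) (Icc (-a) a)) :
    ∃ ρ, 0 < ρ ∧ ρ ≤ r ∧ ∃ φ : Y → ℝ, Measurable φ ∧ ∀ y ∈ ball y₀ ρ,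
      |φ y| < a ∧ F y (φ y) = 0 ∧ ∀ t, |t| < a → (F y t < 0 ↔ t < φ y) := by
  have hmono₀ := hmono y₀ (mem_ball_self hr)
  have hends : ∀ᶠ y in 𝓝 y₀, F y (-a) < 0 ∧ 0 < F y a := by
    refine (ContinuousAt.eventually_lt (by fun_prop) continuousAt_const ?_).and
      (ContinuousAt.eventually_lt continuousAt_const (by fun_prop) ?_)
    · exact h₀ ▸ hmono₀ (by simp [ha.le]) (by simp [ha.le]) (neg_neg_of_pos ha)
    · exact h₀ ▸ hmono₀ (by simp [ha.le]) (by simp [ha.le]) ha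
  obtain ⟨ρ, hρ, hρF⟩ := Metric.eventually_nhds_iff_ball.1 hends
  have hsub : ball y₀ (min ρ r) ⊆ ball y₀ ρ := ball_subset_ball (min_le_left _ _)
  have hmono' : ∀ y ∈ ball y₀ (min ρ r), StrictMonoOn (F y) (Icc (-a) a) := fun y hy =>
    hmono y (ball_subset_ball (min_le_right _ _) hy)
  obtain ⟨φ, hφm, hφ⟩ := exists_measurable_implicit (F := F) (B := ball y₀ (min ρ r))
    (fun t => Continuous.measurable (by fun_prop)) measurableSet_ball (by linarith : -a ≤ a)
    (fun y _ => Continuous.continuousOn (by fun_prop)) hmono'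
    (fun y hy => (hρF y (hsub hy)).1) (fun y hy => (hρF y (hsub hy)).2)
  refine ⟨min ρ r, lt_min hρ hr, min_le_right _ _, φ, hφm, fun y hy =>
    ⟨abs_lt.2 (hφ y hy).1, (hφ y hy).2, fun t ht => ?_⟩⟩
  rw [← (hφ y hy).2]
  exact (hmono' y hy).lt_iff_lt (Ioo_subset_Icc_self (abs_lt.1 ht))
    (Ioo_subset_Icc_self (hφ y hy).1)

/-- A cylinder around `x₀` with axis `e`, of radius `radius` and half height `halfHeight`, in which
`{f < 0}` is the subgraph in direction `e` of the function `height`. -/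
structure GraphCylinder (f : Euc n → ℝ) (C : HyperplaneCoords e) (x₀ : Euc n) where
  halfHeight : ℝ
  radius : ℝ
  height : EuclideanSpace ℝ (Fin n) → ℝ
  halfHeight_pos : 0 < halfHeight
  radius_pos : 0 < radius
  measurable_height : Measurable height
  abs_height_lt : ∀ y ∈ ball 0 radius, |height y| < halfHeight
  apply_height : ∀ y ∈ ball 0 radius, f (x₀ + (height y • e + C.embed y)) = 0
  lt_zero_iff : ∀ y ∈ ball 0 radius, ∀ t, |t| < halfHeight →
    (f (x₀ + (t • e + C.embed y)) < 0 ↔ t < height y)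

namespace GraphCylinder

variable (Q : GraphCylinder f C x₀)

/-- The open solid cylinder underlying a `GraphCylinder`. -/
def carrier : Set (Euc n) := {z | |⟪z - x₀, e⟫| < Q.halfHeight ∧ ‖C.proj (z - x₀)‖ < Q.radius}

lemma isOpen_carrier : IsOpen Q.carrier :=
  (isOpen_lt (f := fun z => |⟪z - x₀, e⟫|) (by fun_prop) continuous_const).inter
    (isOpen_lt (f := fun z => ‖C.proj (z - x₀)‖) (by fun_prop) continuous_const)

lemma center_mem : x₀ ∈ Q.carrier := by
  simp [carrier, Q.halfHeight_pos, Q.radius_pos]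

lemma add_mem_carrier_iff {t : ℝ} {y : EuclideanSpace ℝ (Fin n)} :
    x₀ + (t • e + C.embed y) ∈ Q.carrier ↔ |t| < Q.halfHeight ∧ y ∈ ball 0 Q.radius := by
  rw [carrier, mem_ofPred_eq, add_sub_cancel_left, C.inner_smul_add_embed, C.proj_smul_add_embed,
    mem_ball_zero_iff]

/-- The parametrization of `{f = 0}` inside the cylinder by the base ball. -/
def param (y : EuclideanSpace ℝ (Fin n)) : Euc n := x₀ + (Q.height y • e + C.embed y)

lemma measurable_param : Measurable Q.param :=
  ((Q.measurable_height.smul_const e).add C.embed.continuous.measurable).const_add x₀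

lemma param_mem_carrier {y : EuclideanSpace ℝ (Fin n)} (hy : y ∈ ball 0 Q.radius) :
    Q.param y ∈ Q.carrier :=
  Q.add_mem_carrier_iff.2 ⟨Q.abs_height_lt y hy, hy⟩

end GraphCylinder

lemma HyperplaneCoords.norm_smul_add_embed_le (C : HyperplaneCoords e) (t : ℝ)
    (y : EuclideanSpace ℝ (Fin n)) : ‖t • e + C.embed y‖ ≤ |t| + ‖y‖ := by
  refine (norm_add_le _ _).trans_eq ?_
  rw [norm_smul, C.norm_eq_one, mul_one, Real.norm_eq_abs, C.embed.norm_map]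

lemma strictMonoOn_line {s : Set ℝ} (hs : Convex ℝ s) (hf : Differentiable ℝ f) {p : Euc n}
    (hpos : ∀ t ∈ s, 0 < ⟪gradient f (p + t • e), e⟫) :
    StrictMonoOn (fun t => f (p + t • e)) s := by
  have hderiv : ∀ t, HasDerivAt (fun t : ℝ => f (p + t • e)) ⟪gradient f (p + t • e), e⟫ t :=
    fun t => by
      have hline : HasDerivAt (fun t : ℝ => p + t • e) e t := by
        simpa using ((hasDerivAt_id t).smul_const e).const_add p
      rw [inner_gradient_left]
      exact (hf _).hasFDerivAt.comp_hasDerivAt t hline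
  refine strictMonoOn_of_deriv_pos hs (fun t _ => (hderiv t).continuousAt.continuousWithinAt)
    fun t ht => ?_
  rw [(hderiv t).deriv]
  exact hpos t (interior_subset ht)

lemma exists_graphCylinder (C : HyperplaneCoords e) (hf : ContDiff ℝ 1 f) (h₀ : f x₀ = 0)
    {V : Set (Euc n)} (hV : V ∈ 𝓝 x₀) (hpos : ∀ z ∈ V, 0 < ⟪gradient f z, e⟫) :
    ∃ Q : GraphCylinder f C x₀, Q.carrier ⊆ V := by
  obtain ⟨R, hR, hRV⟩ := Metric.mem_nhds_iff.1 hV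
  obtain ⟨a, ha, haR⟩ : ∃ a : ℝ, 0 < a ∧ a + a = R := ⟨R / 2, by positivity, add_halves R⟩
  let F := fun (y : EuclideanSpace ℝ (Fin n)) (t : ℝ) => f (x₀ + (t • e + C.embed y))
  have hcontF : Continuous (Function.uncurry F) := by
    have hf := hf.continuous
    have hC := C.embed.continuous
    unfold F Function.uncurry
    fun_prop
  have hball : ∀ t y, |t| ≤ a → ‖y‖ < a → x₀ + (t • e + C.embed y) ∈ V := fun t y ht hy => by
    refine hRV ?_
    rw [mem_ball, dist_eq_norm, add_sub_cancel_left]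
    exact (C.norm_smul_add_embed_le t y).trans_lt (by linarith)
  have hmono : ∀ y ∈ ball 0 a, StrictMonoOn (F y) (Icc (-a) a) := fun y hy => by
    have hline : ∀ t : ℝ, x₀ + (t • e + C.embed y) = x₀ + C.embed y + t • e := fun t => by abel
    simp only [F, hline]
    refine strictMonoOn_line (convex_Icc _ _) (hf.differentiable one_ne_zero) fun t ht => ?_
    rw [← hline]
    exact hpos _ (hball t y (abs_le.2 ht) (mem_ball_zero_iff.1 hy))
  obtain ⟨ρ, hρ, hρa, φ, hφm, hφ⟩ := exists_measurable_implicit_ball hcontF ha ha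
    (by simp [F, h₀]) hmono
  refine ⟨⟨a, ρ, φ, ha, hρ, hφm, fun y hy => (hφ y hy).1, fun y hy => (hφ y hy).2.1,
    fun y hy => (hφ y hy).2.2⟩, fun z hz => ?_⟩
  have hball' := hball _ (C.proj (z - x₀)) hz.1.le (hz.2.trans_le hρa)
  rwa [C.inner_smul_add_embed_proj, add_sub_cancel] at hball'

end GraphCylinder

section AreaMeasure

variable {n : ℕ} {Ω U : Set (Euc n)} {e x₀ : Euc n} {f : Euc n → ℝ} {C : HyperplaneCoords e}

namespace GraphCylinder

variable (Q : GraphCylinder f C x₀)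

/-- The Lebesgue measure of the base ball, normalized as `μH[n]` and lifted to the graph. -/
def baseMeasure : Measure (Euc n) :=
  hausdorffScale n • (volume.restrict (ball 0 Q.radius)).map Q.param

instance : IsFiniteMeasure Q.baseMeasure := by
  have : IsFiniteMeasure ((volume : Measure (EuclideanSpace ℝ (Fin n))).restrict
      (ball 0 Q.radius)) := ⟨by simpa using measure_ball_lt_top⟩
  unfold baseMeasure
  infer_instance

lemma ae_mem_carrier : ∀ᵐ x ∂Q.baseMeasure, x ∈ Q.carrier := by
  refine Measure.ae_smul_measure ?_ _
  refine (ae_map_iff Q.measurable_param.aemeasurable Q.isOpen_carrier.measurableSet).2 ?_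
  filter_upwards [ae_restrict_mem measurableSet_ball] with y hy using Q.param_mem_carrier hy

lemma integral_baseMeasure {w : Euc n → ℝ} (hw : Continuous w) :
    ∫ x, w x ∂Q.baseMeasure = hausdorffScale n * ∫ y in ball 0 Q.radius, w (Q.param y) := by
  rw [baseMeasure, integral_smul_nnreal_measure,
    integral_map Q.measurable_param.aemeasurable hw.aestronglyMeasurable]
  rfl

lemma baseMeasure_le (h : IsDefiningFunction Ω U f) (hQ : Q.carrier ⊆ U) :
    Q.baseMeasure ≤ μH[(n : ℝ)].restrict (frontier Ω ∩ Q.carrier) := by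
  refine Measure.le_iff.2 fun E hE => ?_
  have hlip : LipschitzWith 1 fun z => C.proj (z - x₀) :=
    LipschitzWith.of_dist_le_mul fun z w => by
      simpa using C.lipschitzWith_proj.dist_le_mul (z - x₀) (w - x₀)
  have himage := hlip.hausdorffMeasure_image_le (d := (n : ℝ)) n.cast_nonneg
    (E ∩ (frontier Ω ∩ Q.carrier))
  rw [ENNReal.coe_one, ENNReal.one_rpow, one_mul] at himage
  calc Q.baseMeasure E = μH[(n : ℝ)] (Q.param ⁻¹' E ∩ ball 0 Q.radius) := by
        rw [baseMeasure, Measure.smul_apply, Measure.map_apply Q.measurable_param hE,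
          Measure.restrict_apply (Q.measurable_param hE), hausdorffMeasure_eq_hausdorffScale_smul]
        rfl
    _ ≤ μH[(n : ℝ)] ((fun z => C.proj (z - x₀)) '' (E ∩ (frontier Ω ∩ Q.carrier))) := by
        refine measure_mono fun y ⟨hyE, hy⟩ => ⟨Q.param y, ⟨hyE, ?_, Q.param_mem_carrier hy⟩, ?_⟩
        · exact (h.mem_frontier_iff (hQ (Q.param_mem_carrier hy))).2 (Q.apply_height y hy)
        · change C.proj (x₀ + (Q.height y • e + C.embed y) - x₀) = y
          rw [add_sub_cancel_left, C.proj_smul_add_embed]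
    _ ≤ μH[(n : ℝ)] (E ∩ (frontier Ω ∩ Q.carrier)) := himage
    _ = _ := (Measure.restrict_apply hE).symm

lemma setIntegral_fderiv (h : IsDefiningFunction Ω U f) (hΩ : MeasurableSet Ω)
    (hQ : Q.carrier ⊆ U) {w : Euc n → ℝ} (hw : ContDiff ℝ 1 w) (hwc : HasCompactSupport w)
    (hwQ : tsupport w ⊆ Q.carrier) :
    hausdorffScale n * ∫ x in Ω, fderiv ℝ w x e = ∫ x, w x ∂Q.baseMeasure := by
  have hcarrier : ∀ z, fderiv ℝ w z e ≠ 0 → z ∈ Q.carrier := fun z hz => by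
    refine hwQ (tsupport_fderiv_subset ℝ (by_contra fun hzn => hz ?_))
    rw [image_eq_zero_of_notMem_tsupport hzn, zero_apply]
  rw [Q.integral_baseMeasure hw.continuous]
  congr 1
  refine C.setIntegral_fderiv_subgraph x₀ hw hwc hΩ measurableSet_ball Q.height
    (fun y hy t ht => ?_) fun y hy t => by_contra fun ht => ?_
  · have hmem := hcarrier _ ht
    rw [h.mem_iff (hQ hmem), Q.lt_zero_iff y hy t (Q.add_mem_carrier_iff.1 hmem).1]
  · exact hy (Q.add_mem_carrier_iff.1 (hcarrier _ ht)).2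

end GraphCylinder

lemma contDiff_of_forall_mem_tsupport {E F : Type*} [NormedAddCommGroup E] [NormedSpace ℝ E]
    [NormedAddCommGroup F] [NormedSpace ℝ F] {k : WithTop ℕ∞} {g : E → F}
    (hg : ∀ x ∈ tsupport g, ContDiffAt ℝ k g x) : ContDiff ℝ k g :=
  contMDiff_iff_contDiff.1 (contMDiff_of_tsupport fun x hx => (hg x hx).contMDiffAt)

/-- The component of `X` along `e` when `X` is decomposed into a multiple of `e` and a field tangent
to the level sets of `f`. -/
def transversePart (f : Euc n → ℝ) (e : Euc n) (X : Euc n → Euc n) (x : Euc n) : ℝ :=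
  ⟪X x, gradient f x⟫ / ⟪gradient f x, e⟫

lemma tsupport_transversePart_subset (f : Euc n → ℝ) (e : Euc n) (X : Euc n → Euc n) :
    tsupport (transversePart f e X) ⊆ tsupport X := by
  refine closure_mono fun x hx hX => hx ?_
  rw [transversePart, hX, inner_zero_left, zero_div]

lemma contDiff_transversePart {X : Euc n → Euc n} (hf : ContDiff ℝ 2 f) (hX : ContDiff ℝ 1 X)
    (hne : ∀ x ∈ tsupport X, ⟪gradient f x, e⟫ ≠ 0) : ContDiff ℝ 1 (transversePart f e X) := by
  have hgrad := contDiff_gradient hf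
  exact contDiff_of_forall_mem_tsupport fun x hx =>
    (hX.contDiffAt.inner ℝ hgrad.contDiffAt).div (hgrad.contDiffAt.inner ℝ contDiffAt_const)
      (hne x (tsupport_transversePart_subset f e X hx))

/-- The tangential remainder `X - w • e` does not contribute to the flux, and the flux of `w • e` is
computed by Fubini along `e`. -/
lemma GraphCylinder.setIntegral_divg (Q : GraphCylinder f C x₀) (h : IsDefiningFunction Ω U f)
    (hΩ : MeasurableSet Ω) (hQ : Q.carrier ⊆ U) (hpos : ∀ z ∈ Q.carrier, 0 < ⟪gradient f z, e⟫)
    {X : Euc n → Euc n} (hX : ContDiff ℝ 1 X) (hXc : HasCompactSupport X)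
    (hXQ : tsupport X ⊆ Q.carrier) :
    hausdorffScale n * ∫ x in Ω, divg X x = ∫ x, transversePart f e X x ∂Q.baseMeasure := by
  have hne : ∀ x ∈ tsupport X, ⟪gradient f x, e⟫ ≠ 0 := fun x hx => (hpos x (hXQ hx)).ne'
  have hw := contDiff_transversePart h.contDiff hX hne
  have hwX := tsupport_transversePart_subset f e X
  set w := transversePart f e X with hwdef
  have hwc : HasCompactSupport w := hXc.mono' ((subset_tsupport w).trans hwX)
  set T : Euc n → Euc n := fun x => X x - w x • e with hTdef
  have hT : ContDiff ℝ 1 T := hX.sub (hw.smul contDiff_const)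
  have hTX : Function.support T ⊆ tsupport X := fun x hx => by_contra fun hxX => hx <| by
    rw [hTdef]
    simp only
    rw [image_eq_zero_of_notMem_tsupport hxX, image_eq_zero_of_notMem_tsupport (mt (hwX ·) hxX),
      zero_smul, sub_zero]
  have hTc : HasCompactSupport T := hXc.mono' hTX
  have htan : ∀ x, ⟪gradient f x, T x⟫ = 0 := fun x => by
    by_cases hx : x ∈ tsupport X
    · rw [hTdef, inner_sub_right, inner_smul_right, hwdef, transversePart,
        div_mul_cancel₀ _ (hne x hx), real_inner_comm, sub_self]
    · rw [Function.notMem_support.1 (mt (hTX ·) hx), inner_zero_right]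
  have hsplit : divg X = fun x => fderiv ℝ w x e + divg T x := by
    funext x
    have hwx := hw.differentiable one_ne_zero x
    rw [← divg_smul_const e hwx, ← divg_add (hwx.smul_const e) (hT.differentiable one_ne_zero x)]
    simp [hTdef]
  have hint : Integrable fun x => fderiv ℝ w x e :=
    ((hw.continuous_fderiv one_ne_zero).clm_apply continuous_const).integrable_of_hasCompactSupport
      (hwc.fderiv_apply ℝ e)
  have hintT : Integrable (divg T) := integrable_divg hT hTc
  rw [← Q.setIntegral_fderiv h hΩ hQ hw hwc (hwX.trans hXQ), hsplit,
    integral_add hint.integrableOn hintT.integrableOn, h.setIntegral_divg_eq_zero hΩ hT hTc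
      ((closure_minimal hTX (isClosed_tsupport X)).trans (hXQ.trans hQ)) htan, add_zero]

lemma GraphCylinder.hausdorffMeasure_restrict_le (Q : GraphCylinder f C x₀)
    (h : IsDefiningFunction Ω U f) (hΩ : MeasurableSet Ω) (hQ : Q.carrier ⊆ U) {q : ℝ} (hq : 0 < q)
    (hpos : ∀ z ∈ Q.carrier, 0 < ⟪gradient f z, e⟫)
    (hle : ∀ z ∈ Q.carrier, ‖gradient f z‖ ≤ q * ⟪gradient f z, e⟫) :
    μH[(n : ℝ)].restrict (frontier Ω ∩ Q.carrier) ≤ ENNReal.ofReal q • Q.baseMeasure := by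
  have : IsFiniteMeasure (ENNReal.ofReal q • Q.baseMeasure) :=
    Q.baseMeasure.smul_finite ENNReal.ofReal_ne_top
  set N := Q.carrier.indicator fun x => (q * ⟪gradient f x, e⟫)⁻¹ • gradient f x with hN
  have hNle : ∀ x, ‖N x‖ ≤ 1 := fun x => by
    by_cases hx : x ∈ Q.carrier
    · have hqx : 0 < q * ⟪gradient f x, e⟫ := mul_pos hq (hpos x hx)
      rw [hN, indicator_of_mem hx, norm_smul, norm_inv, Real.norm_of_nonneg hqx.le,
        inv_mul_le_iff₀ hqx, mul_one]
      exact hle x hx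
    · rw [hN, indicator_of_notMem hx, norm_zero]
      exact zero_le_one
  have hGG : GaussGreenOn Ω Q.carrier (ENNReal.ofReal q • Q.baseMeasure) N := by
    intro X hX hXc hXQ
    rw [Q.setIntegral_divg h hΩ hQ hpos (hX.of_le (by exact_mod_cast le_top)) hXc hXQ,
      integral_smul_measure, ENNReal.toReal_ofReal hq.le, smul_eq_mul, ← integral_const_mul]
    refine integral_congr_ae ?_
    filter_upwards [Q.ae_mem_carrier] with x hx
    rw [hN, indicator_of_mem hx, inner_smul_right, transversePart]
    field
  refine Measure.le_iff.2 fun E hE => ?_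
  rw [Measure.restrict_apply hE]
  refine (hGG.hausdorffMeasure_le hΩ Q.isOpen_carrier hNle ?_).trans
    (measure_mono inter_subset_left)
  exact fun x hx => ⟨h.mem_redBdry hΩ (hQ hx.2.2) hx.2.1, hx.2.2⟩

end AreaMeasure

section LocalGaussGreen

lemma abs_integral_sub_integral_le_of_measure_le {α : Type*} [MeasurableSpace α] {m σ : Measure α}
    {q : ℝ} (hq : 1 ≤ q) (hmσ : m ≤ σ) (hσm : σ ≤ ENNReal.ofReal q • m) {g h b : α → ℝ}
    (hb : Integrable b σ) (hh : AEStronglyMeasurable h σ) (hg : AEStronglyMeasurable g m)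
    (hhb : ∀ᵐ x ∂σ, |h x| ≤ b x) (hgh : ∀ᵐ x ∂m, |g x - h x| ≤ (q - 1) * b x) :
    |∫ x, g x ∂m - ∫ x, h x ∂σ| ≤ 2 * (q - 1) * ∫ x, b x ∂σ := by
  have hhi : Integrable h σ := hb.mono' hh hhb
  have hbm := hb.mono_measure hmσ
  have hhm := hhi.mono_measure hmσ
  have hdiff : Integrable (fun x => g x - h x) m := (hbm.const_mul _).mono' (hg.sub hhm.1) hgh
  have hgi : Integrable g m := (hdiff.add hhm).congr (.of_forall fun x => sub_add_cancel _ _)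
  have hb₀ : 0 ≤ᵐ[σ] b := hhb.mono fun x hx => (abs_nonneg _).trans hx
  have hgh_int : |∫ x, g x ∂m - ∫ x, h x ∂m| ≤ (q - 1) * ∫ x, b x ∂m := by
    rw [← integral_sub hgi hhm, ← integral_const_mul]
    exact norm_integral_le_of_norm_le (f := fun x => g x - h x) (hbm.const_mul _) hgh
  have hsub : ∫ x, b x ∂m - ∫ x, h x ∂m ≤ ∫ x, b x ∂σ - ∫ x, h x ∂σ := by
    rw [← integral_sub hbm hhm, ← integral_sub hb hhi]
    exact integral_mono_measure hmσ
      (hhb.mono fun x hx => sub_nonneg.2 ((le_abs_self _).trans hx)) (hb.sub hhi)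
  have hadd : ∫ x, b x ∂m + ∫ x, h x ∂m ≤ ∫ x, b x ∂σ + ∫ x, h x ∂σ := by
    rw [← integral_add hbm hhm, ← integral_add hb hhi]
    exact integral_mono_measure hmσ
      (hhb.mono fun x hx => neg_le_iff_add_nonneg.1 ((neg_le_abs _).trans hx)) (hb.add hhi)
  have hσ_le : ∫ x, b x ∂σ ≤ q * ∫ x, b x ∂m := by
    have hmono := integral_mono_measure hσm
      (Measure.ae_smul_measure (hb₀.filter_mono (ae_mono hmσ)) _)
      (hbm.smul_measure ENNReal.ofReal_ne_top)
    rwa [integral_smul_measure, ENNReal.toReal_ofReal (by linarith), smul_eq_mul] at hmono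
  have hm_le : (q - 1) * ∫ x, b x ∂m ≤ (q - 1) * ∫ x, b x ∂σ :=
    mul_le_mul_of_nonneg_left (integral_mono_measure hmσ hb₀ hb) (by linarith)
  rw [abs_le] at hgh_int ⊢
  constructor <;> linarith

variable {n : ℕ} {Ω U : Set (Euc n)} {e x₀ : Euc n} {f : Euc n → ℝ} {C : HyperplaneCoords e}
  {q : ℝ}

lemma eventually_norm_gradient_lt_mul_inner (hf : ContDiff ℝ 1 f) (hx₀ : gradient f x₀ ≠ 0)
    (hq : 1 < q) :
    ∀ᶠ z in 𝓝 x₀, ‖gradient f z‖ < q * ⟪gradient f z, unitGradient f x₀⟫ := by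
  have hgrad : Continuous (gradient f) :=
    (InnerProductSpace.toDual ℝ (Euc n)).symm.continuous.comp (hf.continuous_fderiv one_ne_zero)
  refine ContinuousAt.eventually_lt hgrad.norm.continuousAt (by fun_prop) ?_
  have hinner : ⟪gradient f x₀, unitGradient f x₀⟫ = ‖gradient f x₀‖ := by
    rw [unitGradient, inner_smul_right, real_inner_self_eq_norm_mul_norm,
      inv_mul_cancel_left₀ (norm_ne_zero_iff.2 hx₀)]
  rw [hinner]
  exact lt_mul_of_one_lt_left (norm_pos_iff.2 hx₀) hq

lemma IsDefiningFunction.exists_graphCylinder (h : IsDefiningFunction Ω U f) (hx₀ : x₀ ∈ U)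
    (h₀ : f x₀ = 0) (hq : 1 < q) :
    ∃ (e : Euc n) (C : HyperplaneCoords e) (Q : GraphCylinder f C x₀), Q.carrier ⊆ U ∧
      ∀ z ∈ Q.carrier, ‖gradient f z‖ ≤ q * ⟪gradient f z, e⟫ := by
  have hgrad := h.gradient_ne_zero x₀ hx₀
  have hf : ContDiff ℝ 1 f := h.contDiff.of_le one_le_two
  obtain ⟨C⟩ := HyperplaneCoords.nonempty_of_norm_eq_one (norm_unitGradient hgrad)
  obtain ⟨Q, hQ⟩ := _root_.exists_graphCylinder C hf h₀
    ((eventually_norm_gradient_lt_mul_inner hf hgrad hq).and (h.isOpen.mem_nhds hx₀))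
    fun z hz => pos_of_mul_pos_right ((norm_nonneg _).trans_lt hz.1) (by linarith)
  exact ⟨_, C, Q, fun z hz => (hQ hz).2, fun z hz => (hQ hz).1.le⟩

lemma IsDefiningFunction.inner_gradient_pos (h : IsDefiningFunction Ω U f) {x : Euc n} (hx : x ∈ U)
    (hq : 0 < q) (hle : ‖gradient f x‖ ≤ q * ⟪gradient f x, e⟫) : 0 < ⟪gradient f x, e⟫ :=
  pos_of_mul_pos_right ((norm_pos_iff.2 (h.gradient_ne_zero x hx)).trans_le hle) hq.le

lemma abs_transversePart_sub_le {X : Euc n → Euc n} {x : Euc n} (he : ‖e‖ = 1)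
    (hpos : 0 < ⟪gradient f x, e⟫) (hle : ‖gradient f x‖ ≤ q * ⟪gradient f x, e⟫) :
    |transversePart f e X x - ⟪X x, unitGradient f x⟫| ≤ (q - 1) * ‖X x‖ := by
  have hinner : ⟪gradient f x, e⟫ ≤ ‖gradient f x‖ := by
    simpa [he] using real_inner_le_norm (gradient f x) e
  have hnorm : 0 < ‖gradient f x‖ := hpos.trans_le hinner
  have hcoeff : 0 ≤ ⟪gradient f x, e⟫⁻¹ - ‖gradient f x‖⁻¹ :=
    sub_nonneg.2 (inv_anti₀ hpos hinner)
  calc |transversePart f e X x - ⟪X x, unitGradient f x⟫|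
      = (⟪gradient f x, e⟫⁻¹ - ‖gradient f x‖⁻¹) * |⟪X x, gradient f x⟫| := by
        rw [transversePart, unitGradient, inner_smul_right, div_eq_inv_mul, ← sub_mul, abs_mul,
          abs_of_nonneg hcoeff]
    _ ≤ (⟪gradient f x, e⟫⁻¹ - ‖gradient f x‖⁻¹) * (‖X x‖ * ‖gradient f x‖) := by
        gcongr
        exact abs_real_inner_le_norm _ _
    _ = (‖gradient f x‖ / ⟪gradient f x, e⟫ - 1) * ‖X x‖ := by field
    _ ≤ (q - 1) * ‖X x‖ := by
        gcongr
        exact (div_le_iff₀ hpos).2 hle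

lemma abs_inner_unitGradient_le (f : Euc n → ℝ) (x y : Euc n) :
    |⟪y, unitGradient f x⟫| ≤ ‖y‖ :=
  (abs_real_inner_le_norm _ _).trans
    (mul_le_of_le_one_right (norm_nonneg _) (norm_unitGradient_le_one f x))

lemma GraphCylinder.abs_setIntegral_divg_sub_le (Q : GraphCylinder f C x₀)
    (h : IsDefiningFunction Ω U f) (hΩ : MeasurableSet Ω) (hQ : Q.carrier ⊆ U) (hq : 1 < q)
    (hle : ∀ z ∈ Q.carrier, ‖gradient f z‖ ≤ q * ⟪gradient f z, e⟫) {X : Euc n → Euc n}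
    (hX : ContDiff ℝ 1 X) (hXc : HasCompactSupport X) (hXQ : tsupport X ⊆ Q.carrier) :
    |hausdorffScale n * (∫ x in Ω, divg X x)
        - ∫ x in frontier Ω, ⟪X x, unitGradient f x⟫ ∂μH[(n : ℝ)]|
      ≤ 2 * (q - 1) * ∫ x in frontier Ω, ‖X x‖ ∂μH[(n : ℝ)] := by
  have hq₀ : 0 < q := by linarith
  have hpos : ∀ z ∈ Q.carrier, 0 < ⟪gradient f z, e⟫ := fun z hz =>
    h.inner_gradient_pos (hQ hz) hq₀ (hle z hz)
  have hrestrict : ∀ g : Euc n → ℝ, (∀ x, X x = 0 → g x = 0) → ∫ x in frontier Ω, g x ∂μH[(n : ℝ)] =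
      ∫ x in frontier Ω ∩ Q.carrier, g x ∂μH[(n : ℝ)] := fun g hg =>
    (setIntegral_eq_of_subset_of_forall_sdiff_eq_zero isClosed_frontier.measurableSet
      inter_subset_left fun x hx => hg x (image_eq_zero_of_notMem_tsupport
        fun hxX => hx.2 ⟨hx.1, hXQ hxX⟩))
  rw [hrestrict _ fun x hx => by rw [hx, inner_zero_left],
    hrestrict _ fun x hx => by rw [hx, norm_zero], Q.setIntegral_divg h hΩ hQ hpos hX hXc hXQ]
  have hσm := Q.hausdorffMeasure_restrict_le h hΩ hQ hq₀ hpos hle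
  have : IsFiniteMeasure (ENNReal.ofReal q • Q.baseMeasure) :=
    Q.baseMeasure.smul_finite ENNReal.ofReal_ne_top
  have : IsFiniteMeasure (μH[(n : ℝ)].restrict (frontier Ω ∩ Q.carrier)) :=
    isFiniteMeasure_of_le _ hσm
  have hgrad := (contDiff_gradient h.contDiff).continuous.measurable
  have hXm := hX.continuous.measurable
  refine abs_integral_sub_integral_le_of_measure_le hq.le (Q.baseMeasure_le h hQ) hσm
    (hX.continuous.integrable_of_hasCompactSupport hXc).norm
    (hXm.inner (hgrad.norm.inv.smul hgrad)).aestronglyMeasurable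
    ((hXm.inner hgrad).div (hgrad.inner measurable_const)).aestronglyMeasurable
    (.of_forall fun x => abs_inner_unitGradient_le f x _) ?_
  filter_upwards [Q.ae_mem_carrier] with x hx
  exact abs_transversePart_sub_le C.norm_eq_one (hpos x hx) (hle x hx)

lemma GraphCylinder.hausdorffMeasure_frontier_inter_lt_top (Q : GraphCylinder f C x₀)
    (h : IsDefiningFunction Ω U f) (hΩ : MeasurableSet Ω) (hQ : Q.carrier ⊆ U) (hq : 0 < q)
    (hle : ∀ z ∈ Q.carrier, ‖gradient f z‖ ≤ q * ⟪gradient f z, e⟫) :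
    μH[(n : ℝ)] (frontier Ω ∩ Q.carrier) < ⊤ := by
  have hpos : ∀ z ∈ Q.carrier, 0 < ⟪gradient f z, e⟫ := fun z hz =>
    h.inner_gradient_pos (hQ hz) hq (hle z hz)
  have huniv := Q.hausdorffMeasure_restrict_le h hΩ hQ hq hpos hle univ
  rw [Measure.restrict_apply_univ] at huniv
  exact huniv.trans_lt (ENNReal.mul_lt_top ENNReal.ofReal_lt_top (measure_lt_top _ _))

end LocalGaussGreen

section Decomposition

lemma exists_sum_eq_of_isOpen_cover {E F : Type*} [NormedAddCommGroup E] [NormedSpace ℝ E]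
    [FiniteDimensional ℝ E] [NormedAddCommGroup F] [NormedSpace ℝ F] {k : WithTop ℕ∞}
    (hk : k ≤ (⊤ : ℕ∞)) {X : E → F} (hX : ContDiff ℝ k X) (hXc : HasCompactSupport X)
    {V : E → Set E} (hV : ∀ x, IsOpen (V x)) (hmem : ∀ x, x ∈ V x) :
    ∃ (s : Finset E) (Y : E → E → F), (∀ i, ContDiff ℝ k (Y i)) ∧ (∀ i, HasCompactSupport (Y i)) ∧
      (∀ i, tsupport (Y i) ⊆ V i) ∧ (∀ x, X x = ∑ i ∈ s, Y i x) ∧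
      ∀ x, ‖X x‖ = ∑ i ∈ s, ‖Y i x‖ := by
  obtain ⟨χ, hχ⟩ := SmoothPartitionOfUnity.exists_isSubordinate (modelWithCornersSelf ℝ E)
    (isClosed_tsupport X) V hV fun x _ => mem_iUnion.2 ⟨x, hmem x⟩
  have hfin := χ.locallyFinite.finite_nonempty_inter_compact hXc
  have hsum : ∀ x ∈ tsupport X, ∑ i ∈ hfin.toFinset, χ i x = 1 := fun x hx => by
    rw [← χ.sum_eq_one hx]
    exact (finsum_eq_sum_of_support_subset _ fun i hi => hfin.mem_toFinset.2 ⟨x, hi, hx⟩).symm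
  refine ⟨hfin.toFinset, fun i x => χ i x • X x,
    fun i => ((χ i).contMDiff.contDiff.of_le hk).smul hX, fun i => hXc.smul_left,
    fun i => (closure_mono (Function.support_smul_subset_left _ _)).trans (hχ i),
    fun x => ?_, fun x => ?_⟩ <;> by_cases hx : x ∈ tsupport X
  · rw [← Finset.sum_smul, hsum x hx, one_smul]
  · simp [image_eq_zero_of_notMem_tsupport hx]
  · simp_rw [norm_smul, Real.norm_of_nonneg (χ.nonneg _ x)]
    rw [← Finset.sum_mul, hsum x hx, one_mul]
  · simp [image_eq_zero_of_notMem_tsupport hx]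

lemma divg_sum {n : ℕ} {ι : Type*} {s : Finset ι} {X : ι → Euc n → Euc n} {x : Euc n}
    (hX : ∀ i ∈ s, DifferentiableAt ℝ (X i) x) :
    divg (fun y => ∑ i ∈ s, X i y) x = ∑ i ∈ s, divg (X i) x := by
  simp only [divg, fderiv_fun_sum hX, sum_apply, sum_inner]
  exact Finset.sum_comm

end Decomposition

lemma contDiffAt_unitGradient {n : ℕ} {f : Euc n → ℝ} {x : Euc n} (hf : ContDiff ℝ 2 f)
    (hx : gradient f x ≠ 0) : ContDiffAt ℝ 1 (unitGradient f) x :=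
  (((contDiff_gradient hf).contDiffAt.norm ℝ hx).inv (norm_ne_zero_iff.2 hx)).smul
    (contDiff_gradient hf).contDiffAt

namespace C2Domain

variable {n : ℕ} (D : C2Domain n) {x : Euc n} {X : Euc n → Euc n}

/-- The `n`-dimensional area of the boundary, as a measure on the ambient space. -/
def boundaryMeasure : Measure (Euc n) := μH[(n : ℝ)].restrict (frontier D.carrier)

lemma exists_isDefiningFunction (hx : x ∈ frontier D.carrier) :
    ∃ U f, IsDefiningFunction D.carrier U f ∧ x ∈ U := by
  obtain ⟨U, f, hU, hxU, hf, hgrad, hΩ, hfr⟩ := D.boundaryC2 x hx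
  exact ⟨U, f, ⟨hU, hf, hgrad, hΩ, hfr⟩, hxU⟩

lemma isCompact_frontier : IsCompact (frontier D.carrier) :=
  Metric.isCompact_of_isClosed_isBounded isClosed_frontier
    (D.bounded.closure.subset frontier_subset_closure)

lemma hausdorffMeasure_frontier_lt_top : μH[(n : ℝ)] (frontier D.carrier) < ⊤ := by
  refine D.isCompact_frontier.measure_lt_top_of_nhdsWithin fun x hx => ?_
  obtain ⟨U, f, h, hxU⟩ := D.exists_isDefiningFunction hx
  obtain ⟨e, C, Q, hQ, hle⟩ := h.exists_graphCylinder hxU ((h.mem_frontier_iff hxU).1 hx)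
    one_lt_two
  exact ⟨_, inter_mem self_mem_nhdsWithin
    (mem_nhdsWithin_of_mem_nhds (Q.isOpen_carrier.mem_nhds Q.center_mem)),
    Q.hausdorffMeasure_frontier_inter_lt_top h D.isOpen.measurableSet hQ two_pos hle⟩

instance : IsFiniteMeasure D.boundaryMeasure :=
  ⟨by simpa [boundaryMeasure] using D.hausdorffMeasure_frontier_lt_top⟩

lemma ae_mem_frontier : ∀ᵐ x ∂D.boundaryMeasure, x ∈ frontier D.carrier :=
  ae_restrict_mem isClosed_frontier.measurableSet

lemma norm_nu (hx : x ∈ frontier D.carrier) : ‖D.nu x‖ = 1 := by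
  simpa using (D.frame_orthonormal x hx).1 (Fin.last n)

variable {D} in
lemma nu_eq_unitGradient {U : Set (Euc n)} {f : Euc n → ℝ} (h : IsDefiningFunction D.carrier U f)
    (hxU : x ∈ U) (hx : x ∈ frontier D.carrier) : D.nu x = unitGradient f x := by
  rw [unitGradient, (D.weingarten x hx U f h.isOpen hxU h.contDiff h.gradient_ne_zero h.inter_eq
    h.frontier_inter_eq).1, norm_smul, norm_norm]
  rw [D.norm_nu hx, mul_one, smul_smul,
    inv_mul_cancel₀ (norm_ne_zero_iff.2 (h.gradient_ne_zero x hxU)), one_smul]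

lemma continuousOn_nu : ContinuousOn D.nu (frontier D.carrier) := fun x hx => by
  obtain ⟨U, f, h, hxU⟩ := D.exists_isDefiningFunction hx
  have hunit := contDiffAt_unitGradient h.contDiff (h.gradient_ne_zero x hxU)
  refine hunit.continuousAt.continuousWithinAt.congr_of_eventuallyEq ?_
    (nu_eq_unitGradient h hxU hx)
  filter_upwards [self_mem_nhdsWithin, mem_nhdsWithin_of_mem_nhds (h.isOpen.mem_nhds hxU)]
    with y hy hyU using nu_eq_unitGradient h hyU hy

lemma aestronglyMeasurable_nu : AEStronglyMeasurable D.nu D.boundaryMeasure :=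
  D.continuousOn_nu.aestronglyMeasurable isClosed_frontier.measurableSet

lemma integrable_inner_nu (hX : Continuous X) (hXc : HasCompactSupport X) :
    Integrable (fun x => ⟪X x, D.nu x⟫) D.boundaryMeasure := by
  refine (hX.integrable_of_hasCompactSupport hXc).norm.mono'
    (hX.aestronglyMeasurable.inner D.aestronglyMeasurable_nu) ?_
  filter_upwards [D.ae_mem_frontier] with x hx
  simpa [D.norm_nu hx] using norm_inner_le_norm (𝕜 := ℝ) (X x) (D.nu x)

lemma setIntegral_divg_eq_zero_of_disjoint_frontier (hX : ContDiff ℝ 1 X)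
    (hXc : HasCompactSupport X)
    (hdisj : tsupport X ⊆ D.carrier ∨ tsupport X ⊆ (closure D.carrier)ᶜ) :
    ∫ x in D.carrier, divg X x = 0 := by
  rcases hdisj with h | h
  · rw [setIntegral_eq_integral_of_forall_compl_eq_zero fun y hy =>
      divg_of_notMem_tsupport (mt (h ·) hy)]
    exact integral_divg_eq_zero hX hXc
  · exact setIntegral_eq_zero_of_forall_eq_zero fun y hy =>
      divg_of_notMem_tsupport fun hyX => h hyX (subset_closure hy)

/-- The defect in the Gauss–Green formula for the vector field `X`. -/
def gaussGreenDefect (X : Euc n → Euc n) : ℝ :=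
  hausdorffScale n * (∫ x in D.carrier, divg X x) - ∫ x, ⟪X x, D.nu x⟫ ∂D.boundaryMeasure

lemma gaussGreenDefect_eq_zero_of_disjoint_frontier (hX : ContDiff ℝ 1 X)
    (hXc : HasCompactSupport X)
    (hdisj : tsupport X ⊆ D.carrier ∨ tsupport X ⊆ (closure D.carrier)ᶜ) :
    D.gaussGreenDefect X = 0 := by
  have hzero : ∫ x, ⟪X x, D.nu x⟫ ∂D.boundaryMeasure = 0 := by
    refine integral_eq_zero_of_ae ?_
    filter_upwards [D.ae_mem_frontier] with y hy
    have hyX : y ∉ tsupport X := fun hyX =>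
      hdisj.elim (fun h => (D.isOpen.frontier_eq ▸ hy).2 (h hyX)) fun h => h hyX hy.1
    rw [image_eq_zero_of_notMem_tsupport hyX, inner_zero_left, Pi.zero_apply]
  rw [gaussGreenDefect, D.setIntegral_divg_eq_zero_of_disjoint_frontier hX hXc hdisj, hzero,
    mul_zero, sub_zero]

lemma exists_isOpen_abs_gaussGreenDefect_le {q : ℝ} (hq : 1 < q) (x : Euc n) :
    ∃ V, IsOpen V ∧ x ∈ V ∧ ∀ X : Euc n → Euc n, ContDiff ℝ 1 X → HasCompactSupport X →
      tsupport X ⊆ V → |D.gaussGreenDefect X| ≤ 2 * (q - 1) * ∫ x, ‖X x‖ ∂D.boundaryMeasure := by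
  have hnonneg (X : Euc n → Euc n) : 0 ≤ 2 * (q - 1) * ∫ x, ‖X x‖ ∂D.boundaryMeasure := by
    have : 0 ≤ q - 1 := by linarith
    positivity
  by_cases hx : x ∈ frontier D.carrier
  · obtain ⟨U, f, h, hxU⟩ := D.exists_isDefiningFunction hx
    obtain ⟨e, C, Q, hQ, hle⟩ := h.exists_graphCylinder hxU ((h.mem_frontier_iff hxU).1 hx) hq
    refine ⟨Q.carrier, Q.isOpen_carrier, Q.center_mem, fun X hX hXc hXQ => ?_⟩
    have hnu : ∫ x, ⟪X x, D.nu x⟫ ∂D.boundaryMeasure =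
        ∫ x in frontier D.carrier, ⟪X x, unitGradient f x⟫ ∂μH[(n : ℝ)] := by
      refine integral_congr_ae ?_
      filter_upwards [D.ae_mem_frontier] with y hy
      by_cases hyX : y ∈ tsupport X
      · rw [nu_eq_unitGradient h (hQ (hXQ hyX)) hy]
      · rw [image_eq_zero_of_notMem_tsupport hyX, inner_zero_left, inner_zero_left]
    rw [gaussGreenDefect, hnu]
    exact Q.abs_setIntegral_divg_sub_le h D.isOpen.measurableSet hQ hq hle hX hXc hXQ
  by_cases hxD : x ∈ D.carrier
  · exact ⟨_, D.isOpen, hxD, fun X hX hXc h => by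
      simpa [D.gaussGreenDefect_eq_zero_of_disjoint_frontier hX hXc (.inl h)] using hnonneg X⟩
  · exact ⟨_, isClosed_closure.isOpen_compl, fun h => hx (D.isOpen.frontier_eq ▸ ⟨h, hxD⟩),
      fun X hX hXc h => by
        simpa [D.gaussGreenDefect_eq_zero_of_disjoint_frontier hX hXc (.inr h)] using hnonneg X⟩

lemma gaussGreenDefect_sum {ι : Type*} {s : Finset ι} {Y : ι → Euc n → Euc n}
    (hY : ∀ i ∈ s, ContDiff ℝ 1 (Y i)) (hYc : ∀ i ∈ s, HasCompactSupport (Y i)) :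
    D.gaussGreenDefect (fun x => ∑ i ∈ s, Y i x) = ∑ i ∈ s, D.gaussGreenDefect (Y i) := by
  have hdiv : ∀ i ∈ s, Integrable (divg (Y i)) (volume.restrict D.carrier) := fun i hi =>
    integrable_divg (hY i hi) (hYc i hi)
  simp only [gaussGreenDefect, Finset.sum_sub_distrib, ← Finset.mul_sum]
  rw [← integral_finsetSum s hdiv, ← integral_finsetSum s fun i hi =>
    D.integrable_inner_nu (hY i hi).continuous (hYc i hi)]
  simp only [sum_inner,
    divg_sum fun i hi => (hY i hi).differentiable one_ne_zero _]

theorem hausdorffScale_mul_setIntegral_divg (hX : ContDiff ℝ 1 X) (hXc : HasCompactSupport X) :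
    hausdorffScale n * ∫ x in D.carrier, divg X x = ∫ x, ⟪X x, D.nu x⟫ ∂D.boundaryMeasure := by
  have hdefect : ∀ q ∈ Ioi (1 : ℝ),
      |D.gaussGreenDefect X| ≤ 2 * (q - 1) * ∫ x, ‖X x‖ ∂D.boundaryMeasure := by
    intro q hq
    choose V hVo hxV hV using D.exists_isOpen_abs_gaussGreenDefect_le (mem_Ioi.1 hq)
    obtain ⟨s, Y, hY, hYc, hYV, hsum, hnorm⟩ :=
      exists_sum_eq_of_isOpen_cover (by exact_mod_cast le_top) hX hXc hVo hxV
    calc |D.gaussGreenDefect X| = |∑ i ∈ s, D.gaussGreenDefect (Y i)| := by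
          rw [funext hsum, D.gaussGreenDefect_sum (fun i _ => hY i) fun i _ => hYc i]
      _ ≤ ∑ i ∈ s, 2 * (q - 1) * ∫ x, ‖Y i x‖ ∂D.boundaryMeasure :=
          (Finset.abs_sum_le_sum_abs _ _).trans
            (Finset.sum_le_sum fun i _ => hV i _ (hY i) (hYc i) (hYV i))
      _ = 2 * (q - 1) * ∫ x, ‖X x‖ ∂D.boundaryMeasure := by
          simp only [hnorm]
          rw [integral_finsetSum s fun i _ =>
            ((hY i).continuous.integrable_of_hasCompactSupport (hYc i)).norm, Finset.mul_sum]
  have hlim : Tendsto (fun q : ℝ => 2 * (q - 1) * ∫ x, ‖X x‖ ∂D.boundaryMeasure) (𝓝[>] 1)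
      (𝓝 0) := by
    have hcont : Continuous fun q : ℝ => 2 * (q - 1) * ∫ x, ‖X x‖ ∂D.boundaryMeasure := by fun_prop
    simpa using (hcont.tendsto 1).mono_left nhdsWithin_le_nhds
  have hle := ge_of_tendsto hlim (eventually_of_mem self_mem_nhdsWithin hdefect)
  exact sub_eq_zero.1 (abs_nonpos_iff.1 hle)

end C2Domain

section Mollification

open scoped Convolution

lemma exists_contDiff_norm_fderiv_sub_le {E F : Type*} [NormedAddCommGroup E] [NormedSpace ℝ E]
    [FiniteDimensional ℝ E] [NormedAddCommGroup F] [NormedSpace ℝ F] [CompleteSpace F] {b : E → F}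
    (hb : ContDiff ℝ 1 b) (hbc : HasCompactSupport b) {ε : ℝ} (hε : 0 < ε) (k : ℕ∞) :
    ∃ b' : E → F, ContDiff ℝ k b' ∧ HasCompactSupport b' ∧
      ∀ x, ‖fderiv ℝ b' x - fderiv ℝ b x‖ ≤ ε := by
  borelize E
  have hcont : Continuous (fderiv ℝ b) := hb.continuous_fderiv one_ne_zero
  obtain ⟨δ, hδ, huc⟩ := Metric.uniformContinuous_iff.1
    ((hbc.fderiv ℝ).uniformContinuous_of_continuous hcont) ε hε
  let φ : ContDiffBump (0 : E) := ⟨δ / 2, δ, half_pos hδ, half_lt_self hδ⟩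
  set μ : Measure E := Measure.addHaar
  refine ⟨φ.normed μ ⋆[ContinuousLinearMap.lsmul ℝ ℝ, μ] b,
    φ.hasCompactSupport_normed.contDiff_convolution_left _ φ.contDiff_normed
      hb.continuous.locallyIntegrable,
    φ.hasCompactSupport_normed.convolution _ hbc, fun x => ?_⟩
  have hderiv := (hbc.hasFDerivAt_convolution_right (ContinuousLinearMap.lsmul ℝ ℝ)
    (φ.continuous_normed (μ := μ)).locallyIntegrable (μ := μ) hb x).fderiv
  rw [hderiv, ← dist_eq_norm]
  exact φ.dist_normed_convolution_le hcont.aestronglyMeasurable fun y hy => (huc hy).le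

end Mollification

namespace C2Domain

variable {n : ℕ} (D : C2Domain n) {x u v : Euc n} {b : Euc n → ℝ} {X : Euc n → Euc n}

/-- The rotation `u ∧ v` applied to the unit normal. It is tangent to the boundary, and the
derivatives of functions along such fields integrate to zero over the boundary. -/
def normalRotation (u v x : Euc n) : Euc n := ⟪v, D.nu x⟫ • u - ⟪u, D.nu x⟫ • v

lemma norm_normalRotation_le (hx : x ∈ frontier D.carrier) (u v : Euc n) :
    ‖D.normalRotation u v x‖ ≤ 2 * (‖u‖ * ‖v‖) := by
  have hinner : ∀ w, ‖⟪w, D.nu x⟫‖ ≤ ‖w‖ := fun w => by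
    simpa [D.norm_nu hx] using norm_inner_le_norm (𝕜 := ℝ) w (D.nu x)
  calc ‖D.normalRotation u v x‖ ≤ ‖⟪v, D.nu x⟫‖ * ‖u‖ + ‖⟪u, D.nu x⟫‖ * ‖v‖ := by
        simpa only [norm_smul, normalRotation] using
          norm_sub_le (⟪v, D.nu x⟫ • u) (⟪u, D.nu x⟫ • v)
    _ ≤ ‖v‖ * ‖u‖ + ‖u‖ * ‖v‖ := by gcongr <;> exact hinner _
    _ = 2 * (‖u‖ * ‖v‖) := by ring

lemma integrable_fderiv_normalRotation (hb : ContDiff ℝ 1 b) (hbc : HasCompactSupport b)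
    (u v : Euc n) :
    Integrable (fun x => fderiv ℝ b x (D.normalRotation u v x)) D.boundaryMeasure := by
  have hflux : ∀ u v, Integrable (fun x => ⟪fderiv ℝ b x u • v, D.nu x⟫) D.boundaryMeasure := by
    intro u v
    have hcont : Continuous fun x => fderiv ℝ b x u :=
      (hb.continuous_fderiv one_ne_zero).clm_apply continuous_const
    exact D.integrable_inner_nu (hcont.smul continuous_const)
      ((hbc.fderiv_apply ℝ u).smul_right (f' := fun _ => v))
  refine ((hflux u v).sub (hflux v u)).congr (.of_forall fun x => ?_)
  simp [normalRotation, real_inner_smul_left, mul_comm]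

lemma divg_fderiv_smul_sub_fderiv_smul (hb : ContDiff ℝ 2 b) (u v x : Euc n) :
    divg (fun y => fderiv ℝ b y u • v + -fderiv ℝ b y v • u) x = 0 := by
  have happly : ∀ w, HasFDerivAt (fun y => fderiv ℝ b y w)
      ((fderiv ℝ (fderiv ℝ b) x).flip w) x := fun w => by
    have hsecond := (hb.fderiv_right le_rfl).differentiable one_ne_zero x
    simpa using hsecond.hasFDerivAt.clm_apply (hasFDerivAt_const w x)
  have hneg : HasFDerivAt (fun y => -fderiv ℝ b y v) (-(fderiv ℝ (fderiv ℝ b) x).flip v) x :=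
    (happly v).neg
  have hsymm : IsSymmSndFDerivAt ℝ b x := hb.contDiffAt.isSymmSndFDerivAt (by simp)
  rw [divg_add ((happly u).differentiableAt.smul_const v) (hneg.differentiableAt.smul_const u),
    divg_smul_const v (happly u).differentiableAt, divg_smul_const u hneg.differentiableAt,
    (happly u).fderiv, hneg.fderiv]
  simp [hsymm.eq u v]

lemma integral_fderiv_normalRotation_of_contDiff_two (hb : ContDiff ℝ 2 b)
    (hbc : HasCompactSupport b) (u v : Euc n) :
    ∫ x, fderiv ℝ b x (D.normalRotation u v x) ∂D.boundaryMeasure = 0 := by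
  have happly : ∀ w, ContDiff ℝ 1 (fun x => fderiv ℝ b x w) := fun w =>
    (hb.fderiv_right le_rfl).clm_apply contDiff_const
  have hflux := D.hausdorffScale_mul_setIntegral_divg
    (X := fun y => fderiv ℝ b y u • v + -fderiv ℝ b y v • u)
    (((happly u).smul contDiff_const).add ((happly v).neg.smul contDiff_const))
    (((hbc.fderiv_apply ℝ u).smul_right (f' := fun _ => v)).add
      ((hbc.fderiv_apply ℝ v).neg.smul_right (f' := fun _ => u)))
  have hzero := divg_fderiv_smul_sub_fderiv_smul hb u v
  rw [setIntegral_eq_zero_of_forall_eq_zero fun x _ => hzero x, mul_zero] at hflux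
  rw [hflux]
  congr 1 with x
  simp only [normalRotation, inner_add_left, real_inner_smul_left, map_sub, map_smul, smul_eq_mul]
  ring

theorem integral_fderiv_normalRotation (hb : ContDiff ℝ 1 b) (hbc : HasCompactSupport b)
    (u v : Euc n) :
    ∫ x, fderiv ℝ b x (D.normalRotation u v x) ∂D.boundaryMeasure = 0 := by
  set c := 2 * (‖u‖ * ‖v‖) * D.boundaryMeasure.real univ
  have happrox : ∀ ε ∈ Ioi (0 : ℝ),
      ‖∫ x, fderiv ℝ b x (D.normalRotation u v x) ∂D.boundaryMeasure‖ ≤ ε * c := by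
    intro ε hε
    obtain ⟨b', hb', hbc', hbb'⟩ := exists_contDiff_norm_fderiv_sub_le hb hbc hε 2
    rw [← sub_zero (∫ x, fderiv ℝ b x _ ∂_), ← D.integral_fderiv_normalRotation_of_contDiff_two
      hb' hbc' u v, ← integral_sub (D.integrable_fderiv_normalRotation hb hbc u v)
      (D.integrable_fderiv_normalRotation (hb'.of_le one_le_two) hbc' u v), ← mul_assoc]
    refine norm_integral_le_of_norm_le_const ?_
    filter_upwards [D.ae_mem_frontier] with x hx
    rw [← sub_apply]
    refine (ContinuousLinearMap.le_opNorm _ _).trans ?_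
    rw [norm_sub_rev]
    exact mul_le_mul (hbb' x) (D.norm_normalRotation_le hx u v) (norm_nonneg _) hε.le
  have hlim : Tendsto (fun ε : ℝ => ε * c) (𝓝[>] 0) (𝓝 0) := by
    simpa using ((continuous_mul_const c).tendsto 0).mono_left nhdsWithin_le_nhds
  exact norm_le_zero_iff.1 (ge_of_tendsto hlim (eventually_of_mem self_mem_nhdsWithin happrox))

end C2Domain

section UnitGradient

variable {n : ℕ} {Ω U : Set (Euc n)} {f : Euc n → ℝ} {x : Euc n} {X : Euc n → Euc n}

lemma IsDefiningFunction.inner_fderiv_unitGradient (h : IsDefiningFunction Ω U f) (hx : x ∈ U)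
    (v : Euc n) : ⟪fderiv ℝ (unitGradient f) x v, unitGradient f x⟫ = 0 := by
  have hd := ((contDiffAt_unitGradient h.contDiff (h.gradient_ne_zero x hx)).differentiableAt
    one_ne_zero).hasFDerivAt
  have hone : (fun y => ⟪unitGradient f y, unitGradient f y⟫) =ᶠ[𝓝 x] fun _ => (1 : ℝ) := by
    filter_upwards [h.isOpen.mem_nhds hx] with y hy
    rw [real_inner_self_eq_norm_sq, norm_unitGradient (h.gradient_ne_zero y hy), one_pow]
  have hzero := congr($((hd.inner ℝ hd).fderiv.symm.trans hone.fderiv_eq) v)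
  simp only [ContinuousLinearMap.comp_apply, ContinuousLinearMap.prod_apply, fderivInnerCLM_apply,
    fderiv_const_apply, zero_apply] at hzero
  linarith [real_inner_comm (unitGradient f x) (fderiv ℝ (unitGradient f) x v)]

lemma divg_eq_sum_orthonormalBasis {ι : Type*} [Fintype ι] (b : OrthonormalBasis ι ℝ (Euc n))
    (X : Euc n → Euc n) (x : Euc n) : divg X x = ∑ i, ⟪fderiv ℝ X x (b i), b i⟫ := by
  have htrace := (LinearMap.trace_eq_sum_inner (fderiv ℝ X x).toLinearMap
    (EuclideanSpace.basisFun (Fin (n + 1)) ℝ)).symm.trans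
    (LinearMap.trace_eq_sum_inner (fderiv ℝ X x).toLinearMap b)
  simpa only [divg, EuclideanSpace.basisFun_apply, ContinuousLinearMap.coe_coe,
    real_inner_comm] using htrace

/-- The coefficients `⟪X, p⟫ ⟪N, q⟫` of the bivector field `X ∧ N`, `N` the unit gradient of `f`,
extended by zero outside the domain of the defining function. -/
def normalCoeff (f : Euc n → ℝ) (X : Euc n → Euc n) (p q : Euc n) (x : Euc n) : ℝ :=
  ⟪X x, p⟫ * ⟪unitGradient f x, q⟫

lemma tsupport_normalCoeff_subset (p q : Euc n) :
    tsupport (normalCoeff f X p q) ⊆ tsupport X :=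
  closure_mono fun x hx hX => hx (by simp [normalCoeff, hX])

lemma IsDefiningFunction.contDiff_normalCoeff (h : IsDefiningFunction Ω U f) (hX : ContDiff ℝ 1 X)
    (hXU : tsupport X ⊆ U) (p q : Euc n) : ContDiff ℝ 1 (normalCoeff f X p q) :=
  contDiff_of_forall_mem_tsupport fun x hx => (hX.contDiffAt.inner ℝ contDiffAt_const).mul
    ((contDiffAt_unitGradient h.contDiff (h.gradient_ne_zero x
      (hXU (tsupport_normalCoeff_subset p q hx)))).inner ℝ contDiffAt_const)

lemma IsDefiningFunction.fderiv_normalCoeff (h : IsDefiningFunction Ω U f)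
    (hX : DifferentiableAt ℝ X x) (hx : x ∈ U) (p q v : Euc n) :
    fderiv ℝ (normalCoeff f X p q) x v = ⟪fderiv ℝ X x v, p⟫ * ⟪unitGradient f x, q⟫ +
      ⟪X x, p⟫ * ⟪fderiv ℝ (unitGradient f) x v, q⟫ := by
  have hN := (contDiffAt_unitGradient h.contDiff (h.gradient_ne_zero x hx)).differentiableAt
    one_ne_zero
  have hderiv : HasFDerivAt (normalCoeff f X p q) _ x :=
    (hX.hasFDerivAt.inner ℝ (hasFDerivAt_const p x)).mul
      (hN.hasFDerivAt.inner ℝ (hasFDerivAt_const q x))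
  rw [hderiv.fderiv]
  simp [fderivInnerCLM_apply]
  ring

lemma sum_sum_inner_rotation (A B : Euc n →ₗ[ℝ] Euc n) (v : Euc n) {N : Euc n} (hN : ‖N‖ = 1)
    (hB : ⟪B v, N⟫ = 0) {ι : Type*} [Fintype ι] (e : OrthonormalBasis ι ℝ (Euc n)) :
    ∑ i, ∑ j, (⟪A (⟪e i, N⟫ • e j - ⟪e j, N⟫ • e i), e j⟫ * ⟪N, e i⟫ +
      ⟪v, e j⟫ * ⟪B (⟪e i, N⟫ • e j - ⟪e j, N⟫ • e i), e i⟫) =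
    ∑ j, ⟪A (e j), e j⟫ - ⟪A N, N⟫ - ⟪v, N⟫ * ∑ i, ⟪B (e i), e i⟫ := by
  have hexpand : ∀ (c : ℝ) w, ∑ i, (c * ⟪w, e i⟫) • e i = c • w := fun c w => by
    simpa only [mul_smul, ← Finset.smul_sum, real_inner_comm] using congr(c • $(e.sum_repr' w))
  have hfirst : ∀ j, ∑ i, ⟪A (⟪e i, N⟫ • e j - ⟪e j, N⟫ • e i), e j⟫ * ⟪N, e i⟫ =
      ⟪A (e j), e j⟫ - ⟪A N, e j⟫ * ⟪e j, N⟫ := by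
    intro j
    have hnormal : ∑ i, ⟪N, e i⟫ • (⟪e i, N⟫ • e j - ⟪e j, N⟫ • e i) = e j - ⟪e j, N⟫ • N := by
      simp only [smul_sub, smul_comm _ ⟪e j, N⟫, smul_smul, Finset.sum_sub_distrib,
        ← Finset.sum_smul, hexpand, e.sum_inner_mul_inner, real_inner_self_eq_norm_sq, hN, one_pow,
        one_smul]
    simpa [sum_inner, real_inner_smul_left, inner_sub_left, mul_comm] using
      congr(⟪A $hnormal, e j⟫)
  have hsecond : ∀ i, ∑ j, ⟪v, e j⟫ * ⟪B (⟪e i, N⟫ • e j - ⟪e j, N⟫ • e i), e i⟫ =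
      ⟪B v, e i⟫ * ⟪e i, N⟫ - ⟪v, N⟫ * ⟪B (e i), e i⟫ := by
    intro i
    have hfield : ∑ j, ⟪v, e j⟫ • (⟪e i, N⟫ • e j - ⟪e j, N⟫ • e i) =
        ⟪e i, N⟫ • v - ⟪v, N⟫ • e i := by
      simp only [smul_sub, smul_comm _ ⟪e i, N⟫, smul_smul, Finset.sum_sub_distrib,
        ← Finset.sum_smul, hexpand, e.sum_inner_mul_inner]
    simpa [sum_inner, real_inner_smul_left, inner_sub_left, mul_comm] using
      congr(⟪B $hfield, e i⟫)
  simp_rw [Finset.sum_add_distrib]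
  rw [Finset.sum_comm]
  simp_rw [hfirst, hsecond, Finset.sum_sub_distrib, e.sum_inner_mul_inner, hB, ← Finset.mul_sum]
  ring

end UnitGradient

section QuadraticForm

variable {F : Type*} [NormedAddCommGroup F] [InnerProductSpace ℝ F]

lemma abs_inner_apply_le (T : F →L[ℝ] F) (u v : F) : |⟪T u, v⟫| ≤ ‖T‖ * ‖u‖ * ‖v‖ :=
  (abs_real_inner_le_norm _ _).trans (by gcongr; exact T.le_opNorm u)

lemma integrable_inner_apply_self {E : Type*} [MeasurableSpace E] {μ : Measure E}
    [IsFiniteMeasure μ] {ν : E → F} [TopologicalSpace E] [OpensMeasurableSpace E]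
    [SecondCountableTopologyEither E (F →L[ℝ] F)] {T : E → F →L[ℝ] F}
    (hT : Continuous T) {K : ℝ} (hK : ∀ x, ‖T x‖ ≤ K) (hν : AEStronglyMeasurable ν μ) {C : ℝ}
    (hC : ∀ᵐ x ∂μ, ‖ν x‖ ≤ C) : Integrable (fun x => ⟪T x (ν x), ν x⟫) μ := by
  refine .of_bound ((isBoundedBilinearMap_apply.continuous.comp_aestronglyMeasurable
    (hT.aestronglyMeasurable.prodMk hν)).inner hν) (K * C * C) ?_
  filter_upwards [hC] with x hx
  have hK₀ := (norm_nonneg _).trans (hK x)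
  have hC₀ := (norm_nonneg _).trans hx
  refine (abs_inner_apply_le (T x) (ν x) (ν x)).trans ?_
  gcongr
  exact hK x

end QuadraticForm

/-- The divergence of `X` at `x` along the hyperplane with unit normal `v`, the integrand of the
first variation. -/
def tangentDivg {n : ℕ} (X : Euc n → Euc n) (v x : Euc n) : ℝ :=
  divg X x - ⟪fderiv ℝ X x v, v⟫

lemma tangentDivg_of_notMem_tsupport {n : ℕ} {X : Euc n → Euc n} {x : Euc n} (hx : x ∉ tsupport X)
    (v : Euc n) : tangentDivg X v x = 0 := by
  rw [tangentDivg, divg_of_notMem_tsupport hx,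
    image_eq_zero_of_notMem_tsupport (mt (tsupport_fderiv_subset ℝ ·) hx), zero_apply,
    inner_zero_left, sub_zero]

lemma tangentDivg_sum {n : ℕ} {ι : Type*} {s : Finset ι} {X : ι → Euc n → Euc n} {x : Euc n}
    (hX : ∀ i ∈ s, DifferentiableAt ℝ (X i) x) (v : Euc n) :
    tangentDivg (fun y => ∑ i ∈ s, X i y) v x = ∑ i ∈ s, tangentDivg (X i) v x := by
  simp only [tangentDivg, divg_sum hX, fderiv_fun_sum hX, sum_apply, sum_inner,
    Finset.sum_sub_distrib]

lemma tangentDivg_add {n : ℕ} {X Y : Euc n → Euc n} {x : Euc n} (hX : DifferentiableAt ℝ X x)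
    (hY : DifferentiableAt ℝ Y x) (v : Euc n) :
    tangentDivg (X + Y) v x = tangentDivg X v x + tangentDivg Y v x := by
  rw [tangentDivg, show divg (X + Y) x = _ from divg_add hX hY, fderiv_add hX hY, add_apply,
    inner_add_left, tangentDivg, tangentDivg]
  ring

lemma tangentDivg_const_smul {n : ℕ} {X : Euc n → Euc n} {x : Euc n}
    (hX : DifferentiableAt ℝ X x) (a : ℝ) (v : Euc n) :
    tangentDivg (a • X) v x = a * tangentDivg X v x := by
  rw [tangentDivg, divg_const_smul hX, fderiv_const_smul hX, smul_apply, real_inner_smul_left,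
    tangentDivg, mul_sub]

lemma integrable_tangentDivg {n : ℕ} {μ : Measure (Euc n)} [IsFiniteMeasure μ]
    {X v : Euc n → Euc n} (hX : ContDiff ℝ 1 X) (hXc : HasCompactSupport X)
    (hv : AEStronglyMeasurable v μ) {C : ℝ} (hC : ∀ᵐ x ∂μ, ‖v x‖ ≤ C) :
    Integrable (fun x => tangentDivg X (v x) x) μ :=
  have hcont := hX.continuous_fderiv one_ne_zero
  let ⟨_, hK⟩ := (hXc.fderiv (𝕜 := ℝ)).exists_bound_of_continuous hcont
  (integrable_divg hX hXc).sub (integrable_inner_apply_self hcont hK hv hC)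

namespace C2Domain

variable {n : ℕ} (D : C2Domain n) {x : Euc n} {X : Euc n → Euc n} {U : Set (Euc n)}
  {f : Euc n → ℝ}

lemma H_one (x : Euc n) : D.H 1 x = ∑ i, D.kappa i x := by
  simp [H, Finset.powersetCard_one]

variable {D} in
lemma divg_unitGradient (h : IsDefiningFunction D.carrier U f) (hxU : x ∈ U)
    (hx : x ∈ frontier D.carrier) : divg (unitGradient f) x = D.H 1 x := by
  have hframe := D.frame_orthonormal x hx
  let b := OrthonormalBasis.mk hframe
    (hframe.linearIndependent.span_eq_top_of_card_eq_finrank' (by simp)).ge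
  have hlast : b (Fin.last n) = unitGradient f x := by
    simp [b, nu_eq_unitGradient h hxU hx]
  have hcast : ∀ i : Fin n, b i.castSucc = D.tau i x := by simp [b]
  have hweingarten : ∀ i, fderiv ℝ (unitGradient f) x (D.tau i x) = D.kappa i x • D.tau i x :=
    (D.weingarten x hx U f h.isOpen hxU h.contDiff h.gradient_ne_zero h.inter_eq
      h.frontier_inter_eq).2
  have hnorm : ∀ i, ‖D.tau i x‖ = 1 := fun i => hcast i ▸ b.orthonormal.1 _
  rw [divg_eq_sum_orthonormalBasis b, Fin.sum_univ_castSucc, D.H_one, hlast,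
    h.inner_fderiv_unitGradient hxU, add_zero]
  simp [hcast, hweingarten, real_inner_smul_left, hnorm]

lemma continuousOn_H_one : ContinuousOn (D.H 1) (frontier D.carrier) := fun x hx => by
  obtain ⟨U, f, h, hxU⟩ := D.exists_isDefiningFunction hx
  have hderiv : ContinuousAt (fderiv ℝ (unitGradient f)) x :=
    ((contDiffAt_unitGradient h.contDiff (h.gradient_ne_zero x hxU)).fderiv_right
      (m := 0) (by simp)).continuousAt
  have hdivg : ContinuousAt (divg (unitGradient f)) x := by
    unfold divg
    fun_prop
  refine hdivg.continuousWithinAt.congr_of_eventuallyEq ?_ (divg_unitGradient h hxU hx).symm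
  filter_upwards [self_mem_nhdsWithin, mem_nhdsWithin_of_mem_nhds (h.isOpen.mem_nhds hxU)]
    with y hy hyU using (divg_unitGradient h hyU hy).symm

lemma aestronglyMeasurable_H_one : AEStronglyMeasurable (D.H 1) D.boundaryMeasure :=
  D.continuousOn_H_one.aestronglyMeasurable isClosed_frontier.measurableSet

lemma exists_ae_norm_H_one_le : ∃ K, ∀ᵐ x ∂D.boundaryMeasure, ‖D.H 1 x‖ ≤ K := by
  obtain ⟨K, hK⟩ := D.isCompact_frontier.exists_bound_of_continuousOn D.continuousOn_H_one
  exact ⟨K, D.ae_mem_frontier.mono hK⟩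

lemma integrable_H_one : Integrable (D.H 1) D.boundaryMeasure :=
  let ⟨K, hK⟩ := D.exists_ae_norm_H_one_le
  .of_bound D.aestronglyMeasurable_H_one K hK

lemma integrable_H_one_mul_inner_nu (hX : Continuous X) (hXc : HasCompactSupport X) :
    Integrable (fun x => D.H 1 x * ⟪X x, D.nu x⟫) D.boundaryMeasure :=
  let ⟨_, hK⟩ := D.exists_ae_norm_H_one_le
  (D.integrable_inner_nu hX hXc).bdd_mul D.aestronglyMeasurable_H_one hK

lemma integrable_tangentDivg_nu (hX : ContDiff ℝ 1 X) (hXc : HasCompactSupport X) :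
    Integrable (fun x => tangentDivg X (D.nu x) x) D.boundaryMeasure :=
  integrable_tangentDivg hX hXc D.aestronglyMeasurable_nu
    (D.ae_mem_frontier.mono fun _ hx => (D.norm_nu hx).le)

variable {D} in
lemma sum_fderiv_normalCoeff_normalRotation (h : IsDefiningFunction D.carrier U f) (hxU : x ∈ U)
    (hx : x ∈ frontier D.carrier) (hX : DifferentiableAt ℝ X x) {ι : Type*} [Fintype ι]
    (e : OrthonormalBasis ι ℝ (Euc n)) :
    ∑ i, ∑ j, fderiv ℝ (normalCoeff f X (e j) (e i)) x (D.normalRotation (e j) (e i) x) =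
      tangentDivg X (D.nu x) x - D.H 1 x * ⟪X x, D.nu x⟫ := by
  have hrotation := sum_sum_inner_rotation (fderiv ℝ X x).toLinearMap
    (fderiv ℝ (unitGradient f) x).toLinearMap (X x)
    (norm_unitGradient (h.gradient_ne_zero x hxU)) (h.inner_fderiv_unitGradient hxU (X x)) e
  simp only [ContinuousLinearMap.coe_coe, ← divg_eq_sum_orthonormalBasis] at hrotation
  simp_rw [h.fderiv_normalCoeff hX hxU, normalRotation, nu_eq_unitGradient h hxU hx]
  rw [hrotation, divg_unitGradient h hxU hx, tangentDivg, mul_comm (D.H 1 x)]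

lemma integral_tangentDivg_of_isDefiningFunction (h : IsDefiningFunction D.carrier U f)
    (hX : ContDiff ℝ 1 X) (hXc : HasCompactSupport X) (hXU : tsupport X ⊆ U) :
    ∫ x, tangentDivg X (D.nu x) x ∂D.boundaryMeasure =
      ∫ x, D.H 1 x * ⟪X x, D.nu x⟫ ∂D.boundaryMeasure := by
  let e := EuclideanSpace.basisFun (Fin (n + 1)) ℝ
  have hb : ∀ p q, ContDiff ℝ 1 (normalCoeff f X p q) := h.contDiff_normalCoeff hX hXU
  have hbc : ∀ p q, HasCompactSupport (normalCoeff f X p q) := fun p q =>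
    hXc.mono' ((subset_tsupport _).trans (tsupport_normalCoeff_subset p q))
  have hint := fun p q u v => D.integrable_fderiv_normalRotation (hb p q) (hbc p q) u v
  rw [← sub_eq_zero, ← integral_sub (D.integrable_tangentDivg_nu hX hXc)
    (D.integrable_H_one_mul_inner_nu hX.continuous hXc)]
  calc ∫ x, tangentDivg X (D.nu x) x - D.H 1 x * ⟪X x, D.nu x⟫ ∂D.boundaryMeasure
      = ∫ x, ∑ i, ∑ j, fderiv ℝ (normalCoeff f X (e j) (e i)) x
          (D.normalRotation (e j) (e i) x) ∂D.boundaryMeasure := by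
        refine integral_congr_ae ?_
        filter_upwards [D.ae_mem_frontier] with x hx
        by_cases hxX : x ∈ tsupport X
        · exact (sum_fderiv_normalCoeff_normalRotation h (hXU hxX) hx
            (hX.differentiable one_ne_zero x) e).symm
        · simp [tangentDivg_of_notMem_tsupport hxX, image_eq_zero_of_notMem_tsupport hxX,
            image_eq_zero_of_notMem_tsupport (f := fderiv ℝ (normalCoeff f X _ _)) (mt
              (fun hx => tsupport_normalCoeff_subset _ _ (tsupport_fderiv_subset ℝ hx)) hxX)]
    _ = ∑ i, ∑ j, ∫ x, fderiv ℝ (normalCoeff f X (e j) (e i)) x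
          (D.normalRotation (e j) (e i) x) ∂D.boundaryMeasure := by
        rw [integral_finsetSum _ fun i _ => integrable_finsetSum _ fun j _ => hint _ _ _ _]
        exact Finset.sum_congr rfl fun i _ => integral_finsetSum _ fun j _ => hint _ _ _ _
    _ = 0 := Finset.sum_eq_zero fun i _ => Finset.sum_eq_zero fun j _ =>
        D.integral_fderiv_normalRotation (hb _ _) (hbc _ _) _ _

lemma exists_isOpen_integral_tangentDivg (x : Euc n) :
    ∃ V, IsOpen V ∧ x ∈ V ∧ ∀ X : Euc n → Euc n, ContDiff ℝ 1 X → HasCompactSupport X →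
      tsupport X ⊆ V → ∫ x, tangentDivg X (D.nu x) x ∂D.boundaryMeasure =
        ∫ x, D.H 1 x * ⟪X x, D.nu x⟫ ∂D.boundaryMeasure := by
  by_cases hx : x ∈ frontier D.carrier
  · obtain ⟨U, f, h, hxU⟩ := D.exists_isDefiningFunction hx
    exact ⟨U, h.isOpen, hxU, fun X => D.integral_tangentDivg_of_isDefiningFunction h⟩
  · refine ⟨_, isClosed_frontier.isOpen_compl, hx, fun X _ _ hXV => integral_congr_ae ?_⟩
    filter_upwards [D.ae_mem_frontier] with y hy
    have hyX : y ∉ tsupport X := fun h => hXV h hy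
    rw [tangentDivg_of_notMem_tsupport hyX, image_eq_zero_of_notMem_tsupport hyX, inner_zero_left,
      mul_zero]

theorem integral_tangentDivg (hX : ContDiff ℝ 1 X) (hXc : HasCompactSupport X) :
    ∫ x, tangentDivg X (D.nu x) x ∂D.boundaryMeasure =
      ∫ x, D.H 1 x * ⟪X x, D.nu x⟫ ∂D.boundaryMeasure := by
  choose V hVo hxV hV using D.exists_isOpen_integral_tangentDivg
  obtain ⟨s, Y, hY, hYc, hYV, hsum, -⟩ :=
    exists_sum_eq_of_isOpen_cover (by exact_mod_cast le_top) hX hXc hVo hxV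
  have hYd : ∀ x, ∀ i ∈ s, DifferentiableAt ℝ (Y i) x := fun x i _ =>
    (hY i).differentiable one_ne_zero x
  calc ∫ x, tangentDivg X (D.nu x) x ∂D.boundaryMeasure
      = ∑ i ∈ s, ∫ x, tangentDivg (Y i) (D.nu x) x ∂D.boundaryMeasure := by
        rw [← integral_finsetSum s fun i _ => D.integrable_tangentDivg_nu (hY i) (hYc i),
          funext hsum]
        simp only [tangentDivg_sum (hYd _)]
    _ = ∑ i ∈ s, ∫ x, D.H 1 x * ⟪Y i x, D.nu x⟫ ∂D.boundaryMeasure :=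
        Finset.sum_congr rfl fun i _ => hV i _ (hY i) (hYc i) (hYV i)
    _ = ∫ x, D.H 1 x * ⟪X x, D.nu x⟫ ∂D.boundaryMeasure := by
        rw [← integral_finsetSum s fun i _ =>
          D.integrable_H_one_mul_inner_nu (hY i).continuous (hYc i)]
        simp only [hsum, sum_inner, Finset.mul_sum]

end C2Domain

section BoundedDensity

lemma exists_integral_norm_le_mul_norm_Lp {α F : Type*} {m : MeasurableSpace α} (μ : Measure α)
    [IsFiniteMeasure μ] [NormedAddCommGroup F] (p : ℝ≥0∞) [hp : Fact (1 ≤ p)] :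
    ∃ C : NNReal, ∀ φ : Lp F p μ, ∫ x, ‖φ x‖ ∂μ ≤ C * ‖φ‖ := by
  have hC : μ univ ^ (1 / (1 : ℝ≥0∞).toReal - 1 / p.toReal) ≠ ⊤ := by
    refine ENNReal.rpow_ne_top_of_nonneg ?_ (measure_ne_top _ _)
    rcases eq_or_ne p ⊤ with rfl | hp'
    · simp
    · have := ENNReal.toReal_mono hp' hp.out
      simp only [ENNReal.toReal_one, ne_eq, one_ne_zero, not_false_eq_true, div_self] at this ⊢
      exact sub_nonneg.2 (div_le_one_of_le₀ this (by positivity))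
  refine ⟨(μ univ ^ (1 / (1 : ℝ≥0∞).toReal - 1 / p.toReal)).toNNReal, fun φ => ?_⟩
  have hφ : AEStronglyMeasurable φ μ := (Lp.memLp φ).aestronglyMeasurable
  rw [integral_norm_eq_lintegral_enorm hφ, ← eLpNorm_one_eq_lintegral_enorm, Lp.norm_def,
    ENNReal.coe_toNNReal_eq_toReal, mul_comm, ← ENNReal.toReal_mul]
  exact ENNReal.toReal_mono (ENNReal.mul_ne_top (Lp.memLp φ).eLpNorm_ne_top hC)
    (eLpNorm_le_eLpNorm_mul_rpow_measure_univ hp.out hφ)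

lemma continuous_integral_norm_Lp {α F : Type*} {m : MeasurableSpace α} {μ : Measure α}
    [IsFiniteMeasure μ] [NormedAddCommGroup F] {p : ℝ≥0∞} [hp : Fact (1 ≤ p)] :
    Continuous fun φ : Lp F p μ => ∫ x, ‖φ x‖ ∂μ := by
  obtain ⟨C, hC⟩ := exists_integral_norm_le_mul_norm_Lp (F := F) μ p
  have hint (φ : Lp F p μ) : Integrable (fun x => ‖φ x‖) μ :=
    ((Lp.memLp φ).integrable hp.out).norm
  refine (LipschitzWith.of_le_add_mul C fun φ ψ => ?_).continuous
  calc ∫ x, ‖φ x‖ ∂μ ≤ ∫ x, (‖ψ x‖ + ‖(φ - ψ : Lp F p μ) x‖) ∂μ := by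
        refine integral_mono_ae (hint φ) ((hint ψ).add (hint _)) ?_
        filter_upwards [Lp.coeFn_sub φ ψ] with x hx
        rw [hx, Pi.sub_apply]
        exact norm_le_norm_add_norm_sub' (φ x) (ψ x)
    _ ≤ ∫ x, ‖ψ x‖ ∂μ + C * dist φ ψ := by
        rw [integral_add (hint ψ) (hint _), dist_eq_norm]
        gcongr
        exact hC _

lemma ae_norm_le_of_integral_inner_le {α F : Type*} {m : MeasurableSpace α} {μ : Measure α}
    [IsFiniteMeasure μ] [NormedAddCommGroup F] [InnerProductSpace ℝ F] {h : α → F} {M : ℝ}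
    (hM : 0 ≤ M) (hsm : StronglyMeasurable h) (hh : MemLp h 2 μ)
    (hb : ∀ φ : α → F, MemLp φ 2 μ → ∫ x, ⟪h x, φ x⟫ ∂μ ≤ M * ∫ x, ‖φ x‖ ∂μ) :
    ∀ᵐ x ∂μ, ‖h x‖ ≤ M := by
  let T : Set α := {x | M < ‖h x‖}
  have hT : MeasurableSet T := measurableSet_lt measurable_const hsm.norm.measurable
  have hint₁ : IntegrableOn (fun x => ‖h x‖ ^ 2) T μ :=
    (hh.integrable_norm_pow two_ne_zero).integrableOn
  have hint₂ : IntegrableOn (fun x => M * ‖h x‖) T μ :=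
    ((hh.integrable one_le_two).norm.const_mul M).integrableOn
  have hle : ∫ x in T, (‖h x‖ ^ 2 - M * ‖h x‖) ∂μ ≤ 0 := by
    have hbT := hb (T.indicator h) (hh.indicator hT)
    have hinner : (fun x => ⟪h x, T.indicator h x⟫) = T.indicator fun x => ‖h x‖ ^ 2 := by
      ext x
      by_cases hx : x ∈ T <;> simp [hx]
    simp only [hinner, norm_indicator_eq_indicator_norm, integral_indicator hT] at hbT
    rw [integral_sub hint₁ hint₂, integral_const_mul]
    exact sub_nonpos.2 hbT
  have hpos : ∀ x ∈ T, 0 < ‖h x‖ ^ 2 - M * ‖h x‖ := fun x (hx : M < ‖h x‖) => by nlinarith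
  have hzero := (setIntegral_eq_zero_iff_of_nonneg_ae
    (ae_restrict_of_forall_mem hT fun x hx => (hpos x hx).le) (hint₁.sub hint₂)).1
    (hle.antisymm (setIntegral_nonneg hT fun x hx => (hpos x hx).le))
  filter_upwards [(ae_restrict_iff' hT).1 hzero] with x hx
  exact not_lt.1 fun hxT => (hpos x hxT).ne' (hx hxT)

/-- The space of smooth compactly supported maps from `E` to `F`, the test fields against which
first variations and densities are computed. -/
def testFields (E F : Type*) [NormedAddCommGroup E] [NormedSpace ℝ E] [NormedAddCommGroup F]
    [NormedSpace ℝ F] : Submodule ℝ (E → F) where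
  carrier := {X | ContDiff ℝ (⊤ : ℕ∞) X ∧ HasCompactSupport X}
  add_mem' hX hY := ⟨hX.1.add hY.1, hX.2.add hY.2⟩
  zero_mem' := ⟨contDiff_const, HasCompactSupport.zero⟩
  smul_mem' c _ hX := ⟨hX.1.const_smul c, hX.2.smul_left (f := fun _ => c)⟩

namespace testFields

variable {E F : Type*} [NormedAddCommGroup E] [NormedSpace ℝ E] [FiniteDimensional ℝ E]
  [NormedAddCommGroup F] [MeasurableSpace E] [BorelSpace E] (μ : Measure E) [IsFiniteMeasure μ]

section NormedSpace

variable [NormedSpace ℝ F]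

lemma memLp (X : testFields E F) : MemLp X.1 2 μ :=
  X.2.1.continuous.memLp_of_hasCompactSupport X.2.2

/-- The class in `L²(μ)` of a test field. -/
def toLp : testFields E F →ₗ[ℝ] Lp F 2 μ where
  toFun X := (memLp μ X).toLp X.1
  map_add' _ _ := rfl
  map_smul' _ _ := rfl

lemma coeFn_toLp (X : testFields E F) :
    toLp μ X =ᵐ[μ] X.1 :=
  (memLp μ X).coeFn_toLp

lemma denseRange_toLp :
    DenseRange (toLp μ : testFields E F → Lp F 2 μ) := by
  refine (Lp.dense_hasCompactSupport_contDiff (F := F) (μ := μ) (p := 2) (by norm_num)).mono ?_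
  rintro φ ⟨X, hφX, hXc, hX⟩
  exact ⟨⟨X, hX, hXc⟩, Lp.ext ((coeFn_toLp μ ⟨X, hX, hXc⟩).trans hφX.symm)⟩

lemma exists_continuousLinearMap_comp_toLp_eq {M : ℝ} (hM : 0 ≤ M)
    (L : testFields E F →ₗ[ℝ] ℝ) (hL : ∀ X, |L X| ≤ M * ∫ x, ‖X.1 x‖ ∂μ) :
    ∃ Λ : Lp F 2 μ →L[ℝ] ℝ, (∀ X, Λ (toLp μ X) = L X) ∧ ∀ φ, |Λ φ| ≤ M * ∫ x, ‖φ x‖ ∂μ := by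
  obtain ⟨C, hC⟩ := exists_integral_norm_le_mul_norm_Lp (F := F) μ 2
  have hL₁ (X : testFields E F) : |L X| ≤ M * ∫ x, ‖toLp μ X x‖ ∂μ := by
    refine (hL X).trans_eq (congrArg (M * ·) (integral_congr_ae ?_))
    filter_upwards [coeFn_toLp μ X] with x hx
    rw [hx]
  have hL₂ (X : testFields E F) : ‖L X‖ ≤ M * C * ‖toLp μ X‖ := by
    rw [mul_assoc]
    exact (hL₁ X).trans (mul_le_mul_of_nonneg_left (hC _) hM)
  have hΛ (X : testFields E F) : L.extendOfNorm (toLp μ) (toLp μ X) = L X :=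
    LinearMap.extendOfNorm_eq (denseRange_toLp (F := F) μ) ⟨_, hL₂⟩ X
  refine ⟨L.extendOfNorm (toLp μ), hΛ, fun φ => (denseRange_toLp μ).induction_on φ ?_ fun X => by
    rw [hΛ]; exact hL₁ X⟩
  exact isClosed_le (map_continuous _).abs (continuous_const.mul continuous_integral_norm_Lp)

end NormedSpace

theorem exists_bounded_density [InnerProductSpace ℝ F] [CompleteSpace F] {M : ℝ} (hM : 0 ≤ M)
    (L : testFields E F →ₗ[ℝ] ℝ) (hL : ∀ X, |L X| ≤ M * ∫ x, ‖X.1 x‖ ∂μ) :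
    ∃ h : E → F, StronglyMeasurable h ∧ (∀ x, ‖h x‖ ≤ M) ∧
      ∀ X : testFields E F, L X = ∫ x, ⟪h x, X.1 x⟫ ∂μ := by
  obtain ⟨Λ, hΛL, hΛM⟩ := exists_continuousLinearMap_comp_toLp_eq μ hM L hL
  let h : Lp F 2 μ := (InnerProductSpace.toDual ℝ _).symm Λ
  have hΛh (φ : Lp F 2 μ) : Λ φ = ∫ x, ⟪h x, φ x⟫ ∂μ := by
    rw [← L2.inner_def]
    exact InnerProductSpace.toDual_symm_apply.symm
  have hsm : StronglyMeasurable h := Lp.stronglyMeasurable h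
  have hle : ∀ᵐ x ∂μ, ‖h x‖ ≤ M := by
    refine ae_norm_le_of_integral_inner_le hM hsm (Lp.memLp h) fun φ hφ => ?_
    have hφM := (le_abs_self _).trans (hΛM (hφ.toLp φ))
    have hae := hφ.coeFn_toLp
    rwa [hΛh, integral_congr_ae (hae.mono fun x hx => congrArg (inner ℝ (h x)) hx),
      integral_congr_ae (hae.mono fun x hx => congrArg norm hx)] at hφM
  refine ⟨{x | ‖h x‖ ≤ M}.indicator h,
    hsm.indicator (measurableSet_le hsm.norm.measurable measurable_const), fun x => ?_,
    fun X => ?_⟩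
  · by_cases hx : ‖h x‖ ≤ M <;> simp [hx, hM]
  · rw [← hΛL, hΛh]
    refine integral_congr_ae ?_
    filter_upwards [hle, coeFn_toLp μ X] with x hx hX
    rw [hX, indicator_of_mem (by exact hx)]

end testFields

end BoundedDensity

lemma le_add_inv_pow_mul_pow {n : ℕ} (hn : 1 ≤ n) {a t : ℝ} (ha : 0 ≤ a) (ht : 0 < t) :
    a ≤ t + (t ^ (n - 1))⁻¹ * a ^ n := by
  rcases le_or_gt a t with hat | hat
  · exact hat.trans (le_add_of_nonneg_right (by positivity))
  · have hpow : a * t ^ (n - 1) ≤ a ^ n := by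
      rw [← mul_pow_sub_one (by lia : n ≠ 0) a]
      gcongr
    have : a ≤ (t ^ (n - 1))⁻¹ * a ^ n := by
      rwa [inv_mul_eq_div, le_div_iff₀ (by positivity)]
    exact this.trans (le_add_of_nonneg_left ht.le)

namespace C2Domain

variable {n : ℕ} (D : C2Domain n)

lemma A_nonneg (x : Euc n) : 0 ≤ D.A x := Real.sqrt_nonneg _

lemma abs_H_one_le (x : Euc n) : |D.H 1 x| ≤ n * D.A x := by
  rw [D.H_one]
  refine (Finset.abs_sum_le_sum_abs _ _).trans ?_
  have hκ : ∀ i ∈ Finset.univ, |D.kappa i x| ≤ D.A x := fun i hi => Real.abs_le_sqrt <|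
    Finset.single_le_sum (f := fun i => D.kappa i x ^ 2) (fun j _ => sq_nonneg _) hi
  simpa using Finset.sum_le_card_nsmul _ _ _ hκ

lemma setLIntegral_ofReal_abs_H_one_le (hn : 1 ≤ n) {t : ℝ} (ht : 0 < t) (B : Set (Euc n)) :
    ∫⁻ x in B, ENNReal.ofReal |D.H 1 x| ∂D.boundaryMeasure ≤
      ENNReal.ofReal (n * t) * D.boundaryMeasure B + ENNReal.ofReal (n * (t ^ (n - 1))⁻¹) *
        ∫⁻ x in frontier D.carrier, ENNReal.ofReal (D.A x ^ n) ∂μH[(n : ℝ)] :=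
  calc ∫⁻ x in B, ENNReal.ofReal |D.H 1 x| ∂D.boundaryMeasure
    _ ≤ ∫⁻ x in B, (ENNReal.ofReal (n * t) +
          ENNReal.ofReal (n * (t ^ (n - 1))⁻¹) * ENNReal.ofReal (D.A x ^ n))
          ∂D.boundaryMeasure := by
        refine lintegral_mono fun x => ?_
        have hA := D.A_nonneg x
        rw [← ENNReal.ofReal_mul (by positivity), ← ENNReal.ofReal_add (by positivity)
          (by positivity), mul_assoc, ← mul_add]
        exact ENNReal.ofReal_le_ofReal ((D.abs_H_one_le x).trans
          (mul_le_mul_of_nonneg_left (le_add_inv_pow_mul_pow hn hA ht) n.cast_nonneg))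
    _ = ENNReal.ofReal (n * t) * D.boundaryMeasure B + ENNReal.ofReal (n * (t ^ (n - 1))⁻¹) *
          ∫⁻ x in B, ENNReal.ofReal (D.A x ^ n) ∂D.boundaryMeasure := by
        rw [lintegral_add_left measurable_const, lintegral_const_mul' _ _ ENNReal.ofReal_ne_top,
          lintegral_const, Measure.restrict_apply_univ]
    _ ≤ _ := by
        gcongr ?_ + _ * ?_
        · exact le_rfl
        · exact setLIntegral_le_lintegral _ _

variable {D}

lemma setIntegral_abs_H_one_le (hn : 1 ≤ n) {c : ℝ≥0∞} (hc : c < ⊤)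
    (hDc : ∫⁻ x in frontier D.carrier, ENNReal.ofReal (D.A x ^ n) ∂μH[(n : ℝ)] ≤ c) {t : ℝ}
    (ht : 0 < t) (B : Set (Euc n)) :
    ∫ x in B, |D.H 1 x| ∂D.boundaryMeasure ≤
      n * t * D.boundaryMeasure.real B + n * (t ^ (n - 1))⁻¹ * c.toReal := by
  have hle : ∫⁻ x in B, ENNReal.ofReal |D.H 1 x| ∂D.boundaryMeasure ≤
      ENNReal.ofReal (n * t) * D.boundaryMeasure B +
        ENNReal.ofReal (n * (t ^ (n - 1))⁻¹) * c :=
    (D.setLIntegral_ofReal_abs_H_one_le hn ht B).trans (by gcongr)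
  have htop₁ : ENNReal.ofReal (n * t) * D.boundaryMeasure B ≠ ⊤ :=
    ENNReal.mul_ne_top ENNReal.ofReal_ne_top (measure_ne_top _ _)
  have htop₂ : ENNReal.ofReal (n * (t ^ (n - 1))⁻¹) * c ≠ ⊤ :=
    ENNReal.mul_ne_top ENNReal.ofReal_ne_top hc.ne
  rw [integral_eq_lintegral_of_nonneg_ae (ae_of_all _ fun x => abs_nonneg _)
    D.aestronglyMeasurable_H_one.restrict.norm]
  refine (ENNReal.toReal_mono (ENNReal.add_ne_top.2 ⟨htop₁, htop₂⟩) hle).trans_eq ?_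
  rw [ENNReal.toReal_add htop₁ htop₂, ENNReal.toReal_mul, ENNReal.toReal_mul,
    ENNReal.toReal_ofReal (by positivity), ENNReal.toReal_ofReal (by positivity),
    measureReal_def]

lemma frontier_subset_closedBall {R : ℝ} (hD : D.carrier ⊆ ball 0 R) :
    frontier D.carrier ⊆ closedBall 0 R :=
  frontier_subset_closure.trans ((closure_mono hD).trans closure_ball_subset_closedBall)

-- The position field, cut off away from the boundary, has boundary divergence `n`.
lemma natCast_mul_boundaryMeasure_le {R : ℝ} (hD : D.carrier ⊆ ball 0 R) :
    n * D.boundaryMeasure.real univ ≤ R * ∫ x, |D.H 1 x| ∂D.boundaryMeasure := by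
  obtain ⟨φ, hφ, hφc, hφ₁⟩ : ∃ φ : Euc n → ℝ, ContDiff ℝ 1 φ ∧ HasCompactSupport φ ∧
      ∀ x ∈ frontier D.carrier, φ =ᶠ[𝓝 x] 1 := by
    let φ : ContDiffBump (0 : Euc n) := ⟨|R| + 1, |R| + 2, by positivity, by linarith⟩
    refine ⟨φ, φ.contDiff, φ.hasCompactSupport, fun x hx => ?_⟩
    have hxR : x ∈ ball 0 (|R| + 1) := closedBall_subset_ball
      ((le_abs_self R).trans_lt (lt_add_one _)) (frontier_subset_closedBall hD hx)
    exact φ.eventuallyEq_one_of_mem_ball hxR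
  let X : Euc n → Euc n := fun x => φ x • x
  have hX : ContDiff ℝ 1 X := hφ.smul contDiff_id
  have hXc : HasCompactSupport X := hφc.smul_right (f' := fun x => x)
  have hXid : ∀ x ∈ frontier D.carrier, X =ᶠ[𝓝 x] id := fun x hx => by
    filter_upwards [hφ₁ x hx] with y hy
    simp [X, hy]
  have hdiv : ∫ x, tangentDivg X (D.nu x) x ∂D.boundaryMeasure =
      n * D.boundaryMeasure.real univ := by
    have : (fun x => tangentDivg X (D.nu x) x) =ᵐ[D.boundaryMeasure] fun _ => (n : ℝ) := by
      filter_upwards [D.ae_mem_frontier] with x hx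
      simp [tangentDivg, divg, (hXid x hx).fderiv_eq, D.norm_nu hx]
    rw [integral_congr_ae this, integral_const, smul_eq_mul, mul_comm]
  rw [← hdiv, D.integral_tangentDivg hX hXc, ← integral_const_mul]
  refine integral_mono_ae (D.integrable_H_one_mul_inner_nu hX.continuous hXc)
    (D.integrable_H_one.abs.const_mul R) ?_
  filter_upwards [D.ae_mem_frontier] with x hx
  have hxR : ‖x‖ ≤ R := by simpa using frontier_subset_closedBall hD hx
  calc D.H 1 x * ⟪X x, D.nu x⟫ ≤ |D.H 1 x| * |⟪X x, D.nu x⟫| := by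
        rw [← abs_mul]; exact le_abs_self _
    _ ≤ |D.H 1 x| * (‖X x‖ * ‖D.nu x‖) := by gcongr; exact abs_real_inner_le_norm _ _
    _ ≤ R * |D.H 1 x| := by
        rw [(hXid x hx).self_of_nhds, D.norm_nu hx, mul_one, mul_comm, id]
        gcongr

lemma boundaryMeasure_real_univ_le (hn : 1 ≤ n) {c : ℝ≥0∞} (hc : c < ⊤)
    (hDc : ∫⁻ x in frontier D.carrier, ENNReal.ofReal (D.A x ^ n) ∂μH[(n : ℝ)] ≤ c) {R : ℝ}
    (hR : 0 < R) (hD : D.carrier ⊆ ball 0 R) :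
    D.boundaryMeasure.real univ ≤ (2 * R) ^ n * c.toReal := by
  set m := D.boundaryMeasure.real univ
  have hH : ∫ x, |D.H 1 x| ∂D.boundaryMeasure ≤
      n * (2 * R)⁻¹ * m + n * (2 * R) ^ (n - 1) * c.toReal := by
    have := setIntegral_abs_H_one_le hn hc hDc (t := (2 * R)⁻¹) (by positivity) univ
    rwa [Measure.restrict_univ, inv_pow, inv_inv] at this
  have hle : n * m ≤ n * (m / 2 + R * (2 * R) ^ (n - 1) * c.toReal) :=
    calc n * m ≤ R * (n * (2 * R)⁻¹ * m + n * (2 * R) ^ (n - 1) * c.toReal) :=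
          (natCast_mul_boundaryMeasure_le hD).trans (by gcongr)
      _ = _ := by field
  have := le_of_mul_le_mul_left hle (by exact_mod_cast hn)
  rw [← mul_pow_sub_one (by lia : n ≠ 0) (2 * R)]
  linarith

end C2Domain

/-- Weak convergence of the measures `σ i` to `τ` along `l`, tested on bounded continuous functions.
It is `Tendsto` for the topology of `FiniteMeasure`, without bundling the measures. -/
def TendstoWeakly {ι E : Type*} [TopologicalSpace E] [MeasurableSpace E] (σ : ι → Measure E)
    (l : Filter ι) (τ : Measure E) : Prop :=
  ∀ g : E → ℝ, Continuous g → (∃ K, ∀ x, |g x| ≤ K) →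
    Tendsto (fun i => ∫ x, g x ∂σ i) l (𝓝 (∫ x, g x ∂τ))

lemma exists_finiteMeasure_tendstoWeakly {E : Type*} [MetricSpace E] [MeasurableSpace E]
    [BorelSpace E] (F : Ultrafilter ℕ) (σ : ℕ → Measure E) [∀ ℓ, IsFiniteMeasure (σ ℓ)] {C : ℝ}
    {S : Set E} (hS : IsCompact S) (hC : ∀ ℓ, (σ ℓ).real univ ≤ C) (hσS : ∀ ℓ, σ ℓ Sᶜ = 0) :
    ∃ τ : Measure E, IsFiniteMeasure τ ∧ TendstoWeakly σ F τ := by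
  let f : ℕ → FiniteMeasure E := fun ℓ => ⟨σ ℓ, inferInstance⟩
  have hf (ℓ : ℕ) : f ℓ ∈ {μ : FiniteMeasure E | μ.mass ≤ C.toNNReal ∧ μ Sᶜ = 0} :=
    ⟨NNReal.coe_le_coe.1 ((hC ℓ).trans (Real.le_coe_toNNReal C)),
      (FiniteMeasure.null_iff_toMeasure_null _ _).2 (hσS ℓ)⟩
  obtain ⟨τ, -, hlim⟩ := (isCompact_setOfPred_finiteMeasure_le_of_isCompact C.toNNReal
    hS).ultrafilter_le_nhds' (F.map f)
      (Filter.Eventually.of_forall (f := (F : Filter ℕ)) hf)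
  refine ⟨τ, inferInstance, fun g hg ⟨K, hK⟩ => ?_⟩
  have hlim : Tendsto f F (𝓝 τ) := hlim
  exact FiniteMeasure.tendsto_iff_forall_integral_tendsto.1 hlim
    (BoundedContinuousFunction.ofNormedAddCommGroup g hg K hK)

variable {n : ℕ}

/-- The volume, inside the unit ball, between the rescaling of `A` at `x` with scale `r` and the
half space with exterior normal `v`; `HalfSpaceBlowup A x v` says that it vanishes as `r → 0⁺`. -/
def blowupDefect (A : Set (Euc n)) (x v : Euc n) (r : ℝ) : ℝ≥0∞ :=
  volume {y ∈ ball (0 : Euc n) 1 | ¬ ((x + r • y ∈ A) ↔ ⟪y, v⟫ < 0)}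

/-- The volume, inside the unit ball, between the half spaces with exterior normals `v`, `w`. -/
def halfSpaceDist (v w : Euc n) : ℝ≥0∞ :=
  volume {y ∈ ball (0 : Euc n) 1 | ¬ (⟪y, v⟫ < 0 ↔ ⟪y, w⟫ < 0)}

lemma halfSpaceDist_comm (v w : Euc n) : halfSpaceDist v w = halfSpaceDist w v := by
  simp only [halfSpaceDist, iff_comm]

lemma blowupDefect_le_add (A : Set (Euc n)) (x v w : Euc n) (r : ℝ) :
    blowupDefect A x v r ≤ blowupDefect A x w r + halfSpaceDist v w := by
  refine (measure_mono ?_).trans (measure_union_le _ _)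
  rintro y ⟨hy, hne⟩
  by_cases hw : x + r • y ∈ A ↔ ⟪y, w⟫ < 0
  · exact .inr ⟨hy, fun h => hne (hw.trans h.symm)⟩
  · exact .inl ⟨hy, hw⟩

lemma blowupDefect_le_volume_ball (A : Set (Euc n)) (x v : Euc n) (r : ℝ) :
    blowupDefect A x v r ≤ volume (ball (0 : Euc n) 1) :=
  measure_mono (sep_subset _ _)

lemma blowupDefect_le_two_pow_mul (A : Set (Euc n)) (x v : Euc n) {r r' : ℝ} (hr : 0 < r)
    (hrr' : r ≤ r') (hr'r : r' ≤ 2 * r) :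
    blowupDefect A x v r ≤ 2 ^ (n + 1) * blowupDefect A x v r' := by
  have hr' : 0 < r' := hr.trans_le hrr'
  have hs : 0 < r / r' := by positivity
  have hsub : {y ∈ ball (0 : Euc n) 1 | ¬ ((x + r • y ∈ A) ↔ ⟪y, v⟫ < 0)} ⊆
      (fun y => (r / r') • y) ⁻¹'
        {y ∈ ball (0 : Euc n) 1 | ¬ ((x + r' • y ∈ A) ↔ ⟪y, v⟫ < 0)} := by
    rintro y ⟨hy, hne⟩
    refine ⟨?_, ?_⟩
    · rw [mem_ball_zero_iff, norm_smul, Real.norm_of_nonneg hs.le]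
      exact (mul_le_of_le_one_left (norm_nonneg y) ((div_le_one hr').2 hrr')).trans_lt
        (mem_ball_zero_iff.1 hy)
    · rwa [smul_smul, mul_div_cancel₀ _ hr'.ne', real_inner_smul_left, ← smul_eq_mul,
        smul_neg_iff_of_pos_left hs]
  refine (measure_mono hsub).trans ?_
  rw [Measure.addHaar_preimage_smul _ hs.ne', finrank_euclideanSpace_fin,
    abs_of_pos (by positivity), ← inv_pow, inv_div, ENNReal.ofReal_pow (by positivity)]
  unfold blowupDefect
  gcongr
  rw [← ENNReal.ofReal_ofNat 2]
  exact ENNReal.ofReal_le_ofReal ((div_le_iff₀ hr).2 hr'r)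

lemma tendsto_halfSpaceDist {v : Euc n} (hv : v ≠ 0) :
    Tendsto (halfSpaceDist v) (𝓝 v) (𝓝 0) := by
  have hH (w : Euc n) : MeasurableSet {y : Euc n | ⟪y, w⟫ < 0} :=
    measurableSet_lt (by fun_prop) measurable_const
  have : IsFiniteMeasure (volume.restrict (ball (0 : Euc n) 1)) :=
    isFiniteMeasure_restrict.2 measure_ball_lt_top.ne
  have hae : ∀ᵐ y : Euc n ∂volume.restrict (ball 0 1), ∀ᶠ w in 𝓝 v,
      (y ∈ {y : Euc n | ¬ (⟪y, v⟫ < 0 ↔ ⟪y, w⟫ < 0)} ↔ y ∈ (∅ : Set (Euc n))) := by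
    have hL : innerSL ℝ v ≠ 0 := fun h => hv (by simpa using congr($h v))
    filter_upwards [ae_restrict_of_ae (ae_apply_ne_zero volume hL)] with y hy
    have hcont : ContinuousAt (fun w : Euc n => ⟪y, w⟫) v := by fun_prop
    rw [innerSL_apply_apply, real_inner_comm] at hy
    rcases hy.lt_or_gt with h | h
    · filter_upwards [hcont.eventually_lt continuousAt_const h] with w hw
      simp [h, hw]
    · filter_upwards [continuousAt_const.eventually_lt hcont h] with w hw
      simp [not_lt.2 h.le, not_lt.2 hw.le]
  have hlim := tendsto_measure_of_ae_tendsto_indicator_of_isFiniteMeasure (𝓝 v)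
    MeasurableSet.empty (fun w => ((hH v).iff (hH w)).compl) hae
  rw [measure_empty] at hlim
  refine hlim.congr fun w => ?_
  rw [Measure.restrict_apply' measurableSet_ball, inter_comm]
  rfl

lemma measurable_blowupDefect {A : Set (Euc n)} (hA : MeasurableSet A) (v : Euc n) (r : ℝ) :
    Measurable fun x => blowupDefect A x v r := by
  have hA' : MeasurableSet {p : Euc n × Euc n | p.1 + r • p.2 ∈ A} :=
    (by fun_prop : Measurable fun p : Euc n × Euc n => p.1 + r • p.2) hA
  have hv : MeasurableSet {p : Euc n × Euc n | ⟪p.2, v⟫ < 0} :=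
    measurableSet_lt (by fun_prop) measurable_const
  exact measurable_measure_prodMk_left
    ((measurable_snd measurableSet_ball).inter (hA'.iff hv).compl)

/-- The upper limit of the blow-up defects along the scales `2⁻ʲ`; by doubling its vanishing
characterizes the blow-ups along all scales. -/
def dyadicDefect (A : Set (Euc n)) (x v : Euc n) : ℝ≥0∞ :=
  limsup (fun j : ℕ => blowupDefect A x v (2⁻¹ ^ j)) atTop

lemma measurable_dyadicDefect {A : Set (Euc n)} (hA : MeasurableSet A) (v : Euc n) :
    Measurable fun x => dyadicDefect A x v :=
  .limsup fun _ => measurable_blowupDefect hA v _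

lemma dyadicDefect_le_add (A : Set (Euc n)) (x v w : Euc n) :
    dyadicDefect A x v ≤ dyadicDefect A x w + halfSpaceDist v w := by
  unfold dyadicDefect
  rw [← limsup_add_const _ _ _ (by isBoundedDefault) (by isBoundedDefault)]
  exact limsup_le_limsup (.of_forall fun j => blowupDefect_le_add A x v w _)

lemma continuousAt_dyadicDefect (A : Set (Euc n)) (x : Euc n) {v : Euc n} (hv : v ≠ 0) :
    ContinuousAt (dyadicDefect A x) v := by
  have hfin : dyadicDefect A x v ≠ ⊤ := ne_top_of_le_ne_top measure_ball_lt_top.ne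
    (limsup_le_of_le (h := .of_forall fun _ => blowupDefect_le_volume_ball A x v _))
  refine (ENNReal.tendsto_nhds hfin).2 fun ε hε => ?_
  filter_upwards [(tendsto_halfSpaceDist hv).eventually_lt_const hε] with w hw
  have hvw := dyadicDefect_le_add A x v w
  have hwv := dyadicDefect_le_add A x w v
  rw [halfSpaceDist_comm] at hwv
  exact ⟨tsub_le_iff_right.2 (hvw.trans (by gcongr)), hwv.trans (by gcongr)⟩

lemma halfSpaceBlowup_iff_dyadicDefect_eq_zero {A : Set (Euc n)} {x v : Euc n} :
    HalfSpaceBlowup A x v ↔ dyadicDefect A x v = 0 := by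
  refine ⟨fun h => ((show Tendsto (blowupDefect A x v) _ _ from h).comp
    (tendsto_pow_atTop_nhdsWithin_zero_of_lt_one (by norm_num) (by norm_num))).limsup_eq,
    fun h => ?_⟩
  have hlim : Tendsto (fun j : ℕ => 2 ^ (n + 1) * blowupDefect A x v (2⁻¹ ^ j)) atTop (𝓝 0) := by
    have := tendsto_of_le_liminf_of_limsup_le bot_le h.le
    simpa using ENNReal.Tendsto.const_mul this (.inr (by simp))
  refine ENNReal.tendsto_nhds_zero.2 fun ε hε => ?_
  obtain ⟨J, hJ⟩ := eventually_atTop.1 (ENNReal.tendsto_nhds_zero.1 hlim ε hε)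
  filter_upwards [Ioo_mem_nhdsGT (show (0 : ℝ) < 2⁻¹ ^ J by positivity)] with r hr
  obtain ⟨j, hjr, hrj⟩ := exists_nat_pow_near_of_lt_one hr.1
    (hr.2.le.trans (pow_le_one₀ (by norm_num) (by norm_num))) (by norm_num : (0 : ℝ) < 2⁻¹)
    (by norm_num)
  have hJj : J < j + 1 :=
    (pow_lt_pow_iff_right_of_lt_one₀ (by norm_num) (by norm_num)).1 (hjr.trans hr.2)
  refine (blowupDefect_le_two_pow_mul A x v hr.1 hrj ?_).trans (hJ j (by lia))
  rw [pow_succ] at hjr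
  linarith

lemma redBdry_eq_setOf_iInf_dyadicDefect (A : Set (Euc n)) {q : ℕ → sphere (0 : Euc n) 1}
    (hq : DenseRange q) : redBdry A = {x | ⨅ i, dyadicDefect A x (q i) = 0} := by
  ext x
  let ψ : sphere (0 : Euc n) 1 → ℝ≥0∞ := fun v => dyadicDefect A x v
  have hψ : Continuous ψ := continuous_iff_continuousAt.2 fun v =>
    (continuousAt_dyadicDefect A x (ne_zero_of_mem_unit_sphere v)).comp continuousAt_subtype_val
  change (∃ v : Euc n, ‖v‖ = 1 ∧ HalfSpaceBlowup A x v) ↔ ⨅ i, ψ (q i) = 0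
  constructor
  · rintro ⟨v, hv, hb⟩
    let w : sphere (0 : Euc n) 1 := ⟨v, mem_sphere_zero_iff_norm.2 hv⟩
    have hw : ψ w = 0 := halfSpaceBlowup_iff_dyadicDefect_eq_zero.1 hb
    refine le_antisymm (le_of_forall_gt fun ε hε => ?_) bot_le
    obtain ⟨i, hi⟩ := hq.exists_mem_open (isOpen_lt hψ continuous_const) ⟨w, hw.trans_lt hε⟩
    exact (iInf_le _ i).trans_lt hi
  · intro hinf
    have : Nonempty (sphere (0 : Euc n) 1) := ⟨q 0⟩
    obtain ⟨v, hv⟩ := hψ.exists_forall_le (by simp)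
    exact ⟨v, norm_eq_of_mem_sphere v, halfSpaceBlowup_iff_dyadicDefect_eq_zero.2
      (le_antisymm ((le_iInf fun i => hv (q i)).trans_eq hinf) bot_le)⟩

theorem measurableSet_redBdry {A : Set (Euc n)} (hA : MeasurableSet A) :
    MeasurableSet (redBdry A) := by
  have : Nonempty (sphere (0 : Euc n) 1) := (NormedSpace.sphere_nonempty.2 zero_le_one).to_subtype
  rw [redBdry_eq_setOf_iInf_dyadicDefect A (TopologicalSpace.denseRange_denseSeq _)]
  exact Measurable.iInf (fun i => measurable_dyadicDefect hA _) (measurableSet_singleton 0)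

lemma nuStar_spec {A : Set (Euc n)} {x : Euc n} (hx : x ∈ redBdry A) :
    ‖nuStar A x‖ = 1 ∧ HalfSpaceBlowup A x (nuStar A x) := by
  have hx : ∃ v : Euc n, ‖v‖ = 1 ∧ HalfSpaceBlowup A x v := hx
  rw [nuStar, dif_pos hx]
  exact hx.choose_spec

lemma eq_of_norm_eq_one_of_norm_le_one_of_one_le_inner {E : Type*} [NormedAddCommGroup E]
    [InnerProductSpace ℝ E] {v w : E} (hv : ‖v‖ = 1) (hw : ‖w‖ ≤ 1) (hvw : 1 ≤ ⟪v, w⟫) :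
    v = w := by
  have hsq : ‖v - w‖ ^ 2 ≤ 0 := by
    rw [norm_sub_sq_real, hv]
    linarith [pow_le_one₀ (norm_nonneg w) hw (n := 2)]
  exact sub_eq_zero.1 (norm_eq_zero.1 (pow_eq_zero_iff two_ne_zero |>.1
    (le_antisymm hsq (sq_nonneg _))))

namespace GaussGreenOn

variable {n : ℕ} {A : Set (Euc n)} {τ : Measure (Euc n)} {N : Euc n → Euc n}

theorem eq_hausdorffMeasure_restrict [IsFiniteMeasure τ] (h : GaussGreenOn A univ τ N)
    (hA : MeasurableSet A) (hN : ∀ x, ‖N x‖ ≤ 1) (hτ : τ univ ≤ μH[(n : ℝ)] (redBdry A)) :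
    τ = μH[(n : ℝ)].restrict (redBdry A) := by
  have hle : μH[(n : ℝ)].restrict (redBdry A) ≤ τ := Measure.le_iff.2 fun s hs => by
    rw [Measure.restrict_apply hs]
    exact (h.hausdorffMeasure_le hA isOpen_univ hN (T := s ∩ redBdry A) (by simp)).trans
      (measure_mono inter_subset_left)
  have : IsFiniteMeasure (μH[(n : ℝ)].restrict (redBdry A)) := isFiniteMeasure_of_le τ hle
  refine (Measure.eq_of_le_of_measure_univ_eq hle (le_antisymm (hle univ) ?_)).symm
  rwa [Measure.restrict_apply_univ]

lemma eventually_mul_pow_le_mul_measureReal_closedBall [IsFiniteMeasure τ] {U : Set (Euc n)}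
    (h : GaussGreenOn A U τ N) (hA : MeasurableSet A) (hU : IsOpen U) (hN : Integrable N τ)
    {x v : Euc n} (hx : x ∈ U) (hv : ‖v‖ = 1) (hb : HalfSpaceBlowup A x v)
    (hleb : Tendsto (fun r : ℝ => ⨍ y in closedBall x r, ‖N y - N x‖ ∂τ) (𝓝[>] 0) (𝓝 0))
    {a b c : ℝ} (ha : 0 ≤ a) (hva : ⟪v, N x⟫ ≤ a) (hab : a < b) (hc : c < 2 ^ n) :
    ∀ᶠ r in 𝓝[>] (0 : ℝ), c * r ^ n ≤ b * τ.real (closedBall x r) := by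
  have hNx : Integrable (fun y => ‖N y - N x‖) τ := (hN.sub (integrable_const _)).norm
  filter_upwards [hleb.eventually_lt_const (sub_pos.2 hab),
    h.eventually_forall_mul_pow_le_setIntegral_closedBall hA hU hx hv hb hc] with r hr hf
  have hv_le (y : Euc n) : ⟪v, N y⟫ ≤ a + ‖N y - N x‖ := by
    have := real_inner_le_norm v (N y - N x)
    rw [inner_sub_right, hv, one_mul] at this
    linarith
  calc c * r ^ n
    _ ≤ ∫ y in closedBall x r, (a + ‖N y - N x‖) ∂τ :=
        hf _ ((integrable_const a).add hNx).integrableOn (fun y => by positivity) hv_le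
    _ = τ.real (closedBall x r) * (a + ⨍ y in closedBall x r, ‖N y - N x‖ ∂τ) := by
        rw [integral_add (integrable_const _) hNx.integrableOn, setIntegral_const, smul_eq_mul,
          mul_add, ← measure_smul_setAverage _ (measure_ne_top τ _), smul_eq_mul]
    _ ≤ b * τ.real (closedBall x r) := by
        rw [mul_comm]
        gcongr
        linarith

lemma measure_eq_zero_of_inner_nuStar_le [IsFiniteMeasure τ] (h : GaussGreenOn A univ τ N)
    (hA : MeasurableSet A) (hN : Integrable N τ)
    (hτ : τ = μH[(n : ℝ)].restrict (redBdry A)) {a : ℝ} (ha₀ : 0 ≤ a) (ha : a < 1)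
    {T : Set (Euc n)} (hTA : T ⊆ redBdry A) (hTa : ∀ x ∈ T, ⟪nuStar A x, N x⟫ ≤ a)
    (hleb : ∀ x ∈ T,
      Tendsto (fun r : ℝ => ⨍ y in closedBall x r, ‖N y - N x‖ ∂τ) (𝓝[>] 0) (𝓝 0)) :
    τ T = 0 := by
  obtain ⟨b, hab, hb⟩ := exists_between ha
  obtain ⟨c, hbc, hc⟩ := exists_between hb
  have hb₀ : 0 < b := ha₀.trans_lt hab
  have hc₀ : 0 < c := hb₀.trans hbc
  have hle : ENNReal.ofReal (c / b) * μH[(n : ℝ)] T ≤ τ T := by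
    refine mul_hausdorffMeasure_le_of_density ENNReal.ofReal_ne_top fun x hx δ hδ => ?_
    obtain ⟨hv, hblow⟩ := nuStar_spec (hTA hx)
    have hev := h.eventually_mul_pow_le_mul_measureReal_closedBall hA isOpen_univ hN (mem_univ x)
      hv hblow (hleb x hx) ha₀ (hTa x hx) hab (mul_lt_of_lt_one_left (pow_pos two_pos n) hc)
    obtain ⟨r, hr, hrδ⟩ := (hev.and (Ioo_mem_nhdsGT hδ)).exists
    have hr₀ := hrδ.1
    refine ⟨r, hrδ, ?_⟩
    rw [← ENNReal.ofReal_pow (by positivity), ← ENNReal.ofReal_mul (by positivity)]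
    refine ENNReal.ofReal_le_of_le_toReal ?_
    rw [div_mul_eq_mul_div, div_le_iff₀' hb₀, mul_pow, ← mul_assoc]
    exact hr
  have hT : μH[(n : ℝ)] T = τ T := by
    rw [hτ, Measure.restrict_eq_self _ hTA]
  have hfin := measure_ne_top τ T
  have hle_real := ENNReal.toReal_mono hfin (hT ▸ hle)
  rw [ENNReal.toReal_mul, ENNReal.toReal_ofReal (by positivity)] at hle_real
  by_contra h₀
  exact hle_real.not_gt (lt_mul_of_one_lt_left (ENNReal.toReal_pos h₀ hfin)
    ((one_lt_div hb₀).2 hbc))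

theorem ae_eq_nuStar [IsFiniteMeasure τ] (h : GaussGreenOn A univ τ N) (hA : MeasurableSet A)
    (hN : AEStronglyMeasurable N τ) (hN₁ : ∀ x, ‖N x‖ ≤ 1)
    (hτ : τ = μH[(n : ℝ)].restrict (redBdry A)) : nuStar A =ᵐ[τ] N := by
  have hNi : Integrable N τ := .of_bound hN 1 (ae_of_all _ hN₁)
  have hleb : ∀ᵐ x ∂τ, Tendsto (fun r : ℝ => ⨍ y in closedBall x r, ‖N y - N x‖ ∂τ)
      (𝓝[>] 0) (𝓝 0) := by
    filter_upwards [(Besicovitch.vitaliFamily τ).ae_tendsto_average_norm_sub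
      hNi.locallyIntegrable] with x hx
    exact hx.comp (Besicovitch.tendsto_filterAt τ x)
  have hmem : ∀ᵐ x ∂τ, x ∈ redBdry A := hτ ▸ ae_restrict_mem (measurableSet_redBdry hA)
  obtain ⟨u, -, hu, hu_lim⟩ := exists_seq_strictMono_tendsto' (zero_lt_one (α := ℝ))
  have hinner (m : ℕ) : ∀ᵐ x ∂τ, x ∈ redBdry A →
      Tendsto (fun r : ℝ => ⨍ y in closedBall x r, ‖N y - N x‖ ∂τ) (𝓝[>] 0) (𝓝 0) →
      u m < ⟪nuStar A x, N x⟫ := by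
    have hnull := h.measure_eq_zero_of_inner_nuStar_le hA hNi hτ (hu m).1.le (hu m).2
      (T := {x | x ∈ redBdry A ∧ ⟪nuStar A x, N x⟫ ≤ u m ∧
        Tendsto (fun r : ℝ => ⨍ y in closedBall x r, ‖N y - N x‖ ∂τ) (𝓝[>] 0) (𝓝 0)})
      (fun _ hx => hx.1) (fun _ hx => hx.2.1) fun _ hx => hx.2.2
    filter_upwards [measure_eq_zero_iff_ae_notMem.1 hnull] with x hx hxA hxl
    exact not_le.1 fun hle => hx ⟨hxA, hle, hxl⟩
  filter_upwards [hleb, hmem, ae_all_iff.2 hinner] with x hxl hxA hx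
  exact eq_of_norm_eq_one_of_norm_le_one_of_one_le_inner (nuStar_spec hxA).1 (hN₁ x)
    (le_of_tendsto' hu_lim fun m => (hx m hxA hxl).le)

end GaussGreenOn

theorem tendsto_setIntegral_of_tendsto_measure_symmDiff {α ι : Type*} [MeasurableSpace α]
    {μ : Measure α} {l : Filter ι} {S : ι → Set α} {A : Set α} (hS : ∀ i, MeasurableSet (S i))
    (hA : MeasurableSet A) (h : Tendsto (fun i => μ (symmDiff (S i) A)) l (𝓝 0)) {f : α → ℝ}
    (hf : Integrable f μ) {C : ℝ} (hC : ∀ x, |f x| ≤ C) :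
    Tendsto (fun i => ∫ x in S i, f x ∂μ) l (𝓝 (∫ x in A, f x ∂μ)) := by
  rw [tendsto_iff_norm_sub_tendsto_zero]
  have hlim : Tendsto (fun i => C * (μ (symmDiff (S i) A)).toReal) l (𝓝 0) := by
    simpa using ((ENNReal.tendsto_toReal ENNReal.zero_ne_top).comp h).const_mul C
  refine squeeze_zero' (Eventually.of_forall fun i => norm_nonneg _) ?_ hlim
  filter_upwards [h.eventually_lt_const ENNReal.zero_lt_top] with i hi
  refine abs_setIntegral_sub_setIntegral_le hf (hS i) hA hC (fun x _ hx => ?_) hi.ne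
  rw [mem_symmDiff]
  tauto

section QuadraticForm

variable {F : Type*} [NormedAddCommGroup F] [InnerProductSpace ℝ F]

lemma abs_inner_apply_self_sub_le (T : F →L[ℝ] F) {u : F} (hu : ‖u‖ = 1) (v : F) {η : ℝ}
    (hη : 0 < η) : |⟪T u, u⟫ - ⟪T v, v⟫| ≤ ‖T‖ * ((1 + η⁻¹) * ‖u - v‖ ^ 2 + η) := by
  have hexpand : ⟪T u, u⟫ - ⟪T v, v⟫ =
      ⟪T (u - v), u⟫ + ⟪T u, u - v⟫ - ⟪T (u - v), u - v⟫ := by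
    simp only [map_sub, inner_sub_left, inner_sub_right]
    ring
  have hyoung : 2 * ‖u - v‖ ≤ η⁻¹ * ‖u - v‖ ^ 2 + η := by
    have hsq : 0 ≤ η⁻¹ * (‖u - v‖ - η) ^ 2 := by positivity
    have : η⁻¹ * (‖u - v‖ - η) ^ 2 = η⁻¹ * ‖u - v‖ ^ 2 - 2 * ‖u - v‖ + η := by
      field_simp
      ring
    linarith
  calc |⟪T u, u⟫ - ⟪T v, v⟫|
    _ ≤ |⟪T (u - v), u⟫| + |⟪T u, u - v⟫| + |⟪T (u - v), u - v⟫| := by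
        rw [hexpand]
        exact (abs_sub _ _).trans (by gcongr; exact abs_add_le _ _)
    _ ≤ ‖T‖ * ‖u - v‖ * ‖u‖ + ‖T‖ * ‖u‖ * ‖u - v‖ + ‖T‖ * ‖u - v‖ * ‖u - v‖ := by
        gcongr <;> exact abs_inner_apply_le _ _ _
    _ = ‖T‖ * (‖u - v‖ ^ 2 + 2 * ‖u - v‖) := by
        rw [hu]
        ring
    _ ≤ ‖T‖ * ((1 + η⁻¹) * ‖u - v‖ ^ 2 + η) := by
        gcongr ‖T‖ * ?_
        linarith

variable {E : Type*} [MeasurableSpace E] {μ : Measure E} [IsFiniteMeasure μ] {ν X : E → F}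

lemma integral_norm_sub_sq (hν : AEStronglyMeasurable ν μ) (hν₁ : ∀ᵐ x ∂μ, ‖ν x‖ = 1)
    (hX : MemLp X 2 μ) :
    ∫ x, ‖ν x - X x‖ ^ 2 ∂μ = μ.real univ - 2 * ∫ x, ⟪X x, ν x⟫ ∂μ + ∫ x, ‖X x‖ ^ 2 ∂μ := by
  have hinner : Integrable (fun x => ⟪X x, ν x⟫) μ := by
    refine (hX.integrable one_le_two).norm.mono' (hX.1.inner hν) ?_
    filter_upwards [hν₁] with x hx
    simpa [hx] using norm_inner_le_norm (𝕜 := ℝ) (X x) (ν x)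
  have hexpand : (fun x => ‖ν x - X x‖ ^ 2) =ᵐ[μ] fun x => 1 - 2 * ⟪X x, ν x⟫ + ‖X x‖ ^ 2 := by
    filter_upwards [hν₁] with x hx
    rw [norm_sub_sq_real, hx, real_inner_comm, one_pow]
  have hlinear : Integrable (fun x => 1 - 2 * ⟪X x, ν x⟫) μ :=
    (integrable_const _).sub (hinner.const_mul 2)
  rw [integral_congr_ae hexpand, integral_add hlinear hX.norm.integrable_sq,
    integral_sub (integrable_const _) (hinner.const_mul 2), integral_const_mul]
  simp

lemma abs_integral_inner_apply_self_sub_le [TopologicalSpace E] [OpensMeasurableSpace E]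
    [SecondCountableTopologyEither E (F →L[ℝ] F)] {T : E → F →L[ℝ] F} (hT : Continuous T)
    {K : ℝ} (hK : ∀ x, ‖T x‖ ≤ K) (hν : AEStronglyMeasurable ν μ) (hν₁ : ∀ᵐ x ∂μ, ‖ν x‖ = 1)
    (hX : AEStronglyMeasurable X μ) {C : ℝ} (hC : ∀ x, ‖X x‖ ≤ C) {η : ℝ} (hη : 0 < η) :
    |∫ x, ⟪T x (ν x), ν x⟫ ∂μ - ∫ x, ⟪T x (X x), X x⟫ ∂μ| ≤
      K * ((1 + η⁻¹) * ∫ x, ‖ν x - X x‖ ^ 2 ∂μ + η * μ.real univ) := by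
  have hL₂ : MemLp (ν - X) 2 μ :=
    (MemLp.of_bound hν 1 (hν₁.mono fun x hx => hx.le)).sub (.of_bound hX C (ae_of_all _ hC))
  have hsq : Integrable (fun x => (1 + η⁻¹) * ‖ν x - X x‖ ^ 2) μ :=
    hL₂.norm.integrable_sq.const_mul _
  rw [← Real.norm_eq_abs,
    ← integral_sub (integrable_inner_apply_self hT hK hν (hν₁.mono fun x hx => hx.le))
    (integrable_inner_apply_self hT hK hX (ae_of_all _ hC))]
  refine (norm_integral_le_of_norm_le ((hsq.add (integrable_const η)).const_mul K) ?_).trans_eq ?_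
  · filter_upwards [hν₁] with x hx
    refine (abs_inner_apply_self_sub_le (T x) hx (X x) hη).trans ?_
    simp only [Pi.add_apply]
    gcongr
    exact hK x
  · rw [integral_const_mul, integral_add' hsq (integrable_const _), integral_const_mul]
    simp [mul_comm]

end QuadraticForm

section Reshetnyak

variable {E : Type*} [NormedAddCommGroup E] [NormedSpace ℝ E] [FiniteDimensional ℝ E]
  [MeasurableSpace E] [BorelSpace E] {F : Type*} [NormedAddCommGroup F] {τ : Measure E}
  [IsFiniteMeasure τ] {N : E → F}

lemma testFields.exists_integral_norm_sub_sq_le [NormedSpace ℝ F] (hN : MemLp N 2 τ) {ε : ℝ}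
    (hε : 0 < ε) : ∃ X : testFields E F, ∫ x, ‖N x - X.1 x‖ ^ 2 ∂τ ≤ ε := by
  obtain ⟨X, hXc, hX, hle⟩ := hN.exist_eLpNorm_sub_le (by norm_num) (by norm_num)
    (ε := √ε) (Real.sqrt_pos.2 hε)
  refine ⟨⟨X, hX, hXc⟩, ?_⟩
  have hNX : MemLp (N - X) 2 τ := hN.sub (hX.continuous.memLp_of_hasCompactSupport hXc)
  rw [hNX.eLpNorm_eq_integral_rpow_norm (by norm_num) (by norm_num),
    ENNReal.ofReal_le_ofReal_iff (Real.sqrt_nonneg _), ENNReal.toReal_ofNat, ← one_div,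
    ← Real.sqrt_eq_rpow, Real.sqrt_le_sqrt_iff hε.le] at hle
  simpa using hle

lemma testFields.exists_mul_integral_norm_sub_sq_lt [NormedSpace ℝ F] (hN : MemLp N 2 τ) {K ε : ℝ}
    (hK : 0 ≤ K) (hε : 0 < ε) : ∃ η > 0, ∃ X : testFields E F,
      K * ((1 + η⁻¹) * ∫ x, ‖N x - X.1 x‖ ^ 2 ∂τ + η * τ.real univ) < ε := by
  have hlim : Tendsto (fun η : ℝ => K * (η * τ.real univ)) (𝓝[>] 0) (𝓝 0) :=
    tendsto_nhdsWithin_of_tendsto_nhds (Continuous.tendsto' (by fun_prop) _ _ (by simp))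
  obtain ⟨η, hη, hη₀ : 0 < η⟩ :=
    ((hlim.eventually_lt_const (half_pos hε)).and self_mem_nhdsWithin).exists
  obtain ⟨X, hX⟩ := exists_integral_norm_sub_sq_le hN
    (ε := ε / (2 * (K + 1) * (1 + η⁻¹))) (by positivity)
  refine ⟨η, hη₀, X, ?_⟩
  have hX₂ : K * ((1 + η⁻¹) * ∫ x, ‖N x - X.1 x‖ ^ 2 ∂τ) ≤ ε / 2 :=
    calc K * ((1 + η⁻¹) * ∫ x, ‖N x - X.1 x‖ ^ 2 ∂τ)
      _ ≤ (K + 1) * ((1 + η⁻¹) * (ε / (2 * (K + 1) * (1 + η⁻¹)))) := by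
          gcongr
          linarith
      _ = ε / 2 := by field
  rw [mul_add]
  linarith

/-- Reshetnyak's continuity theorem for quadratic integrands. The two convergences give
`∫ ‖ν i - X‖² ∂(σ i) → ∫ ‖N - X‖² ∂τ` for every test field `X`, so a field that is `L²`-close to `N`
is eventually as close to `ν i`. -/
theorem tendsto_integral_inner_apply_self [InnerProductSpace ℝ F] {ι : Type*} {l : Filter ι}
    {σ : ι → Measure E} [∀ i, IsFiniteMeasure (σ i)] {ν : ι → E → F}
    (hν : ∀ i, AEStronglyMeasurable (ν i) (σ i)) (hν₁ : ∀ i, ∀ᵐ x ∂(σ i), ‖ν i x‖ = 1)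
    (hN : AEStronglyMeasurable N τ) (hN₁ : ∀ᵐ x ∂τ, ‖N x‖ = 1)
    (hσ : TendstoWeakly σ l τ)
    (hσν : ∀ X : testFields E F,
      Tendsto (fun i => ∫ x, ⟪X.1 x, ν i x⟫ ∂σ i) l (𝓝 (∫ x, ⟪X.1 x, N x⟫ ∂τ)))
    {T : E → F →L[ℝ] F} (hT : Continuous T) {K : ℝ} (hK : ∀ x, ‖T x‖ ≤ K) :
    Tendsto (fun i => ∫ x, ⟪T x (ν i x), ν i x⟫ ∂σ i) l (𝓝 (∫ x, ⟪T x (N x), N x⟫ ∂τ)) := by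
  refine Metric.tendsto_nhds.2 fun ε hε => ?_
  obtain ⟨η, hη, X, hX⟩ := testFields.exists_mul_integral_norm_sub_sq_lt
    (MemLp.of_bound hN 1 (hN₁.mono fun x hx => hx.le)) ((norm_nonneg _).trans (hK 0))
    (ε := ε / 4) (by positivity)
  have hXcont := X.2.1.continuous
  obtain ⟨C, hC⟩ := X.2.2.exists_bound_of_continuous hXcont
  have hσc {g : E → ℝ} (hg : Continuous g) (hg₀ : ∀ x, X.1 x = 0 → g x = 0) :
      Tendsto (fun i => ∫ x, g x ∂σ i) l (𝓝 (∫ x, g x ∂τ)) :=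
    hσ g hg ((X.2.2.mono' fun x hx => subset_tsupport _ (mt (hg₀ x) hx)).exists_bound_of_continuous
      hg)
  have hmass : Tendsto (fun i => (σ i).real univ) l (𝓝 (τ.real univ)) := by
    simpa using hσ (fun _ => 1) continuous_const ⟨1, by simp⟩
  have hdist : Tendsto (fun i => ∫ x, ‖ν i x - X.1 x‖ ^ 2 ∂σ i) l
      (𝓝 (∫ x, ‖N x - X.1 x‖ ^ 2 ∂τ)) := by
    rw [integral_norm_sub_sq hN hN₁ (hXcont.memLp_of_hasCompactSupport X.2.2)]
    refine ((hmass.sub ((hσν X).const_mul 2)).add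
      (hσc (g := fun x => ‖X.1 x‖ ^ 2) (by fun_prop) fun x hx => by simp [hx])).congr fun i => ?_
    exact (integral_norm_sub_sq (hν i) (hν₁ i) (hXcont.memLp_of_hasCompactSupport X.2.2)).symm
  have hquad := hσc (g := fun x => ⟪T x (X.1 x), X.1 x⟫) (by fun_prop) fun x hx => by simp [hx]
  have hN_X := abs_le.1 (abs_integral_inner_apply_self_sub_le hT hK hN hN₁
    hXcont.aestronglyMeasurable hC hη)
  have herror := ((hdist.const_mul (1 + η⁻¹)).add (hmass.const_mul η)).const_mul K
  filter_upwards [herror.eventually_lt_const hX,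
    Metric.tendsto_nhds.1 hquad (ε / 4) (by positivity)] with i hi hquad_i
  have hν_X := abs_le.1 (abs_integral_inner_apply_self_sub_le hT hK (hν i) (hν₁ i)
    hXcont.aestronglyMeasurable hC hη)
  rw [Real.dist_eq, abs_lt] at hquad_i ⊢
  constructor <;> linarith [hν_X.1, hν_X.2, hN_X.1, hN_X.2, hquad_i.1, hquad_i.2]

end Reshetnyak

lemma negp_nonneg (t : ℝ) : 0 ≤ negp t := neg_nonneg.2 (min_le_right t 0)

lemma negp_le_abs (t : ℝ) : negp t ≤ |t| :=
  neg_le.2 (le_min (neg_abs_le t) (neg_nonpos.2 (abs_nonneg t)))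

lemma abs_le_add_negp {M t : ℝ} (hM : 0 ≤ M) (ht : t ≤ M) : |t| ≤ M + negp t := by
  rcases le_total t 0 with h | h
  · rw [negp, min_eq_left h, abs_of_nonpos h]
    linarith
  · rw [abs_of_nonneg h]
    linarith [negp_nonneg t]

namespace C2Domain

variable {n : ℕ} (D : C2Domain n)

/-- The part of the boundary on which the mean curvature is at least `M`. -/
def meanCurvatureGE (M : ℝ) : Set (Euc n) := {x ∈ frontier D.carrier | M ≤ D.H 1 x}

lemma measurableSet_meanCurvatureGE (M : ℝ) : MeasurableSet (D.meanCurvatureGE M) :=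
  (D.continuousOn_H_one.preimage_isClosed_of_isClosed isClosed_frontier
    (isClosed_Ici (a := M))).measurableSet

lemma integrable_negp_H_one : Integrable (fun x => negp (D.H 1 x)) D.boundaryMeasure := by
  refine D.integrable_H_one.mono (D.aestronglyMeasurable_H_one.inf
    aestronglyMeasurable_const).neg (ae_of_all _ fun x => ?_)
  rw [Real.norm_of_nonneg (negp_nonneg _)]
  exact negp_le_abs _

lemma abs_H_one_le_add_indicator_add_negp {M : ℝ} (hM : 0 ≤ M) {x : Euc n}
    (hx : x ∈ frontier D.carrier) : |D.H 1 x| ≤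
      M + ((D.meanCurvatureGE M).indicator (fun x => |D.H 1 x|) x + negp (D.H 1 x)) := by
  by_cases h : M ≤ D.H 1 x
  · rw [indicator_of_mem (show x ∈ D.meanCurvatureGE M from ⟨hx, h⟩)]
    linarith [negp_nonneg (D.H 1 x)]
  · rw [indicator_of_notMem fun hxM => h hxM.2, zero_add]
    exact abs_le_add_negp hM (not_le.1 h).le

lemma abs_integral_H_one_mul_inner_nu_le {M : ℝ} (hM : 0 ≤ M) {X : Euc n → Euc n}
    (hX : Continuous X) (hXc : HasCompactSupport X) {K : ℝ} (hK : ∀ x, ‖X x‖ ≤ K) :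
    |∫ x, D.H 1 x * ⟪X x, D.nu x⟫ ∂D.boundaryMeasure| ≤ M * ∫ x, ‖X x‖ ∂D.boundaryMeasure +
      K * (∫ x in D.meanCurvatureGE M, |D.H 1 x| ∂D.boundaryMeasure +
        ∫ x, negp (D.H 1 x) ∂D.boundaryMeasure) := by
  have hXi : Integrable (fun x => M * ‖X x‖) D.boundaryMeasure :=
    (hX.integrable_of_hasCompactSupport hXc).norm.const_mul M
  have hHi : Integrable ((D.meanCurvatureGE M).indicator fun x => |D.H 1 x|) D.boundaryMeasure :=
    D.integrable_H_one.abs.indicator (D.measurableSet_meanCurvatureGE M)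
  have herror : Integrable (fun x => K * ((D.meanCurvatureGE M).indicator (fun x => |D.H 1 x|) x +
      negp (D.H 1 x))) D.boundaryMeasure := (hHi.add D.integrable_negp_H_one).const_mul K
  rw [← integral_indicator (D.measurableSet_meanCurvatureGE M),
    ← integral_add hHi D.integrable_negp_H_one, ← integral_const_mul, ← integral_const_mul,
    ← integral_add hXi herror, ← Real.norm_eq_abs]
  refine norm_integral_le_of_norm_le (hXi.add herror) ?_
  filter_upwards [D.ae_mem_frontier] with x hx
  have hinner : |⟪X x, D.nu x⟫| ≤ ‖X x‖ := by
    simpa [D.norm_nu hx] using abs_real_inner_le_norm (X x) (D.nu x)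
  have herror₀ : 0 ≤ (D.meanCurvatureGE M).indicator (fun x => |D.H 1 x|) x + negp (D.H 1 x) :=
    add_nonneg (indicator_nonneg (fun _ _ => abs_nonneg _) x) (negp_nonneg _)
  calc ‖D.H 1 x * ⟪X x, D.nu x⟫‖
    _ ≤ |D.H 1 x| * ‖X x‖ := by
        rw [norm_mul]
        exact mul_le_mul_of_nonneg_left hinner (abs_nonneg _)
    _ ≤ (M + ((D.meanCurvatureGE M).indicator (fun x => |D.H 1 x|) x + negp (D.H 1 x))) * ‖X x‖ :=
        mul_le_mul_of_nonneg_right (D.abs_H_one_le_add_indicator_add_negp hM hx) (norm_nonneg _)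
    _ ≤ M * ‖X x‖ +
          K * ((D.meanCurvatureGE M).indicator (fun x => |D.H 1 x|) x + negp (D.H 1 x)) := by
        rw [add_mul, mul_comm K]
        gcongr
        exact hK x

end C2Domain

theorem FiniteTotalCurvature.tendsto_setIntegral_abs_H_one {n : ℕ} (hn : 2 ≤ n)
    {Ω : ℕ → C2Domain n} (h : FiniteTotalCurvature Ω) {l : Filter ℕ} {B : ℕ → Set (Euc n)}
    (hB : Tendsto (fun ℓ => (Ω ℓ).boundaryMeasure.real (B ℓ)) l (𝓝 0)) :
    Tendsto (fun ℓ => ∫ x in B ℓ, |(Ω ℓ).H 1 x| ∂(Ω ℓ).boundaryMeasure) l (𝓝 0) := by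
  obtain ⟨c, hc, hΩc⟩ := h
  have hinv : Tendsto (fun t : ℝ => n * (t ^ (n - 1))⁻¹ * c.toReal) atTop (𝓝 0) := by
    simpa using ((tendsto_pow_atTop (by lia : n - 1 ≠ 0)).inv_tendsto_atTop.const_mul
      (n : ℝ)).mul_const c.toReal
  refine tendsto_order.2 ⟨fun a ha => .of_forall fun ℓ =>
    ha.trans_le (integral_nonneg fun x => abs_nonneg _), fun ε hε => ?_⟩
  obtain ⟨t, ht₀, ht⟩ :=
    ((eventually_gt_atTop 0).and (hinv.eventually_lt_const (half_pos hε))).exists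
  have hBt : Tendsto (fun ℓ => n * t * (Ω ℓ).boundaryMeasure.real (B ℓ)) l (𝓝 0) := by
    simpa using hB.const_mul (n * t)
  filter_upwards [hBt.eventually_lt_const (half_pos hε)] with ℓ hℓ
  linarith [C2Domain.setIntegral_abs_H_one_le (one_le_two.trans hn) hc (hΩc ℓ) ht₀ (B ℓ)]

theorem AsympMeanConvex.tendsto_integral_negp_H_one {n k : ℕ} (hk : 1 ≤ k) {Ω : ℕ → C2Domain n}
    (h : AsympMeanConvex Ω k) :
    Tendsto (fun ℓ => ∫ x, negp ((Ω ℓ).H 1 x) ∂(Ω ℓ).boundaryMeasure) atTop (𝓝 0) := by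
  refine ((ENNReal.tendsto_toReal ENNReal.zero_ne_top).comp
    (h 1 (Finset.mem_Icc.2 ⟨le_rfl, hk⟩))).congr fun ℓ => ?_
  exact (integral_eq_lintegral_of_nonneg_ae (ae_of_all _ fun x => negp_nonneg _)
    (Ω ℓ).integrable_negp_H_one.aestronglyMeasurable).symm

lemma tendsto_boundaryMeasure_real_meanCurvatureGE {n : ℕ} {Ω : ℕ → C2Domain n} {M : ℝ}
    {l : Filter ℕ} (h : Tendsto (fun ℓ => μH[(n : ℝ)] ((Ω ℓ).meanCurvatureGE M)) l (𝓝 0)) :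
    Tendsto (fun ℓ => (Ω ℓ).boundaryMeasure.real ((Ω ℓ).meanCurvatureGE M)) l (𝓝 0) := by
  refine ((ENNReal.tendsto_toReal ENNReal.zero_ne_top).comp h).congr fun ℓ => ?_
  rw [measureReal_def, C2Domain.boundaryMeasure, Measure.restrict_eq_self _ fun x hx => hx.1]
  rfl

/-- Convergence in volume and perimeter of domains in a fixed ball to a set whose reduced boundary
has finite measure. -/
structure StrictConvergence {n : ℕ} (Ω : ℕ → C2Domain n) (A : Set (Euc n)) : Prop where
  measurableSet : MeasurableSet A
  compactlySupported : CompactlySupportedSeq Ω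
  perimeter_ne_top : μH[(n : ℝ)] (redBdry A) ≠ ⊤
  volume : ConvInVolume Ω A
  perimeter : ConvInPerimeter Ω A

namespace C2Domain

variable {n : ℕ} (D : C2Domain n)

lemma boundaryMeasure_univ : D.boundaryMeasure univ = μH[(n : ℝ)] (frontier D.carrier) :=
  Measure.restrict_apply_univ _

lemma abs_integral_inner_nu_le {X : Euc n → Euc n} (hX : Continuous X)
    (hXc : HasCompactSupport X) :
    |∫ x, ⟪X x, D.nu x⟫ ∂D.boundaryMeasure| ≤ ∫ x, ‖X x‖ ∂D.boundaryMeasure := by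
  rw [← Real.norm_eq_abs]
  refine norm_integral_le_of_norm_le (hX.integrable_of_hasCompactSupport hXc).norm ?_
  filter_upwards [D.ae_mem_frontier] with x hx
  simpa [D.norm_nu hx] using norm_inner_le_norm (𝕜 := ℝ) (X x) (D.nu x)

end C2Domain

lemma FiniteTotalCurvature.strictConvergence {n : ℕ} (hn : 1 ≤ n) {Ω : ℕ → C2Domain n}
    (h : FiniteTotalCurvature Ω) {A : Set (Euc n)} (hA : MeasurableSet A)
    (hΩ : CompactlySupportedSeq Ω) (hvol : ConvInVolume Ω A) (hper : ConvInPerimeter Ω A) :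
    StrictConvergence Ω A := by
  refine ⟨hA, hΩ, ?_, hvol, hper⟩
  obtain ⟨c, hc, hΩc⟩ := h
  obtain ⟨R, hR⟩ := hΩ
  have hle (ℓ : ℕ) : μH[(n : ℝ)] (frontier (Ω ℓ).carrier) ≤
      ENNReal.ofReal ((2 * max R 1) ^ n * c.toReal) := by
    rw [← (Ω ℓ).boundaryMeasure_univ, ← ofReal_measureReal]
    exact ENNReal.ofReal_le_ofReal (C2Domain.boundaryMeasure_real_univ_le hn hc (hΩc ℓ)
      (by positivity) ((hR ℓ).trans (ball_subset_ball (le_max_left _ _))))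
  exact ne_top_of_le_ne_top ENNReal.ofReal_ne_top (le_of_tendsto' hper hle)

lemma TendstoWeakly.tendsto_integral_norm {ι E F : Type*} [TopologicalSpace E] [MeasurableSpace E]
    [NormedAddCommGroup F] {σ : ι → Measure E} {l : Filter ι} {τ : Measure E}
    (h : TendstoWeakly σ l τ) {X : E → F} (hX : Continuous X) (hXc : HasCompactSupport X) :
    Tendsto (fun i => ∫ x, ‖X x‖ ∂σ i) l (𝓝 (∫ x, ‖X x‖ ∂τ)) :=
  h _ hX.norm (by simpa using hXc.exists_bound_of_continuous hX)

section Functionals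

variable {n : ℕ}

/-- The distributional perimeter functional `X ↦ ∫_A div X`, in the normalization of `μH[n]`. -/
def divgFunctional (A : Set (Euc n)) : testFields (Euc n) (Euc n) →ₗ[ℝ] ℝ where
  toFun X := hausdorffScale n * ∫ x in A, divg X.1 x
  map_add' X Y := by
    have hX := X.2.1.of_le (m := 1) (by norm_cast)
    have hY := Y.2.1.of_le (m := 1) (by norm_cast)
    rw [← mul_add, ← integral_add (integrable_divg hX X.2.2) (integrable_divg hY Y.2.2)]
    exact congrArg _ (integral_congr_ae (ae_of_all _ fun x =>
      divg_add (hX.differentiable one_ne_zero x) (hY.differentiable one_ne_zero x)))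
  map_smul' a X := by
    have hX := X.2.1.of_le (m := 1) (by norm_cast)
    rw [RingHom.id_apply, smul_eq_mul, mul_left_comm, ← integral_const_mul a]
    exact congrArg _ (integral_congr_ae (ae_of_all _ fun x =>
      divg_const_smul (hX.differentiable one_ne_zero x) a))

/-- The first variation `X ↦ ∫ div_{vᗮ} X dμ` of a boundary measure `μ` with unit normal `v`. -/
def firstVariation {μ : Measure (Euc n)} [IsFiniteMeasure μ] {v : Euc n → Euc n}
    (hv : AEStronglyMeasurable v μ) (hv₁ : ∀ᵐ x ∂μ, ‖v x‖ ≤ 1) :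
    testFields (Euc n) (Euc n) →ₗ[ℝ] ℝ where
  toFun X := ∫ x, tangentDivg X.1 (v x) x ∂μ
  map_add' X Y := by
    have hX := X.2.1.of_le (m := 1) (by norm_cast)
    have hY := Y.2.1.of_le (m := 1) (by norm_cast)
    rw [← integral_add (integrable_tangentDivg hX X.2.2 hv hv₁)
      (integrable_tangentDivg hY Y.2.2 hv hv₁)]
    exact integral_congr_ae (ae_of_all _ fun x => tangentDivg_add
      (hX.differentiable one_ne_zero x) (hY.differentiable one_ne_zero x) (v x))
  map_smul' a X := by
    have hX := X.2.1.of_le (m := 1) (by norm_cast)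
    rw [RingHom.id_apply, smul_eq_mul, ← integral_const_mul]
    exact integral_congr_ae (ae_of_all _ fun x =>
      tangentDivg_const_smul (hX.differentiable one_ne_zero x) a (v x))

end Functionals

namespace StrictConvergence

variable {n : ℕ} {Ω : ℕ → C2Domain n} {A : Set (Euc n)} {X : Euc n → Euc n}

lemma tendsto_boundaryMeasure_real_univ (h : StrictConvergence Ω A) :
    Tendsto (fun ℓ => (Ω ℓ).boundaryMeasure.real univ) atTop
      (𝓝 (μH[(n : ℝ)] (redBdry A)).toReal) := by
  simpa only [measureReal_def, C2Domain.boundaryMeasure_univ, Function.comp_def] using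
    (ENNReal.tendsto_toReal h.perimeter_ne_top).comp h.perimeter

lemma measure_univ_eq (h : StrictConvergence Ω A) {l : Filter ℕ} [l.NeBot] (hl : l ≤ atTop)
    {τ : Measure (Euc n)} [IsFiniteMeasure τ]
    (hτ : TendstoWeakly (fun ℓ => (Ω ℓ).boundaryMeasure) l τ) :
    τ univ = μH[(n : ℝ)] (redBdry A) := by
  have hmass : Tendsto (fun ℓ => (Ω ℓ).boundaryMeasure.real univ) l (𝓝 (τ.real univ)) := by
    simpa using hτ (fun _ => 1) continuous_const ⟨1, by simp⟩
  exact (ENNReal.toReal_eq_toReal_iff' (measure_ne_top _ _) h.perimeter_ne_top).1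
    (tendsto_nhds_unique hmass (h.tendsto_boundaryMeasure_real_univ.mono_left hl))

lemma exists_finiteMeasure_tendstoWeakly (h : StrictConvergence Ω A) (F : Ultrafilter ℕ) :
    ∃ τ : Measure (Euc n), IsFiniteMeasure τ ∧
      TendstoWeakly (fun ℓ => (Ω ℓ).boundaryMeasure) F τ := by
  obtain ⟨R, hR⟩ := h.compactlySupported
  obtain ⟨C, hC⟩ := h.tendsto_boundaryMeasure_real_univ.bddAbove_range
  refine _root_.exists_finiteMeasure_tendstoWeakly F _ (isCompact_closedBall 0 R)
    (fun ℓ => hC (mem_range_self ℓ)) fun ℓ => ?_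
  refine mem_ae_iff.1 ((Ω ℓ).ae_mem_frontier.mono fun x hx => ?_)
  exact C2Domain.frontier_subset_closedBall (hR ℓ) hx

lemma tendsto_integral_inner_nu (h : StrictConvergence Ω A) (hX : ContDiff ℝ 1 X)
    (hXc : HasCompactSupport X) :
    Tendsto (fun ℓ => ∫ x, ⟪X x, (Ω ℓ).nu x⟫ ∂(Ω ℓ).boundaryMeasure) atTop
      (𝓝 (hausdorffScale n * ∫ x in A, divg X x)) := by
  obtain ⟨K, hK⟩ := (hasCompactSupport_divg hXc).exists_bound_of_continuous (continuous_divg hX)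
  refine ((tendsto_setIntegral_of_tendsto_measure_symmDiff
    (fun ℓ => (Ω ℓ).isOpen.measurableSet) h.measurableSet h.volume (integrable_divg hX hXc)
    hK).const_mul (hausdorffScale n : ℝ)).congr fun ℓ => ?_
  exact (Ω ℓ).hausdorffScale_mul_setIntegral_divg hX hXc

lemma exists_gaussGreenOn (h : StrictConvergence Ω A) {l : Filter ℕ} [l.NeBot] (hl : l ≤ atTop)
    {τ : Measure (Euc n)} [IsFiniteMeasure τ]
    (hτ : TendstoWeakly (fun ℓ => (Ω ℓ).boundaryMeasure) l τ) :
    ∃ N : Euc n → Euc n, StronglyMeasurable N ∧ (∀ x, ‖N x‖ ≤ 1) ∧ GaussGreenOn A univ τ N := by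
  have hle (X : testFields (Euc n) (Euc n)) : |divgFunctional A X| ≤ 1 * ∫ x, ‖X.1 x‖ ∂τ := by
    have hX := X.2.1.of_le (m := 1) (by norm_cast)
    rw [one_mul]
    exact le_of_tendsto_of_tendsto' ((h.tendsto_integral_inner_nu hX X.2.2).mono_left hl).abs
      (hτ.tendsto_integral_norm hX.continuous X.2.2)
      fun ℓ => (Ω ℓ).abs_integral_inner_nu_le hX.continuous X.2.2
  obtain ⟨N, hN, hN₁, hNX⟩ := testFields.exists_bounded_density τ zero_le_one _ hle
  refine ⟨N, hN, hN₁, fun X hX hXc _ => (hNX ⟨X, hX, hXc⟩).trans ?_⟩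
  simp only [real_inner_comm]

theorem eq_hausdorffMeasure_restrict (h : StrictConvergence Ω A) {l : Filter ℕ} [l.NeBot]
    (hl : l ≤ atTop) {τ : Measure (Euc n)} [IsFiniteMeasure τ]
    (hτ : TendstoWeakly (fun ℓ => (Ω ℓ).boundaryMeasure) l τ) :
    τ = μH[(n : ℝ)].restrict (redBdry A) := by
  obtain ⟨N, -, hN₁, hGG⟩ := h.exists_gaussGreenOn hl hτ
  exact hGG.eq_hausdorffMeasure_restrict h.measurableSet hN₁ (h.measure_univ_eq hl hτ).le

theorem tendstoWeakly (h : StrictConvergence Ω A) :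
    TendstoWeakly (fun ℓ => (Ω ℓ).boundaryMeasure) atTop
      (μH[(n : ℝ)].restrict (redBdry A)) := by
  refine fun g hg hgK => tendsto_iff_ultrafilter _ _ _ |>.2 fun F hF => ?_
  obtain ⟨τ, hτ, hlim⟩ := h.exists_finiteMeasure_tendstoWeakly F
  rw [← h.eq_hausdorffMeasure_restrict hF hlim]
  exact hlim g hg hgK

lemma isFiniteMeasure_restrict_redBdry (h : StrictConvergence Ω A) :
    IsFiniteMeasure (μH[(n : ℝ)].restrict (redBdry A)) :=
  isFiniteMeasure_restrict.2 h.perimeter_ne_top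

lemma ae_norm_nuStar (h : StrictConvergence Ω A) :
    ∀ᵐ x ∂μH[(n : ℝ)].restrict (redBdry A), ‖nuStar A x‖ = 1 :=
  (ae_restrict_mem (measurableSet_redBdry h.measurableSet)).mono fun _ hx => (nuStar_spec hx).1

theorem gaussGreenOn_nuStar (h : StrictConvergence Ω A) :
    AEStronglyMeasurable (nuStar A) (μH[(n : ℝ)].restrict (redBdry A)) ∧
      GaussGreenOn A univ (μH[(n : ℝ)].restrict (redBdry A)) (nuStar A) := by
  have := h.isFiniteMeasure_restrict_redBdry
  obtain ⟨N, hN, hN₁, hGG⟩ := h.exists_gaussGreenOn le_rfl h.tendstoWeakly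
  have hνN := hGG.ae_eq_nuStar h.measurableSet hN.aestronglyMeasurable hN₁ rfl
  refine ⟨hN.aestronglyMeasurable.congr hνN.symm, fun X hX hXc hXU => ?_⟩
  rw [hGG X hX hXc hXU]
  refine integral_congr_ae ?_
  filter_upwards [hνN] with x hx
  rw [hx]

theorem tendsto_integral_tangentDivg (h : StrictConvergence Ω A) (hX : ContDiff ℝ 1 X)
    (hXc : HasCompactSupport X) :
    Tendsto (fun ℓ => ∫ x, tangentDivg X ((Ω ℓ).nu x) x ∂(Ω ℓ).boundaryMeasure) atTop
      (𝓝 (firstVar A X)) := by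
  have := h.isFiniteMeasure_restrict_redBdry
  obtain ⟨hν, hGG⟩ := h.gaussGreenOn_nuStar
  have hfd := hX.continuous_fderiv one_ne_zero
  obtain ⟨K, hK⟩ := (hXc.fderiv (𝕜 := ℝ)).exists_bound_of_continuous hfd
  have hdivg := h.tendstoWeakly _ (continuous_divg hX)
    ((hasCompactSupport_divg hXc).exists_bound_of_continuous (continuous_divg hX))
  have hquad := tendsto_integral_inner_apply_self (fun ℓ => (Ω ℓ).aestronglyMeasurable_nu)
    (fun ℓ => (Ω ℓ).ae_mem_frontier.mono fun x hx => (Ω ℓ).norm_nu hx) hν h.ae_norm_nuStar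
    h.tendstoWeakly (fun Y => by
      rw [← hGG Y.1 Y.2.1 Y.2.2 (subset_univ _)]
      exact h.tendsto_integral_inner_nu (Y.2.1.of_le (by norm_cast)) Y.2.2) hfd hK
  rw [firstVar, integral_sub (integrable_divg hX hXc) (integrable_inner_apply_self hfd hK hν
    (h.ae_norm_nuStar.mono fun _ hx => hx.le))]
  refine (hdivg.sub hquad).congr fun ℓ => (integral_sub (integrable_divg hX hXc) ?_).symm
  exact integrable_inner_apply_self hfd hK (Ω ℓ).aestronglyMeasurable_nu
    ((Ω ℓ).ae_mem_frontier.mono fun x hx => ((Ω ℓ).norm_nu hx).le)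

theorem abs_firstVar_le (h : StrictConvergence Ω A) {M : ℝ} (hM : 0 ≤ M)
    (hlarge : Tendsto (fun ℓ => ∫ x in (Ω ℓ).meanCurvatureGE M,
      |(Ω ℓ).H 1 x| ∂(Ω ℓ).boundaryMeasure) atTop (𝓝 0))
    (hneg : Tendsto (fun ℓ => ∫ x, negp ((Ω ℓ).H 1 x) ∂(Ω ℓ).boundaryMeasure) atTop (𝓝 0))
    (hX : ContDiff ℝ 1 X) (hXc : HasCompactSupport X) :
    |firstVar A X| ≤ M * ∫ x in redBdry A, ‖X x‖ ∂μH[(n : ℝ)] := by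
  obtain ⟨K, hK⟩ := hXc.exists_bound_of_continuous hX.continuous
  have hbound := ((h.tendstoWeakly.tendsto_integral_norm hX.continuous hXc).const_mul M).add
    ((hlarge.add hneg).const_mul K)
  rw [add_zero, mul_zero, add_zero] at hbound
  refine le_of_tendsto_of_tendsto' (h.tendsto_integral_tangentDivg hX hXc).abs hbound fun ℓ => ?_
  rw [(Ω ℓ).integral_tangentDivg hX hXc]
  exact (Ω ℓ).abs_integral_H_one_mul_inner_nu_le hM hX.continuous hXc hK

theorem exists_bounded_meanCurvature (h : StrictConvergence Ω A) {M : ℝ} (hM : 0 ≤ M)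
    (hA : ∀ X, ContDiff ℝ (⊤ : ℕ∞) X → HasCompactSupport X →
      |firstVar A X| ≤ M * ∫ x in redBdry A, ‖X x‖ ∂μH[(n : ℝ)]) :
    ∃ H : Euc n → Euc n, (∀ x, ‖H x‖ ≤ M) ∧
      ∀ X, ContDiff ℝ (⊤ : ℕ∞) X → HasCompactSupport X →
        firstVar A X = ∫ x in redBdry A, ⟪H x, X x⟫ ∂μH[(n : ℝ)] := by
  have := h.isFiniteMeasure_restrict_redBdry
  obtain ⟨H, -, hHM, hH⟩ := testFields.exists_bounded_density _ hM
    (firstVariation h.gaussGreenOn_nuStar.1 (h.ae_norm_nuStar.mono fun _ hx => hx.le))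
    fun X => hA X.1 X.2.1 X.2.2
  exact ⟨H, hHM, fun X hX hXc => hH ⟨X, hX, hXc⟩⟩

end StrictConvergence

/-- **The limit varifold has bounded mean curvature** (first part of the proof of the
main theorem). In the setting of the main theorem (without the assumption on the `k`-th
mean curvatures), the varifold `V_Ω` associated with the reduced boundary of the limit
set `Ω` satisfies `|δV_Ω(g)| ≤ M ∫_{∂*Ω} |g| dH^n` for every smooth compactly supported
vector field `g`; hence it has bounded mean curvature `h = h(V_Ω,·)` with `|h| ≤ M`
`H^n`-a.e. on `∂*Ω`. -/
theorem limit_varifold_bounded_mean_curvature {n : ℕ} (hn : 2 ≤ n)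
    (k : ℕ) (hk2 : 2 ≤ k) (hkn : k ≤ n)
    (Ω : ℕ → C2Domain n) (Om : Set (Euc n)) (hOm : MeasurableSet Om)
    (hpos : 0 < volume Om)
    (hcs : CompactlySupportedSeq Ω)
    (hconvex : AsympMeanConvex Ω (k - 1))
    (hftc : FiniteTotalCurvature Ω)
    (hvol : ConvInVolume Ω Om) (hper : ConvInPerimeter Ω Om)
    (M : ℝ) (hM : 0 < M)
    (hsmall : Tendsto (fun ℓ : ℕ =>
        μH[(n : ℝ)] {x ∈ frontier (Ω ℓ).carrier | M ≤ (Ω ℓ).H 1 x}) atTop (nhds 0)) :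
    (∀ g : Euc n → Euc n, ContDiff ℝ (⊤ : ℕ∞) g → HasCompactSupport g →
      |firstVar Om g| ≤ M * ∫ x in redBdry Om, ‖g x‖ ∂μH[(n : ℝ)]) ∧
    ∃ h : Euc n → Euc n,
      (∀ᵐ x ∂(μH[(n : ℝ)].restrict (redBdry Om)), ‖h x‖ ≤ M) ∧
      ∀ X : Euc n → Euc n, ContDiff ℝ (⊤ : ℕ∞) X → HasCompactSupport X →
        firstVar Om X = ∫ x in redBdry Om, ⟪h x, X x⟫ ∂μH[(n : ℝ)] := by
  have hk : 1 ≤ k - 1 := Nat.le_sub_one_of_lt hk2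
  have hconv : StrictConvergence Ω Om :=
    hftc.strictConvergence (one_le_two.trans hn) hOm hcs hvol hper
  have hlarge := hftc.tendsto_setIntegral_abs_H_one hn
    (tendsto_boundaryMeasure_real_meanCurvatureGE hsmall)
  have hneg := hconvex.tendsto_integral_negp_H_one hk
  have hbound (g : Euc n → Euc n) (hg : ContDiff ℝ (⊤ : ℕ∞) g) (hgc : HasCompactSupport g) :
      |firstVar Om g| ≤ M * ∫ x in redBdry Om, ‖g x‖ ∂μH[(n : ℝ)] :=
    hconv.abs_firstVar_le hM.le hlarge hneg (hg.of_le (by norm_cast)) hgc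
  obtain ⟨h, hhM, hh⟩ := hconv.exists_bounded_meanCurvature hM.le hbound
  exact ⟨hbound, h, ae_of_all _ hhM, hh⟩

end
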